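/- arXiv:2105.02053 — 9 statements merged into one kernel-verified Lean document; each statement's English description precedes it below -/
import Mathlib

section
/- For every μ ∈ ℂ ∖ [0,∞) with Re μ ≤ 0, one has Re Φ_∞(μ) < 0. -/
open MeasureTheory Filter

/-- The function `Φ_∞(μ) = μ ∫₀^∞ (μ - V_s(y))⁻² dy`. -/
noncomputable def PhiInf (Vs : ℝ → ℝ) (μ : ℂ) : ℂ :=
  μ * ∫ y in Set.Ioi (0 : ℝ), ((μ - (Vs y : ℂ)) ^ 2)⁻¹

/-- `Re Φ_∞(μ) < 0` for `μ ∈ ℂ ∖ [0,∞)` with `Re μ ≤ 0`. -/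
theorem PhiInf_re_neg
    (Vs : ℝ → ℝ) (As : ℝ)
    (hVs_smooth : ContDiff ℝ (⊤ : ℕ∞) Vs)
    (hVs0 : Vs 0 = 0)
    (hVs'pos : ∀ z : ℝ, 0 ≤ z → 0 < deriv Vs z)
    (hdecay : ∀ p : ℕ, Tendsto (fun z : ℝ => z ^ p * (Vs z - z - As)) atTop (nhds 0))
    (hderiv_decay : ∀ n : ℕ, 1 ≤ n → ∀ p : ℕ,
      Tendsto (fun z : ℝ => z ^ p * iteratedDeriv n (fun w => Vs w - w) z) atTop (nhds 0))
    :
    ∀ μ : ℂ, (μ.im ≠ 0 ∨ μ.re < 0) → μ.re ≤ 0 → (PhiInf Vs μ).re < 0 := by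
  intro μ hμ hre
  have hcont : Continuous Vs := hVs_smooth.continuous
  have hmono : StrictMonoOn Vs (Set.Ici 0) := by
    apply strictMonoOn_of_deriv_pos (convex_Ici 0) hcont.continuousOn
    intro x hx
    rw [interior_Ici] at hx
    exact hVs'pos x (le_of_lt hx)
  have hpos : ∀ y : ℝ, 0 < y → 0 < Vs y := by
    intro y hy
    have := hmono (Set.self_mem_Ici) (Set.mem_Ici.2 hy.le) hy
    rwa [hVs0] at this
  have hnn : ∀ y : ℝ, 0 ≤ y → 0 ≤ Vs y := by
    intro y hy
    rcases hy.eq_or_lt with h | h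
    · rw [← h, hVs0]
    · exact (hpos y h).le
  have hne : ∀ y : ℝ, 0 ≤ y → μ - (Vs y : ℂ) ≠ 0 := by
    intro y hy h
    have h1 := congrArg Complex.re h
    have h2 := congrArg Complex.im h
    simp at h1 h2
    have := hnn y hy
    rcases hμ with h3 | h3
    · exact h3 h2
    · linarith
  have hlb : ∀ y : ℝ, 0 ≤ y → Vs y ≤ ‖μ - (Vs y : ℂ)‖ := by
    intro y hy
    have := Complex.abs_re_le_norm (μ - (Vs y : ℂ))
    have h2 := neg_le_abs (μ - (Vs y : ℂ)).re
    simp only [Complex.sub_re, Complex.ofReal_re] at this h2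
    linarith
  set f : ℝ → ℂ := fun y => ((μ - (Vs y : ℂ)) ^ 2)⁻¹ with hf
  have hfc : ContinuousOn f (Set.Ici 0) := by
    apply ContinuousOn.inv₀
    · fun_prop
    · intro y hy
      exact pow_ne_zero 2 (hne y hy)
  have hev : ∀ᶠ y : ℝ in atTop, y / 2 ≤ Vs y := by
    have h0 := hdecay 0
    simp only [pow_zero, one_mul] at h0
    have h1 := h0.eventually (lt_mem_nhds (show (-1 : ℝ) < 0 by norm_num))
    filter_upwards [h1, eventually_ge_atTop (2 * (1 - As))] with y h1 h2
    linarith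
  have hO : f =O[atTop] (fun y : ℝ => y ^ (-2 : ℝ)) := by
    apply Asymptotics.IsBigO.of_bound 4
    filter_upwards [hev, eventually_gt_atTop 0] with y h1 h2
    have h3 := hlb y h2.le
    have h4 : y / 2 ≤ ‖μ - (Vs y : ℂ)‖ := h1.trans h3
    rw [Real.rpow_neg h2.le, Real.norm_of_nonneg (by positivity)]
    simp only [hf, norm_inv, norm_pow]
    norm_cast
    calc (‖μ - (Vs y : ℂ)‖ ^ 2)⁻¹ ≤ ((y / 2) ^ 2)⁻¹ := by gcongr
      _ = 4 * (y ^ 2)⁻¹ := by field_simp; norm_num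
  have hint : IntegrableOn f (Set.Ioi 0) := by
    have := (hfc.locallyIntegrableOn measurableSet_Ici).integrableOn_of_isBigO_atTop (μ := volume) hO
      ⟨Set.Ioi 1, Ioi_mem_atTop 1, integrableOn_Ioi_rpow_of_lt (by norm_num) (by norm_num)⟩
    exact this.mono_set Set.Ioi_subset_Ici_self
  have hneg : ∀ y : ℝ, 0 < y → 0 < - (μ * f y).re := by
    intro y hy
    have hV := hpos y hy
    have h1 := hne y hy.le
    have hN : 0 < Complex.normSq (μ - (Vs y : ℂ)) := Complex.normSq_pos.2 h1
    have hid : (μ * f y).re = (μ.re * (μ.re ^ 2 + μ.im ^ 2) - 2 * (μ.re ^ 2 + μ.im ^ 2) * Vs y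
        + μ.re * Vs y ^ 2) / Complex.normSq (μ - (Vs y : ℂ)) ^ 2 := by
      simp only [hf, Complex.mul_re, Complex.inv_re, Complex.inv_im, map_pow]
      simp only [pow_two, Complex.mul_re, Complex.mul_im, Complex.sub_re, Complex.sub_im,
        Complex.ofReal_re, Complex.ofReal_im]
      ring
    rw [hid, ← neg_div]
    apply div_pos _ (by positivity)
    have h2 : 0 < μ.re ^ 2 + μ.im ^ 2 := by
      rcases hμ with h | h
      · positivity
      · have := h.ne
        positivity
    have h3 : 0 < (μ.re ^ 2 + μ.im ^ 2) * Vs y := mul_pos h2 hV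
    have h4 : 0 ≤ -μ.re * (μ.re ^ 2 + μ.im ^ 2) := mul_nonneg (by linarith) h2.le
    have h5 : 0 ≤ -μ.re * Vs y ^ 2 := mul_nonneg (by linarith) (by positivity)
    linarith
  have hint2 : IntegrableOn (fun y => (μ * f y).re) (Set.Ioi 0) :=
    (hint.const_mul μ).re
  have hPhi : (PhiInf Vs μ).re = ∫ y in Set.Ioi (0 : ℝ), (μ * f y).re := by
    unfold PhiInf
    rw [← integral_const_mul]
    exact (integral_re (hint.const_mul μ)).symm
  have : 0 < ∫ y in Set.Ioi (0 : ℝ), -(μ * f y).re := by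
    rw [setIntegral_pos_iff_support_of_nonneg_ae]
    · have hsub : Set.Ioi (0 : ℝ) ⊆ Function.support (fun y => -(μ * f y).re) ∩ Set.Ioi 0 :=
        fun y hy => ⟨(hneg y hy).ne', hy⟩
      refine lt_of_lt_of_le ?_ (measure_mono hsub)
      simp
    · filter_upwards [ae_restrict_mem measurableSet_Ioi] with y hy
      exact (hneg y hy).le
    · exact hint2.neg
  rw [integral_neg] at this
  rw [hPhi]
  linarith
end

section
/- As μ → 0 with μ ranging over ℂ ∖ [0,∞), the real part of Φ_∞(μ) converges to −1/V_s'(0) < 0. -/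
open MeasureTheory Filter

/-- One step of the integration by parts. -/
lemma phi_ibp (V a : ℝ → ℝ) (S : Set ℝ) (hS : IsOpen S) (hIS : Set.Icc (0:ℝ) 1 ⊆ S)
    (hV : ContDiff ℝ (⊤ : ℕ∞) V) (hpos : ∀ x ∈ S, 0 < deriv V x)
    (ha : ContDiffOn ℝ (⊤ : ℕ∞) a S) (f F : ℂ → ℂ)
    (hF : ∀ z ∈ Complex.slitPlane, HasDerivAt F (f z) z)
    (hf : ContinuousOn f Complex.slitPlane) (μ : ℂ)
    (hμ : ∀ y ∈ Set.Icc (0:ℝ) 1, (V y : ℂ) - μ ∈ Complex.slitPlane) :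
    ∫ y in (0:ℝ)..1, (a y : ℂ) * (((deriv V y : ℝ) : ℂ) * f (V y - μ)) =
      a 1 * F (V 1 - μ) - a 0 * F (V 0 - μ)
        - ∫ y in (0:ℝ)..1, ((deriv a y / deriv V y : ℝ) : ℂ) * (((deriv V y : ℝ) : ℂ) * F (V y - μ)) := by
  have hI : Set.uIcc (0:ℝ) 1 = Set.Icc 0 1 := Set.uIcc_of_le zero_le_one
  have hVd : ∀ y, HasDerivAt V (deriv V y) y := fun y =>
    ((hV.differentiable (by simp)) y).hasDerivAt
  have hV'c : Continuous (deriv V) := hV.continuous_deriv (by simp)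
  have hda : ContDiffOn ℝ (⊤ : ℕ∞) (deriv a) S :=
    ((contDiffOn_infty_iff_deriv_of_isOpen hS).1 ha).2
  have had : ∀ y ∈ S, HasDerivAt a (deriv a y) y := fun y hy =>
    ((ha.contDiffAt (hS.mem_nhds hy)).differentiableAt (by simp)).hasDerivAt
  have hz : Continuous (fun y : ℝ => (V y : ℂ) - μ) :=
    (Complex.continuous_ofReal.comp hV.continuous).sub continuous_const
  have key := intervalIntegral.integral_mul_deriv_eq_deriv_mul
    (a := (0:ℝ)) (b := 1) (u := fun y => (a y : ℂ)) (u' := fun y => ((deriv a y : ℝ) : ℂ))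
    (v := fun y => F (V y - μ)) (v' := fun y => ((deriv V y : ℝ) : ℂ) * f (V y - μ))
    (fun y hy => (had y (hIS (hI ▸ hy))).ofReal_comp)
    (fun y hy => by
      have h1 : HasDerivAt (fun y : ℝ => (V y : ℂ) - μ) ((deriv V y : ℝ) : ℂ) y :=
        ((hVd y).ofReal_comp).sub_const μ
      have h2 := (hF _ (hμ y (hI ▸ hy))).scomp y h1
      simpa [Function.comp_def] using h2)
    (by
      apply ContinuousOn.intervalIntegrable
      rw [hI]
      exact Complex.continuous_ofReal.comp_continuousOn (hda.continuousOn.mono hIS))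
    (by
      apply ContinuousOn.intervalIntegrable
      rw [hI]
      exact (Complex.continuous_ofReal.comp hV'c).continuousOn.mul
        (hf.comp hz.continuousOn hμ))
  rw [key]
  congr 1
  apply intervalIntegral.integral_congr
  intro y hy
  have hne : ((deriv V y : ℝ) : ℂ) ≠ 0 := by
    exact_mod_cast (hpos y (hIS (hI ▸ hy))).ne'
  simp only [Complex.ofReal_div]
  field_simp

lemma phi_norm_log (z : ℂ) : ‖z‖ * ‖Complex.log z‖ ≤ |‖z‖ * Real.log ‖z‖| + Real.pi * ‖z‖ := by
  have h1 : ‖Complex.log z‖ ≤ |Real.log ‖z‖| + Real.pi := by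
    refine (Complex.norm_le_abs_re_add_abs_im _).trans ?_
    rw [Complex.log_re, Complex.log_im]
    gcongr
    exact Complex.abs_arg_le_pi z
  rw [abs_mul, abs_of_nonneg (norm_nonneg z)]
  nlinarith [norm_nonneg z]

lemma phi_zlog_tendsto : Tendsto (fun z : ℂ => z * Complex.log z) (nhds 0) (nhds 0) := by
  apply squeeze_zero_norm (a := fun z : ℂ => |‖z‖ * Real.log ‖z‖| + Real.pi * ‖z‖)
  · intro z; rw [norm_mul]; exact phi_norm_log z
  · have : Continuous (fun z : ℂ => |‖z‖ * Real.log ‖z‖| + Real.pi * ‖z‖) :=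
      ((Real.continuous_mul_log.comp continuous_norm).abs).add (continuous_const.mul continuous_norm)
    have h := this.tendsto 0
    simpa using h

lemma phi_zlog_bdd (M : ℝ) : ∃ C, ∀ z : ℂ, ‖z‖ ≤ M → ‖z * Complex.log z - z‖ ≤ C := by
  have hc : Continuous (fun z : ℂ => |‖z‖ * Real.log ‖z‖| + Real.pi * ‖z‖ + ‖z‖) :=
      (((Real.continuous_mul_log.comp continuous_norm).abs).add
        (continuous_const.mul continuous_norm)).add continuous_norm
  obtain ⟨C, hC⟩ := (isCompact_closedBall (0:ℂ) M).bddAbove_image hc.continuousOn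
  refine ⟨C, fun z hz => ?_⟩
  refine le_trans ?_ (hC ⟨z, by simpa using hz, rfl⟩)
  refine (norm_sub_le _ _).trans ?_
  rw [norm_mul]
  have := phi_norm_log z
  simp only
  linarith

lemma phi_bdd_mul {l : Filter ℂ} (hl : l ≤ nhds 0) (g : ℂ → ℂ) (C : ℝ)
    (h : ∀ᶠ μ in l, ‖g μ‖ ≤ C) : Tendsto (fun μ => μ * g μ) l (nhds 0) := by
  apply squeeze_zero_norm' (a := fun μ : ℂ => ‖μ‖ * C)
  · filter_upwards [h] with μ hμ
    rw [norm_mul]; gcongr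
  · have : Tendsto (fun μ : ℂ => ‖μ‖ * C) (nhds 0) (nhds (‖(0:ℂ)‖ * C)) :=
      (continuous_norm.mul continuous_const).tendsto 0
    simpa using this.mono_left hl

lemma phi_near (V : ℝ → ℝ) (hV : ContDiff ℝ (⊤ : ℕ∞) V) (hV0 : V 0 = 0)
    (hpos : ∀ z : ℝ, 0 ≤ z → 0 < deriv V z) (hV1 : 0 < V 1)
    (hslit : ∀ μ : ℂ, (μ.im ≠ 0 ∨ μ.re < 0) → ∀ y : ℝ, 0 ≤ y → (V y : ℂ) - μ ∈ Complex.slitPlane) :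
    Tendsto (fun μ : ℂ => μ * ∫ y in (0:ℝ)..1, ((μ - (V y : ℂ)) ^ 2)⁻¹)
      (nhdsWithin 0 {μ : ℂ | μ.im ≠ 0 ∨ μ.re < 0}) (nhds (-1 / deriv V 0 : ℝ)) := by
  set l := nhdsWithin (0:ℂ) {μ : ℂ | μ.im ≠ 0 ∨ μ.re < 0} with hl
  have hl0 : l ≤ nhds 0 := nhdsWithin_le_nhds
  have hV'c : Continuous (deriv V) := hV.continuous_deriv (by simp)
  have hI : Set.uIcc (0:ℝ) 1 = Set.Icc 0 1 := Set.uIcc_of_le zero_le_one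
  let S : Set ℝ := {x | 0 < deriv V x}
  have hS : IsOpen S := isOpen_lt continuous_const hV'c
  have hIS : Set.Icc (0:ℝ) 1 ⊆ S := fun x hx => hpos x hx.1
  have hSp : ∀ x ∈ S, 0 < deriv V x := fun x hx => hx
  have hV' : ContDiffOn ℝ (⊤ : ℕ∞) (deriv V) S :=
    ((contDiffOn_infty_iff_deriv_of_isOpen hS).1 hV.contDiffOn).2
  let T : (ℝ → ℝ) → ℝ → ℝ := fun a y => deriv a y / deriv V y
  have hT : ∀ a, ContDiffOn ℝ (⊤ : ℕ∞) a S → ContDiffOn ℝ (⊤ : ℕ∞) (T a) S := fun a ha =>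
    (((contDiffOn_infty_iff_deriv_of_isOpen hS).1 ha).2).div hV' (fun x hx => (hSp x hx).ne')
  let a0 : ℝ → ℝ := fun y => 1 / deriv V y
  have h0 : ContDiffOn ℝ (⊤ : ℕ∞) a0 S := contDiffOn_const.div hV' (fun x hx => (hSp x hx).ne')
  have h1 := hT _ h0
  have h2 := hT _ h1
  have h3 := hT _ h2
  let f0 : ℂ → ℂ := fun z => (z ^ 2)⁻¹
  let f1 : ℂ → ℂ := fun z => -z⁻¹
  let f2 : ℂ → ℂ := fun z => -Complex.log z
  let f3 : ℂ → ℂ := fun z => -(z * Complex.log z - z)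
  have hd1 : ∀ z ∈ Complex.slitPlane, HasDerivAt f1 (f0 z) z := fun z hz => by
    have := (hasDerivAt_inv (Complex.slitPlane_ne_zero hz)).neg
    rw [neg_neg] at this
    exact this
  have hd2 : ∀ z ∈ Complex.slitPlane, HasDerivAt f2 (f1 z) z := fun z hz =>
    (Complex.hasDerivAt_log hz).neg
  have hd3 : ∀ z ∈ Complex.slitPlane, HasDerivAt f3 (f2 z) z := fun z hz => by
    have := (((hasDerivAt_id z).mul (Complex.hasDerivAt_log hz)).sub (hasDerivAt_id z)).neg
    have hz0 := Complex.slitPlane_ne_zero hz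
    refine this.congr_deriv ?_
    simp [f2, hz0]
  have hc1 : ContinuousOn f1 Complex.slitPlane := fun z hz => (hd1 z hz).continuousAt.continuousWithinAt
  have hc2 : ContinuousOn f2 Complex.slitPlane := fun z hz => (hd2 z hz).continuousAt.continuousWithinAt
  have hc3 : ContinuousOn f3 Complex.slitPlane := fun z hz => (hd3 z hz).continuousAt.continuousWithinAt
  have hc0 : ContinuousOn f0 Complex.slitPlane :=
    (continuousOn_id.pow 2).inv₀ (fun z hz => pow_ne_zero 2 (Complex.slitPlane_ne_zero hz))
  let J : ℂ → ℂ := fun μ => ∫ y in (0:ℝ)..1, ((T (T (T a0)) y : ℝ) : ℂ) * (((deriv V y : ℝ) : ℂ) * f3 (V y - μ))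
  have hJ : ∃ C, ∀ᶠ μ in l, ‖J μ‖ ≤ C := by
    obtain ⟨K, hK⟩ := isCompact_Icc.exists_bound_of_continuousOn
      ((h3.continuousOn.mono hIS).mul hV'c.continuousOn)
    obtain ⟨M, hM⟩ := isCompact_Icc.exists_bound_of_continuousOn
      (hV.continuous.continuousOn (s := Set.Icc (0:ℝ) 1))
    obtain ⟨C, hC⟩ := phi_zlog_bdd (M + 1)
    refine ⟨K * C * |1 - 0|, ?_⟩
    have : ∀ᶠ μ : ℂ in l, ‖μ‖ < 1 := hl0 (by simpa [Metric.ball, dist_zero_right] using Metric.ball_mem_nhds (0:ℂ) one_pos)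
    filter_upwards [this] with μ hμ
    apply intervalIntegral.norm_integral_le_of_norm_le_const
    intro y hy
    rw [Set.uIoc_of_le zero_le_one] at hy
    have hy' : y ∈ Set.Icc (0:ℝ) 1 := ⟨hy.1.le, hy.2⟩
    rw [← mul_assoc, norm_mul, ← Complex.ofReal_mul, Complex.norm_real]
    have e1 := hK y hy'
    have e2 : ‖f3 (V y - μ)‖ ≤ C := by
      simp only [f3, norm_neg]
      apply hC
      refine (norm_sub_le _ _).trans ?_
      have := hM y hy'
      rw [Complex.norm_real]; linarith
    exact mul_le_mul e1 e2 (norm_nonneg _) ((norm_nonneg _).trans e1)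
  have hV1s : (V 1 : ℂ) ∈ Complex.slitPlane := by
    rw [Complex.ofReal_mem_slitPlane]; exact hV1
  have hb : ∀ f : ℂ → ℂ, ContinuousOn f Complex.slitPlane →
      Tendsto (fun μ : ℂ => μ * f (V 1 - μ)) l (nhds 0) := by
    intro f hf
    have hca : ContinuousAt (fun μ : ℂ => μ * f (V 1 - μ)) 0 := by
      refine continuousAt_id.mul ?_
      have : ContinuousAt f ((V 1 : ℂ) - 0) := by
        rw [sub_zero]; exact hf.continuousAt (Complex.isOpen_slitPlane.mem_nhds hV1s)
      exact ContinuousAt.comp (f := fun μ : ℂ => (V 1 : ℂ) - μ) this (by fun_prop)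
    have := hca.tendsto
    simp only [zero_mul] at this
    exact this.mono_left hl0
  have hneg : Tendsto (fun μ : ℂ => -μ) l (nhds 0) := by
    have : Tendsto (fun μ : ℂ => -μ) (nhds 0) (nhds (-0)) := continuous_neg.tendsto 0
    rw [neg_zero] at this
    exact this.mono_left hl0
  have hz2 : Tendsto (fun μ : ℂ => μ * f2 (-μ)) l (nhds 0) := by
    refine (phi_zlog_tendsto.comp hneg).congr fun μ => ?_
    simp [f2]
  have hz3 : Tendsto (fun μ : ℂ => μ * f3 (-μ)) l (nhds 0) := by
    obtain ⟨C, hC⟩ := phi_zlog_bdd 1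
    apply phi_bdd_mul hl0 _ C
    have : ∀ᶠ μ : ℂ in l, ‖μ‖ < 1 := hl0 (by simpa [Metric.ball, dist_zero_right] using Metric.ball_mem_nhds (0:ℂ) one_pos)
    filter_upwards [this] with μ hμ
    simp only [f3]
    rw [norm_neg]
    exact hC _ (by rw [norm_neg]; exact hμ.le)
  obtain ⟨CJ, hCJ⟩ := hJ
  have hJt := phi_bdd_mul hl0 J CJ hCJ
  have hlim : Tendsto (fun μ : ℂ => (a0 1 : ℂ) * (μ * f1 (V 1 - μ)) - (a0 0 : ℂ)
      - (T a0 1 : ℂ) * (μ * f2 (V 1 - μ)) + (T a0 0 : ℂ) * (μ * f2 (-μ))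
      + (T (T a0) 1 : ℂ) * (μ * f3 (V 1 - μ)) - (T (T a0) 0 : ℂ) * (μ * f3 (-μ)) - μ * J μ) l
      (nhds ((a0 1 : ℂ) * 0 - (a0 0 : ℂ)
      - (T a0 1 : ℂ) * 0 + (T a0 0 : ℂ) * 0
      + (T (T a0) 1 : ℂ) * 0 - (T (T a0) 0 : ℂ) * 0 - 0)) :=
    (((((((hb f1 hc1).const_mul _).sub tendsto_const_nhds).sub ((hb f2 hc2).const_mul _)).add
      (hz2.const_mul _)).add ((hb f3 hc3).const_mul _)).sub (hz3.const_mul _)).sub hJt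
  have e : (a0 1 : ℂ) * 0 - (a0 0 : ℂ)
      - (T a0 1 : ℂ) * 0 + (T a0 0 : ℂ) * 0
      + (T (T a0) 1 : ℂ) * 0 - (T (T a0) 0 : ℂ) * 0 - 0 = ((-1 / deriv V 0 : ℝ) : ℂ) := by
    simp [a0, neg_div]
  rw [e] at hlim
  refine hlim.congr' ?_
  filter_upwards [self_mem_nhdsWithin] with μ hμ
  have hm : ∀ y ∈ Set.Icc (0:ℝ) 1, (V y : ℂ) - μ ∈ Complex.slitPlane := fun y hy => hslit μ hμ y hy.1
  have i0 := phi_ibp V a0 S hS hIS hV hSp h0 f0 f1 hd1 hc0 μ hm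
  have i1 := phi_ibp V (T a0) S hS hIS hV hSp h1 f1 f2 hd2 hc1 μ hm
  have i2 := phi_ibp V (T (T a0)) S hS hIS hV hSp h2 f2 f3 hd3 hc2 μ hm
  have hμ0 : μ ≠ 0 := by
    rintro rfl
    simp at hμ
  have ea : ∫ y in (0:ℝ)..1, ((μ - (V y : ℂ)) ^ 2)⁻¹
      = ∫ y in (0:ℝ)..1, (a0 y : ℂ) * (((deriv V y : ℝ) : ℂ) * f0 (V y - μ)) := by
    apply intervalIntegral.integral_congr
    intro y hy
    rw [hI] at hy
    have hne : ((deriv V y : ℝ) : ℂ) ≠ 0 := by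
      exact_mod_cast (hpos y hy.1).ne'
    simp only [a0, f0, Complex.ofReal_div, Complex.ofReal_one]
    rw [← mul_assoc, one_div_mul_cancel hne, one_mul, ← neg_sub, neg_sq]
  have i0' : _ = _ - ∫ y in (0:ℝ)..1, ((T a0 y : ℝ) : ℂ) * (((deriv V y : ℝ) : ℂ) * f1 (V y - μ)) := i0
  have i1' : _ = _ - ∫ y in (0:ℝ)..1, ((T (T a0) y : ℝ) : ℂ) * (((deriv V y : ℝ) : ℂ) * f2 (V y - μ)) := i1
  have i2' : _ = _ - J μ := i2
  rw [ea, i0', i1', i2', hV0]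
  have ef : μ * f1 (-μ) = 1 := by simp [f1, hμ0]
  simp only [Complex.ofReal_zero, zero_sub]
  linear_combination (a0 0 : ℂ) * ef

lemma phi_lower (V : ℝ → ℝ) (As : ℝ) (hmono : StrictMonoOn V (Set.Ici 0)) (hV1 : 0 < V 1)
    (hdecay : Tendsto (fun z : ℝ => V z - z - As) atTop (nhds 0)) :
    ∃ c > 0, ∀ y, 1 ≤ y → c * y ≤ V y := by
  have h1 : ∀ᶠ z in atTop, -1 < V z - z - As := hdecay.eventually (lt_mem_nhds (by norm_num))
  obtain ⟨Z, hZ⟩ := eventually_atTop.1 (h1.and (eventually_ge_atTop (2 * (1 - As))))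
  have hZm : 0 < max Z 1 := lt_max_of_lt_right one_pos
  refine ⟨min (1/2) (V 1 / max Z 1), lt_min (by norm_num) (div_pos hV1 hZm), fun y hy => ?_⟩
  rcases le_total Z y with h | h
  · have := hZ y h
    have h2 : min (1/2) (V 1 / max Z 1) * y ≤ 1/2 * y :=
      mul_le_mul_of_nonneg_right (min_le_left _ _) (by linarith)
    linarith [this.1, this.2]
  · have h2 : min (1/2) (V 1 / max Z 1) * y ≤ V 1 / max Z 1 * max Z 1 :=
      mul_le_mul (min_le_right _ _) (h.trans (le_max_left _ _)) (by linarith)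
        (div_pos hV1 hZm).le
    rw [div_mul_cancel₀ _ hZm.ne'] at h2
    exact h2.trans (hmono.monotoneOn (by simp) (by simp; linarith) hy)

lemma phi_tail (V : ℝ → ℝ) (hVc : Continuous V) (hmono : StrictMonoOn V (Set.Ici 0))
    (hV1 : 0 < V 1) (c : ℝ) (hc : 0 < c) (hlow : ∀ y, 1 ≤ y → c * y ≤ V y) :
    ∃ C, ∀ μ : ℂ, ‖μ‖ ≤ V 1 / 2 →
      IntegrableOn (fun y : ℝ => ((μ - (V y : ℂ)) ^ 2)⁻¹) (Set.Ioi 1) ∧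
      ‖∫ y in Set.Ioi (1:ℝ), ((μ - (V y : ℂ)) ^ 2)⁻¹‖ ≤ C := by
  let g : ℝ → ℝ := fun y => (2 / c) ^ 2 * y ^ (-2 : ℝ)
  have hg : IntegrableOn g (Set.Ioi 1) :=
    (integrableOn_Ioi_rpow_of_lt (by norm_num) one_pos).const_mul _
  refine ⟨∫ y in Set.Ioi (1:ℝ), g y, fun μ hμ => ?_⟩
  have hlow2 : ∀ y ∈ Set.Ioi (1:ℝ), c * y / 2 ≤ ‖μ - (V y : ℂ)‖ := by
    intro y hy
    have hy1 : (1:ℝ) < y := hy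
    have e1 : V 1 ≤ V y := hmono.monotoneOn (by simp) (by simp; linarith) hy1.le
    have e2 := hlow y hy1.le
    have e3 := norm_sub_norm_le (V y : ℂ) μ
    rw [norm_sub_rev, Complex.norm_real, Real.norm_eq_abs] at e3
    have := le_abs_self (V y)
    linarith
  have hbd : ∀ y ∈ Set.Ioi (1:ℝ), ‖((μ - (V y : ℂ)) ^ 2)⁻¹‖ ≤ g y := by
    intro y hy
    have hy1 : (1:ℝ) < y := hy
    have hy0 : 0 < y := by linarith
    have : g y = ((c * y / 2) ^ 2)⁻¹ := by
      simp only [g]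
      rw [Real.rpow_neg hy0.le, Real.rpow_two]
      field_simp
    rw [this, norm_inv, norm_pow]
    have := hlow2 y hy
    gcongr
  have hae : ∀ᵐ y ∂(volume.restrict (Set.Ioi (1:ℝ))), ‖((μ - (V y : ℂ)) ^ 2)⁻¹‖ ≤ g y :=
    (ae_restrict_iff' measurableSet_Ioi).2 (Eventually.of_forall hbd)
  refine ⟨Integrable.mono' hg ?_ hae, norm_integral_le_of_norm_le hg hae⟩
  apply Measurable.aestronglyMeasurable
  have : Measurable V := hVc.measurable
  fun_prop

/-- `Re Φ_∞(μ) → -1/V_s'(0) < 0` as `μ → 0` in `ℂ ∖ [0,∞)`. -/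
theorem PhiInf_re_tendsto_at_zero
    (Vs : ℝ → ℝ) (As : ℝ)
    (hVs_smooth : ContDiff ℝ (⊤ : ℕ∞) Vs)
    (hVs0 : Vs 0 = 0)
    (hVs'pos : ∀ z : ℝ, 0 ≤ z → 0 < deriv Vs z)
    (hdecay : ∀ p : ℕ, Tendsto (fun z : ℝ => z ^ p * (Vs z - z - As)) atTop (nhds 0))
    (hderiv_decay : ∀ n : ℕ, 1 ≤ n → ∀ p : ℕ,
      Tendsto (fun z : ℝ => z ^ p * iteratedDeriv n (fun w => Vs w - w) z) atTop (nhds 0))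
    :
    Tendsto (fun μ : ℂ => (PhiInf Vs μ).re)
        (nhdsWithin 0 {μ : ℂ | μ.im ≠ 0 ∨ μ.re < 0}) (nhds (-1 / deriv Vs 0))
      ∧ -1 / deriv Vs 0 < 0 := by
  have hd : ∀ y, HasDerivAt Vs (deriv Vs y) y := fun y =>
    ((hVs_smooth.differentiable (by simp)) y).hasDerivAt
  have hmono : StrictMonoOn Vs (Set.Ici 0) := by
    apply strictMonoOn_of_deriv_pos (convex_Ici 0) hVs_smooth.continuous.continuousOn
    intro x hx
    rw [interior_Ici] at hx
    exact hVs'pos x (le_of_lt hx)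
  have hV1 : 0 < Vs 1 := by
    have := hmono (by simp) (by simp) one_pos
    rwa [hVs0] at this
  have hslit : ∀ μ : ℂ, (μ.im ≠ 0 ∨ μ.re < 0) → ∀ y : ℝ, 0 ≤ y →
      (Vs y : ℂ) - μ ∈ Complex.slitPlane := by
    intro μ hμ y hy
    have h0 : 0 ≤ Vs y := by
      have := hmono.monotoneOn (by simp) (by simpa using hy) hy
      rwa [hVs0] at this
    rw [Complex.mem_slitPlane_iff]
    rcases hμ with h | h
    · right; simpa using h
    · left; simp; linarith
  refine ⟨?_, div_neg_of_neg_of_pos (by norm_num) (hVs'pos 0 le_rfl)⟩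
  obtain ⟨c, hc, hlow⟩ := phi_lower Vs As hmono hV1 (by simpa using hdecay 0)
  obtain ⟨C, hC⟩ := phi_tail Vs hVs_smooth.continuous hmono hV1 c hc hlow
  have hnear := phi_near Vs hVs_smooth hVs0 hVs'pos hV1 hslit
  have hsmall : ∀ᶠ μ : ℂ in nhdsWithin 0 {μ : ℂ | μ.im ≠ 0 ∨ μ.re < 0}, ‖μ‖ < Vs 1 / 2 :=
    nhdsWithin_le_nhds (by
      simpa [Metric.ball, dist_zero_right] using Metric.ball_mem_nhds (0:ℂ) (half_pos hV1))
  have htail := phi_bdd_mul (nhdsWithin_le_nhds (s := {μ : ℂ | μ.im ≠ 0 ∨ μ.re < 0}))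
    (fun μ => ∫ y in Set.Ioi (1:ℝ), ((μ - (Vs y : ℂ)) ^ 2)⁻¹) C
    (hsmall.mono fun μ hμ => (hC μ hμ.le).2)
  have hsum := hnear.add htail
  rw [add_zero] at hsum
  have hre := (Complex.continuous_re.tendsto _).comp hsum
  rw [Complex.ofReal_re] at hre
  refine hre.congr' ?_
  filter_upwards [self_mem_nhdsWithin, hsmall] with μ hμ hμs
  have hcont : ContinuousOn (fun y : ℝ => ((μ - (Vs y : ℂ)) ^ 2)⁻¹) (Set.Icc 0 1) := by
    apply ContinuousOn.inv₀
    · exact ((continuous_const.sub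
        (Complex.continuous_ofReal.comp hVs_smooth.continuous)).pow 2).continuousOn
    · intro y hy
      have := Complex.slitPlane_ne_zero (hslit μ hμ y hy.1)
      rw [← neg_sub, neg_sq]
      exact pow_ne_zero 2 this
  have hint : IntegrableOn (fun y : ℝ => ((μ - (Vs y : ℂ)) ^ 2)⁻¹) (Set.Ioc 0 1) :=
    (hcont.integrableOn_Icc).mono_set Set.Ioc_subset_Icc_self
  have hsplit : ∫ y in Set.Ioi (0:ℝ), ((μ - (Vs y : ℂ)) ^ 2)⁻¹
      = (∫ y in (0:ℝ)..1, ((μ - (Vs y : ℂ)) ^ 2)⁻¹)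
        + ∫ y in Set.Ioi (1:ℝ), ((μ - (Vs y : ℂ)) ^ 2)⁻¹ := by
    rw [intervalIntegral.integral_of_le zero_le_one, ← setIntegral_union
      (Set.Ioc_disjoint_Ioi le_rfl) measurableSet_Ioi hint (hC μ hμs.le).1,
      Set.Ioc_union_Ioi_eq_Ioi zero_le_one]
  simp only [Function.comp, PhiInf]
  rw [hsplit, mul_add]
end

section
/- For every μ ∈ ℂ ∖ [0,∞), Φ_∞(μ) = −1/V_s'(0) + μ ∫₀^∞ g(u)/(μ − u) du, where the integral on the right converges absolutely. -/
open MeasureTheory Filter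

/-- `Φ_∞(μ) = -1/V_s'(0) + μ ∫₀^∞ g(u)/(μ-u) du`, absolutely convergent. -/
theorem PhiInf_eq_g_integral
    (Vs : ℝ → ℝ) (As : ℝ)
    (hVs_smooth : ContDiff ℝ (⊤ : ℕ∞) Vs)
    (hVs0 : Vs 0 = 0)
    (hVs'pos : ∀ z : ℝ, 0 ≤ z → 0 < deriv Vs z)
    (hdecay : ∀ p : ℕ, Tendsto (fun z : ℝ => z ^ p * (Vs z - z - As)) atTop (nhds 0))
    (hderiv_decay : ∀ n : ℕ, 1 ≤ n → ∀ p : ℕ,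
      Tendsto (fun z : ℝ => z ^ p * iteratedDeriv n (fun w => Vs w - w) z) atTop (nhds 0))
    (g : ℝ → ℝ)
    (hg : ∀ z : ℝ, 0 ≤ z → g (Vs z) = deriv (deriv Vs) z / (deriv Vs z) ^ 3)
    :
    ∀ μ : ℂ, (μ.im ≠ 0 ∨ μ.re < 0) →
      MeasureTheory.IntegrableOn (fun u : ℝ => (g u : ℂ) / (μ - u)) (Set.Ioi 0) ∧
      PhiInf Vs μ
        = -(1 / ((deriv Vs 0 : ℝ) : ℂ)) + μ * ∫ u in Set.Ioi (0 : ℝ), (g u : ℂ) / (μ - u) := by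
  intro μ hμ
  have hd : ∀ z, HasDerivAt Vs (deriv Vs z) z := fun z =>
    (hVs_smooth.differentiable (by simp) z).hasDerivAt
  have hsm1 : ContDiff ℝ (⊤ : ℕ∞) (deriv Vs) := by
    have := hVs_smooth.iterate_deriv 1
    simpa using this
  have hsm2 : ContDiff ℝ (⊤ : ℕ∞) (deriv (deriv Vs)) := by
    have := hsm1.iterate_deriv 1
    simpa using this
  have hd2 : ∀ z, HasDerivAt (deriv Vs) (deriv (deriv Vs) z) z := fun z =>
    (hsm1.differentiable (by simp) z).hasDerivAt
  have hmono : StrictMonoOn Vs (Set.Ici 0) := by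
    apply strictMonoOn_of_deriv_pos (convex_Ici 0) hVs_smooth.continuous.continuousOn
    intro x hx
    rw [interior_Ici] at hx
    exact hVs'pos x (le_of_lt hx)
  have hnn : ∀ z, 0 ≤ z → 0 ≤ Vs z := fun z hz => by
    have := hmono.monotoneOn (Set.mem_Ici.2 le_rfl) (Set.mem_Ici.2 hz) hz
    rwa [hVs0] at this
  have hne : ∀ z, 0 ≤ z → μ - (Vs z : ℂ) ≠ 0 := by
    intro z hz h
    have h' : μ = (Vs z : ℂ) := sub_eq_zero.1 h
    rcases hμ with h1 | h1
    · exact h1 (by rw [h']; simp)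
    · rw [h'] at h1
      simp only [Complex.ofReal_re] at h1
      exact absurd (hnn z hz) (not_le.2 h1)
  have hlim0 : Tendsto (fun z : ℝ => Vs z - z - As) atTop (nhds 0) := by
    simpa using hdecay 0
  have hVtop : Tendsto Vs atTop atTop := by
    have h1 : Tendsto (fun z : ℝ => z + As) atTop atTop := tendsto_atTop_add_const_right _ _ tendsto_id
    have := hlim0.add_atTop h1
    refine this.congr (fun z => by ring)
  have himg : Vs '' Set.Ioi 0 = Set.Ioi 0 := by
    ext u
    constructor
    · rintro ⟨z, hz, rfl⟩
      have := hmono (Set.mem_Ici.2 le_rfl) (Set.mem_Ici.2 (le_of_lt hz)) hz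
      rwa [hVs0] at this
    · intro hu
      obtain ⟨b, hb0, hbu⟩ := ((eventually_ge_atTop (0:ℝ)).and (hVtop.eventually_ge_atTop u)).exists
      obtain ⟨z, hz, hzu⟩ := intermediate_value_Icc hb0 hVs_smooth.continuous.continuousOn
        (show u ∈ Set.Icc (Vs 0) (Vs b) from ⟨by rw [hVs0]; exact le_of_lt hu, hbu⟩)
      refine ⟨z, lt_of_le_of_ne hz.1 ?_, hzu⟩
      rintro rfl
      rw [hVs0] at hzu
      exact absurd hu (by simp [hzu])
  have hinj : Set.InjOn Vs (Set.Ioi 0) := hmono.injOn.mono Set.Ioi_subset_Ici_self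
  have hderiv1 : deriv (fun w => Vs w - w) = fun z => deriv Vs z - 1 := by
    funext z
    exact ((hd z).sub (hasDerivAt_id z)).deriv
  have hderiv2 : deriv (fun z => deriv Vs z - 1) = deriv (deriv Vs) := by
    funext z
    exact ((hd2 z).sub_const 1).deriv
  have hV'lim : Tendsto (deriv Vs) atTop (nhds 1) := by
    have := hderiv_decay 1 le_rfl 0
    rw [iteratedDeriv_one, hderiv1] at this
    simpa using this.add_const 1
  have hV''lim : Tendsto (fun z => z * deriv (deriv Vs) z) atTop (nhds 0) := by
    have := hderiv_decay 2 (by norm_num) 1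
    rw [iteratedDeriv_succ, iteratedDeriv_one, hderiv1, hderiv2] at this
    simpa using this
  have hinv : (fun z : ℝ => (μ - (Vs z : ℂ))⁻¹) =O[atTop] (fun z : ℝ => z⁻¹) := by
    refine Asymptotics.IsBigO.of_bound 2 ?_
    have e1 : ∀ᶠ z : ℝ in atTop, -1 < Vs z - z - As := hlim0.eventually_const_lt (by norm_num)
    filter_upwards [e1, eventually_gt_atTop (0:ℝ), eventually_ge_atTop (2 * (1 - As + ‖μ‖))]
      with z h1 h2 h3
    have h4 : z / 2 ≤ ‖μ - (Vs z : ℂ)‖ := by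
      have h5 := norm_sub_norm_le (Vs z : ℂ) μ
      rw [norm_sub_rev, Complex.norm_real] at h5
      have h6 := le_abs_self (Vs z)
      rw [← Real.norm_eq_abs] at h6
      linarith
    rw [norm_inv, norm_inv, Real.norm_of_nonneg h2.le]
    calc ‖μ - (Vs z : ℂ)‖⁻¹ ≤ (z / 2)⁻¹ := inv_anti₀ (by positivity) h4
      _ = 2 * z⁻¹ := by field_simp
  have hV''O : (fun z : ℝ => ((deriv (deriv Vs) z : ℝ) : ℂ)) =O[atTop] (fun z : ℝ => z⁻¹) := by
    refine Asymptotics.IsBigO.of_bound 1 ?_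
    have e1 := (hV''lim.norm).eventually_lt_const (show ‖(0:ℝ)‖ < 1 by simp)
    filter_upwards [e1, eventually_gt_atTop (0:ℝ)] with z h1 h2
    rw [norm_mul, Real.norm_of_nonneg h2.le] at h1
    rw [Complex.norm_real, norm_inv, Real.norm_of_nonneg h2.le, one_mul, ← one_div, le_div_iff₀ h2]
    linarith
  have hV'lim' : Tendsto (fun z => ((deriv Vs z : ℝ) : ℂ)⁻¹) atTop (nhds 1) := by
    have := ((Complex.continuous_ofReal.tendsto 1).comp hV'lim).inv₀ (by simp)
    simpa using this
  have hV'O := hV'lim'.isBigO_one ℝ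
  have key : ∀ f : ℝ → ℂ, ContinuousOn f (Set.Ici 0) → f =O[atTop] (fun z : ℝ => z⁻¹ * z⁻¹) →
      IntegrableOn f (Set.Ioi 0) := by
    intro f hf hO
    have hO' : f =O[atTop] (fun z : ℝ => z ^ (-2 : ℝ)) := by
      refine hO.trans_eventuallyEq ?_
      filter_upwards [eventually_gt_atTop (0:ℝ)] with z hz
      rw [Real.rpow_neg hz.le, Real.rpow_ofNat, pow_two, mul_inv]
    refine IntegrableOn.mono_set ?_ Set.Ioi_subset_Ici_self
    refine (hf.locallyIntegrableOn measurableSet_Ici).integrableOn_of_isBigO_atTop hO' ?_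
    exact ⟨Set.Ioi 1, Ioi_mem_atTop 1, integrableOn_Ioi_rpow_of_lt (by norm_num) one_pos⟩
  have hne' : ∀ z, 0 ≤ z → ((deriv Vs z : ℝ) : ℂ) ≠ 0 := fun z hz => by
    exact_mod_cast (hVs'pos z hz).ne'
  have cV : Continuous (fun z : ℝ => μ - (Vs z : ℂ)) :=
    continuous_const.sub (Complex.continuous_ofReal.comp hVs_smooth.continuous)
  have cV' : Continuous (fun z : ℝ => ((deriv Vs z : ℝ) : ℂ)) :=
    Complex.continuous_ofReal.comp hsm1.continuous
  have cV'' : Continuous (fun z : ℝ => ((deriv (deriv Vs) z : ℝ) : ℂ)) :=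
    Complex.continuous_ofReal.comp hsm2.continuous
  have cI : ContinuousOn (fun z : ℝ => (μ - (Vs z : ℂ))⁻¹) (Set.Ici 0) :=
    cV.continuousOn.inv₀ (fun z hz => hne z hz)
  have cI' : ContinuousOn (fun z : ℝ => ((deriv Vs z : ℝ) : ℂ)⁻¹) (Set.Ici 0) :=
    cV'.continuousOn.inv₀ (fun z hz => hne' z hz)
  have I1 : IntegrableOn (fun z : ℝ => (μ - (Vs z : ℂ))⁻¹ * (μ - (Vs z : ℂ))⁻¹) (Set.Ioi 0) :=
    key _ (cI.mul cI) (hinv.mul hinv)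
  have I2 : IntegrableOn (fun z : ℝ => ((deriv (deriv Vs) z : ℝ) : ℂ) * (μ - (Vs z : ℂ))⁻¹ *
      (((deriv Vs z : ℝ) : ℂ)⁻¹ * ((deriv Vs z : ℝ) : ℂ)⁻¹)) (Set.Ioi 0) := by
    refine key _ ((cV''.continuousOn.mul cI).mul (cI'.mul cI')) ?_
    simpa using (hV''O.mul hinv).mul (hV'O.mul hV'O)
  have hcv : ∀ z ∈ Set.Ioi (0:ℝ), |deriv Vs z| • ((g (Vs z) : ℂ) / (μ - (Vs z : ℂ))) =
      ((deriv (deriv Vs) z : ℝ) : ℂ) * (μ - (Vs z : ℂ))⁻¹ *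
      (((deriv Vs z : ℝ) : ℂ)⁻¹ * ((deriv Vs z : ℝ) : ℂ)⁻¹) := by
    intro z hz
    have hz' : (0:ℝ) ≤ z := le_of_lt hz
    have := hne z hz'
    have := hne' z hz'
    rw [abs_of_pos (hVs'pos z hz'), hg z hz', Complex.real_smul]
    push_cast
    field_simp
  have J1 : IntegrableOn (fun u : ℝ => (g u : ℂ) / (μ - u)) (Set.Ioi 0) := by
    rw [← himg, integrableOn_image_iff_integrableOn_abs_deriv_smul measurableSet_Ioi
      (fun z _ => (hd z).hasDerivWithinAt) hinj]
    exact I2.congr_fun (fun z hz => (hcv z hz).symm) measurableSet_Ioi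
  have J2 : ∫ u in Set.Ioi (0 : ℝ), (g u : ℂ) / (μ - u) =
      ∫ z in Set.Ioi (0:ℝ), ((deriv (deriv Vs) z : ℝ) : ℂ) * (μ - (Vs z : ℂ))⁻¹ *
      (((deriv Vs z : ℝ) : ℂ)⁻¹ * ((deriv Vs z : ℝ) : ℂ)⁻¹) := by
    conv_lhs => rw [← himg]
    rw [integral_image_eq_integral_abs_deriv_smul measurableSet_Ioi
      (fun z _ => (hd z).hasDerivWithinAt) hinj]
    exact setIntegral_congr_fun measurableSet_Ioi hcv
  refine ⟨J1, ?_⟩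
  have hF : ∀ z ∈ Set.Ici (0:ℝ), HasDerivAt
      (fun z : ℝ => (μ - (Vs z : ℂ))⁻¹ * ((deriv Vs z : ℝ) : ℂ)⁻¹)
      ((μ - (Vs z : ℂ))⁻¹ * (μ - (Vs z : ℂ))⁻¹ -
        ((deriv (deriv Vs) z : ℝ) : ℂ) * (μ - (Vs z : ℂ))⁻¹ *
      (((deriv Vs z : ℝ) : ℂ)⁻¹ * ((deriv Vs z : ℝ) : ℂ)⁻¹)) z := by
    intro z hz
    have a1 := hne z hz
    have a2 := hne' z hz
    have b1 := ((hd z).ofReal_comp.const_sub μ).fun_inv a1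
    have b2 := ((hd2 z).ofReal_comp).fun_inv a2
    refine (b1.mul b2).congr_deriv ?_
    field_simp
    ring
  have hFlim : Tendsto (fun z : ℝ => (μ - (Vs z : ℂ))⁻¹ * ((deriv Vs z : ℝ) : ℂ)⁻¹) atTop
      (nhds 0) := by
    simpa using (hinv.trans_tendsto tendsto_inv_atTop_zero).mul hV'lim'
  have main := integral_Ioi_of_hasDerivAt_of_tendsto' hF (I1.sub I2) hFlim
  rw [integral_sub I1 I2, ← J2, hVs0] at main
  have hμ0 : μ ≠ 0 := by
    have := hne 0 le_rfl
    rw [hVs0] at this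
    simpa using this
  have h00 := hne' 0 le_rfl
  unfold PhiInf
  have e : ∫ y in Set.Ioi (0 : ℝ), ((μ - (Vs y : ℂ)) ^ 2)⁻¹ =
      ∫ z in Set.Ioi (0 : ℝ), (μ - (Vs z : ℂ))⁻¹ * (μ - (Vs z : ℂ))⁻¹ := by
    congr 1
    funext z
    rw [pow_two, mul_inv]
  rw [e, sub_eq_iff_eq_add.1 main, mul_add]
  congr 1
  simp only [Complex.ofReal_zero, sub_zero, zero_sub]
  field_simp
end

section
/- For every μ ∈ ℂ ∖ [0,∞), Φ_∞(μ) + 1 = ∫₀^∞ g(u)·u/(μ − u) du, where the integral on the right converges absolutely. In particular this uses the elementary identity −1/V_s'(0) + ∫₀^∞ V_s''(y)/(V_s'(y))² dy = −1, valid since V_s'(y) → 1 as y → ∞. -/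
open MeasureTheory Filter

/-- A continuous function decaying like `z⁻²` is integrable on the half line. -/
theorem integrableOn_Ioi_of_sq_smul_tendsto {F : Type*} [NormedAddCommGroup F] [NormedSpace ℝ F]
    {f : ℝ → F} {L : F}
    (hf : ContinuousOn f (Set.Ici 0))
    (hL : Tendsto (fun z : ℝ => z ^ 2 • f z) atTop (nhds L)) :
    IntegrableOn f (Set.Ioi 0) := by
  have hO : f =O[atTop] (fun z : ℝ => z ^ (-2 : ℝ)) := by
    have h1 := hL.isBigO_one ℝ
    have h2 : (fun z : ℝ => z ^ (-2 : ℝ)) =O[atTop] (fun z : ℝ => z ^ (-2 : ℝ)) :=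
      Asymptotics.isBigO_refl _ _
    have h3 := h2.smul h1
    refine h3.congr' ?_ ?_
    · filter_upwards [eventually_gt_atTop 0] with z hz
      have : z ^ (-2 : ℝ) * z ^ 2 = 1 := by
        rw [Real.rpow_neg hz.le]
        norm_cast
        field_simp
      rw [smul_smul, this, one_smul]
    · filter_upwards with z
      simp
  exact (integrableOn_Ici_iff_integrableOn_Ioi (by finiteness)).mp <|
    (hf.locallyIntegrableOn measurableSet_Ici).integrableOn_of_isBigO_atTop
    hO ⟨Set.Ioi 1, Ioi_mem_atTop 1, integrableOn_Ioi_rpow_of_lt (by norm_num) one_pos⟩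

/-- `Φ_∞(μ) + 1 = ∫₀^∞ g(u) u/(μ-u) du`, absolutely convergent; this uses the
identity `-1/V_s'(0) + ∫₀^∞ V_s''/(V_s')² = -1`. -/
theorem PhiInf_add_one_eq
    (Vs : ℝ → ℝ) (As : ℝ)
    (hVs_smooth : ContDiff ℝ (⊤ : ℕ∞) Vs)
    (hVs0 : Vs 0 = 0)
    (hVs'pos : ∀ z : ℝ, 0 ≤ z → 0 < deriv Vs z)
    (hdecay : ∀ p : ℕ, Tendsto (fun z : ℝ => z ^ p * (Vs z - z - As)) atTop (nhds 0))
    (hderiv_decay : ∀ n : ℕ, 1 ≤ n → ∀ p : ℕ,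
      Tendsto (fun z : ℝ => z ^ p * iteratedDeriv n (fun w => Vs w - w) z) atTop (nhds 0))
    (g : ℝ → ℝ)
    (hg : ∀ z : ℝ, 0 ≤ z → g (Vs z) = deriv (deriv Vs) z / (deriv Vs z) ^ 3)
    :
    MeasureTheory.IntegrableOn
        (fun y : ℝ => deriv (deriv Vs) y / (deriv Vs y) ^ 2) (Set.Ioi 0) ∧
    (-1 / deriv Vs 0 + ∫ y in Set.Ioi (0 : ℝ), deriv (deriv Vs) y / (deriv Vs y) ^ 2 = -1) ∧
    ∀ μ : ℂ, (μ.im ≠ 0 ∨ μ.re < 0) →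
      MeasureTheory.IntegrableOn (fun u : ℝ => (g u : ℂ) * u / (μ - u)) (Set.Ioi 0) ∧
      PhiInf Vs μ + 1 = ∫ u in Set.Ioi (0 : ℝ), (g u : ℂ) * u / (μ - u) := by
  have hV : ∀ z, HasDerivAt Vs (deriv Vs z) z := fun z =>
    (hVs_smooth.differentiable (by simp) z).hasDerivAt
  have hDsm : ContDiff ℝ (⊤ : ℕ∞) (deriv Vs) := (contDiff_infty_iff_deriv.1 hVs_smooth).2
  have hEsm : ContDiff ℝ (⊤ : ℕ∞) (deriv (deriv Vs)) := (contDiff_infty_iff_deriv.1 hDsm).2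
  have hD : ∀ z, HasDerivAt (deriv Vs) (deriv (deriv Vs) z) z := fun z =>
    (hDsm.differentiable (by simp) z).hasDerivAt
  have hd1 : deriv (fun w => Vs w - w) = fun z => deriv Vs z - 1 := by
    funext z
    exact ((hV z).sub (hasDerivAt_id z)).deriv
  have hd2 : iteratedDeriv 2 (fun w => Vs w - w) = deriv (deriv Vs) := by
    rw [iteratedDeriv_succ, iteratedDeriv_one, hd1]
    funext z
    exact ((hD z).sub_const 1).deriv
  have hDlim : Tendsto (deriv Vs) atTop (nhds 1) := by
    have h := hderiv_decay 1 le_rfl 0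
    simp only [iteratedDeriv_one, hd1, pow_zero, one_mul] at h
    simpa using h.add_const 1
  have hElim : Tendsto (fun z : ℝ => z ^ 2 * deriv (deriv Vs) z) atTop (nhds 0) := by
    have h := hderiv_decay 2 (by norm_num) 2
    rwa [hd2] at h
  have hVz : Tendsto (fun z : ℝ => Vs z - z) atTop (nhds As) := by
    have h := hdecay 0
    simpa using h.add_const As
  have hVtop : Tendsto Vs atTop atTop := by
    have h := hVz.add_atTop tendsto_id
    simpa using h
  have hVc : Continuous Vs := hVs_smooth.continuous
  have hDc : Continuous (deriv Vs) := hDsm.continuous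
  have hEc : Continuous (deriv (deriv Vs)) := hEsm.continuous
  have hne : ∀ z : ℝ, 0 ≤ z → deriv Vs z ≠ 0 := fun z hz => (hVs'pos z hz).ne'
  have hQlim : Tendsto (fun z : ℝ => z ^ 2 * (deriv (deriv Vs) z / (deriv Vs z) ^ 2)) atTop
      (nhds 0) := by
    have h := hElim.div (hDlim.pow 2) (by norm_num)
    rw [zero_div] at h
    exact h.congr (fun z => mul_div_assoc _ _ _)
  have hQc : ContinuousOn (fun y : ℝ => deriv (deriv Vs) y / (deriv Vs y) ^ 2) (Set.Ici 0) :=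
    hEc.continuousOn.div (hDc.pow 2).continuousOn (fun z hz => pow_ne_zero 2 (hne z hz))
  have hQint : IntegrableOn (fun y : ℝ => deriv (deriv Vs) y / (deriv Vs y) ^ 2) (Set.Ioi 0) :=
    integrableOn_Ioi_of_sq_smul_tendsto (L := 0) hQc (by simpa using hQlim)
  have hQ : ∫ y in Set.Ioi (0 : ℝ), deriv (deriv Vs) y / (deriv Vs y) ^ 2
      = -1 + (deriv Vs 0)⁻¹ := by
    have h := integral_Ioi_of_hasDerivAt_of_tendsto' (f := fun y => -(deriv Vs y)⁻¹)
      (f' := fun y : ℝ => deriv (deriv Vs) y / (deriv Vs y) ^ 2) (m := -1) (a := 0)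
      (fun x hx => by
        have := ((hD x).inv (hne x hx)).neg
        exact this.congr_deriv (by ring)) hQint
      (by simpa using (hDlim.inv₀ one_ne_zero).neg)
    rw [h]
    ring
  refine ⟨hQint, ?_, ?_⟩
  · rw [hQ]
    ring
  intro μ hμ
  have hmono : StrictMonoOn Vs (Set.Ici 0) :=
    strictMonoOn_of_deriv_pos (convex_Ici 0) hVc.continuousOn
      (fun x hx => hVs'pos x (interior_subset hx))
  have himg : Vs '' Set.Ioi 0 = Set.Ioi 0 := by
    ext u
    constructor
    · rintro ⟨z, hz, rfl⟩
      have hz' : (0 : ℝ) < z := hz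
      have := hmono (Set.mem_Ici.2 le_rfl) (Set.mem_Ici.2 hz'.le) hz'
      rwa [hVs0] at this
    · intro hu
      have hu' : (0 : ℝ) < u := hu
      obtain ⟨b, hb0, hbu⟩ := ((eventually_ge_atTop (0 : ℝ)).and
        (hVtop.eventually_ge_atTop u)).exists
      obtain ⟨z, hz, hzu⟩ := intermediate_value_Icc hb0 hVc.continuousOn
        (show u ∈ Set.Icc (Vs 0) (Vs b) from ⟨by rw [hVs0]; exact hu'.le, hbu⟩)
      refine ⟨z, lt_of_le_of_ne hz.1 ?_, hzu⟩
      rintro rfl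
      rw [hVs0] at hzu
      exact hu'.ne hzu
  have hVnn : ∀ z : ℝ, 0 ≤ z → 0 ≤ Vs z := fun z hz => by
    have := hmono.monotoneOn (Set.mem_Ici.2 le_rfl) (Set.mem_Ici.2 hz) hz
    rwa [hVs0] at this
  have hμu : ∀ u : ℝ, 0 ≤ u → μ - (u : ℂ) ≠ 0 := by
    intro u hu h
    have h' : μ = (u : ℂ) := sub_eq_zero.1 h
    rw [h'] at hμ
    simp at hμ
    linarith
  have hμV : ∀ z : ℝ, 0 ≤ z → μ - (Vs z : ℂ) ≠ 0 := fun z hz => hμu _ (hVnn z hz)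
  have hμ0 : μ ≠ 0 := by simpa using hμu 0 le_rfl
  have hDC : ∀ z : ℝ, 0 ≤ z → ((deriv Vs z : ℝ) : ℂ) ≠ 0 := fun z hz =>
    Complex.ofReal_ne_zero.2 (hne z hz)
  have hRlim : Tendsto (fun z : ℝ => (μ - (Vs z : ℂ))⁻¹) atTop (nhds 0) := by
    apply tendsto_inv₀_cobounded.comp
    rw [← tendsto_norm_atTop_iff_cobounded]
    refine tendsto_atTop_mono (f := fun z => Vs z - ‖μ‖) (fun z => ?_)
      (tendsto_atTop_add_const_right _ _ hVtop)
    have h1 := norm_sub_norm_le (Vs z : ℂ) μ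
    rw [norm_sub_rev, Complex.norm_real, Real.norm_eq_abs] at h1
    linarith [le_abs_self (Vs z)]
  have hVCc : Continuous (fun z : ℝ => μ - (Vs z : ℂ)) :=
    continuous_const.sub (Complex.continuous_ofReal.comp hVc)
  have hRc : ContinuousOn (fun z : ℝ => (μ - (Vs z : ℂ))⁻¹) (Set.Ici 0) :=
    hVCc.continuousOn.inv₀ hμV
  have hzR : Tendsto (fun z : ℝ => (z : ℂ) * (μ - (Vs z : ℂ))⁻¹) atTop (nhds (-1)) := by
    have hVzC : Tendsto (fun z : ℝ => ((Vs z - z : ℝ) : ℂ)) atTop (nhds (As : ℂ)) :=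
      (Complex.continuous_ofReal.tendsto As).comp hVz
    have h := ((hRlim.const_mul μ).const_add (-1)).sub (hVzC.mul hRlim)
    simp only [mul_zero, add_zero, sub_zero] at h
    refine h.congr' ?_
    filter_upwards [eventually_ge_atTop (0 : ℝ)] with z hz
    have := hμV z hz
    push_cast
    field_simp
    ring
  have hSint : IntegrableOn (fun y : ℝ => ((μ - (Vs y : ℂ)) ^ 2)⁻¹) (Set.Ioi 0) := by
    refine integrableOn_Ioi_of_sq_smul_tendsto (L := (-1) ^ 2)
      ((hVCc.pow 2).continuousOn.inv₀ (fun z hz => pow_ne_zero 2 (hμV z hz))) ?_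
    refine (hzR.pow 2).congr (fun z => ?_)
    rw [Complex.real_smul, mul_pow, inv_pow]
    push_cast
    rfl
  have hQCc : ContinuousOn (fun y : ℝ => ((deriv (deriv Vs) y / (deriv Vs y) ^ 2 : ℝ) : ℂ))
      (Set.Ici 0) := Complex.continuous_ofReal.comp_continuousOn hQc
  have hQR : IntegrableOn (fun y : ℝ => ((deriv (deriv Vs) y / (deriv Vs y) ^ 2 : ℝ) : ℂ) *
      (μ - (Vs y : ℂ))⁻¹) (Set.Ioi 0) := by
    refine integrableOn_Ioi_of_sq_smul_tendsto (L := ((0 : ℝ) : ℂ) * 0) (hQCc.mul hRc) ?_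
    refine (((Complex.continuous_ofReal.tendsto 0).comp hQlim).mul hRlim).congr (fun z => ?_)
    rw [Complex.real_smul]
    simp only [Function.comp]
    push_cast
    ring
  have hQCint : IntegrableOn (fun y : ℝ => ((deriv (deriv Vs) y / (deriv Vs y) ^ 2 : ℝ) : ℂ))
      (Set.Ioi 0) := hQint.ofReal
  have hparts : ∫ y in Set.Ioi (0 : ℝ), (((μ - (Vs y : ℂ)) ^ 2)⁻¹ -
      ((deriv (deriv Vs) y / (deriv Vs y) ^ 2 : ℝ) : ℂ) * (μ - (Vs y : ℂ))⁻¹)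
      = 0 - ((deriv Vs 0 : ℝ) : ℂ)⁻¹ * (μ - (Vs 0 : ℂ))⁻¹ := by
    refine integral_Ioi_of_hasDerivAt_of_tendsto'
      (f := fun y : ℝ => ((deriv Vs y : ℝ) : ℂ)⁻¹ * (μ - (Vs y : ℂ))⁻¹) (fun x hx => ?_)
      (hSint.sub hQR) ?_
    · have hx0 : (0 : ℝ) ≤ x := hx
      have h1 := (hD x).ofReal_comp.inv (hDC x hx0)
      have h2 := ((hV x).ofReal_comp.const_sub μ).inv (hμV x hx0)
      refine (h1.mul h2).congr_deriv ?_
      have a := hDC x hx0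
      have b := hμV x hx0
      simp only [Pi.inv_apply]
      push_cast
      field_simp
      ring
    · have h1 : Tendsto (fun y : ℝ => ((deriv Vs y : ℝ) : ℂ)⁻¹) atTop (nhds (((1 : ℝ) : ℂ)⁻¹)) :=
        ((Complex.continuous_ofReal.tendsto 1).comp hDlim).inv₀ (by simp)
      simpa using h1.mul hRlim
  have hQC : ∫ y in Set.Ioi (0 : ℝ), ((deriv (deriv Vs) y / (deriv Vs y) ^ 2 : ℝ) : ℂ)
      = -1 + ((deriv Vs 0 : ℝ) : ℂ)⁻¹ := by
    rw [integral_complex_ofReal, hQ]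
    push_cast
    rfl
  have hcong : Set.EqOn (fun y : ℝ => |deriv Vs y| •
        ((g (Vs y) : ℂ) * (Vs y : ℂ) / (μ - (Vs y : ℂ))))
      (fun y : ℝ => μ * (((deriv (deriv Vs) y / (deriv Vs y) ^ 2 : ℝ) : ℂ) *
        (μ - (Vs y : ℂ))⁻¹) - ((deriv (deriv Vs) y / (deriv Vs y) ^ 2 : ℝ) : ℂ))
      (Set.Ioi 0) := by
    intro y hy
    have hy0 : (0 : ℝ) ≤ y := le_of_lt hy
    have a := hDC y hy0
    have b := hμV y hy0
    simp only [hg y hy0, abs_of_pos (hVs'pos y hy0), Complex.real_smul]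
    push_cast
    field_simp
    ring
  have hder : ∀ x ∈ Set.Ioi (0 : ℝ), HasDerivWithinAt Vs (deriv Vs x) (Set.Ioi 0) x :=
    fun x _ => (hV x).hasDerivWithinAt
  have hinj : Set.InjOn Vs (Set.Ioi 0) := hmono.injOn.mono Set.Ioi_subset_Ici_self
  constructor
  · rw [← himg, integrableOn_image_iff_integrableOn_abs_deriv_smul measurableSet_Ioi hder hinj,
      integrableOn_congr_fun hcong measurableSet_Ioi]
    exact (hQR.const_mul μ).sub hQCint
  · have hI : ∫ u in Set.Ioi (0 : ℝ), (g u : ℂ) * u / (μ - u) =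
        ∫ u in Vs '' Set.Ioi (0 : ℝ), (g u : ℂ) * u / (μ - u) := by rw [himg]
    rw [hI, integral_image_eq_integral_abs_deriv_smul measurableSet_Ioi hder hinj,
      setIntegral_congr_fun measurableSet_Ioi hcong,
      integral_sub (hQR.const_mul μ) hQCint, integral_const_mul, hQC]
    rw [integral_sub hSint hQR, hVs0] at hparts
    rw [PhiInf, sub_eq_iff_eq_add.1 hparts]
    have a := hDC 0 le_rfl
    simp only [Complex.ofReal_zero, sub_zero]
    field_simp
    ring
end

section
/- Fix μ ∈ ℂ ∖ [0,∞) and define φ_{μ,∞}(z) := (μ − V_s(z)) ∫_z^∞ (μ − V_s(y))^{−2} dy for z ≥ 0. Then φ_{μ,∞} is continuously differentiable on [0,∞) and satisfies: (i) (μ − V_s(z)) φ_{μ,∞}'(z) + V_s'(z) φ_{μ,∞}(z) = −1 for every z ≥ 0; (ii) φ_{μ,∞}'(z) → 0 as z → ∞; (iii) φ_{μ,∞}(z) → −1 as z → ∞; and (iv) φ_{μ,∞}(0) = Φ_∞(μ). -/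
open MeasureTheory Filter

/-- The explicit solution `φ_{μ,∞}(z) = (μ - V_s(z)) ∫_z^∞ (μ - V_s(y))⁻² dy`. -/
noncomputable def phiSol (Vs : ℝ → ℝ) (μ : ℂ) (z : ℝ) : ℂ :=
  (μ - (Vs z : ℂ)) * ∫ y in Set.Ioi z, ((μ - (Vs y : ℂ)) ^ 2)⁻¹

/-- `φ_{μ,∞}` is C¹ on `[0,∞)`, solves `(μ-V_s)φ' + V_s'φ = -1`,
`φ' → 0` and `φ → -1` at infinity, and `φ(0) = Φ_∞(μ)`. -/
theorem phiSol_properties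
    (Vs : ℝ → ℝ) (As : ℝ)
    (hVs_smooth : ContDiff ℝ (⊤ : ℕ∞) Vs)
    (hVs0 : Vs 0 = 0)
    (hVs'pos : ∀ z : ℝ, 0 ≤ z → 0 < deriv Vs z)
    (hdecay : ∀ p : ℕ, Tendsto (fun z : ℝ => z ^ p * (Vs z - z - As)) atTop (nhds 0))
    (hderiv_decay : ∀ n : ℕ, 1 ≤ n → ∀ p : ℕ,
      Tendsto (fun z : ℝ => z ^ p * iteratedDeriv n (fun w => Vs w - w) z) atTop (nhds 0))
    (μ : ℂ) (hμ : μ.im ≠ 0 ∨ μ.re < 0) :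
    ∃ φd : ℝ → ℂ,
      (∀ z : ℝ, 0 ≤ z → HasDerivWithinAt (phiSol Vs μ) (φd z) (Set.Ici 0) z) ∧
      ContinuousOn φd (Set.Ici 0) ∧
      (∀ z : ℝ, 0 ≤ z →
        (μ - (Vs z : ℂ)) * φd z + ((deriv Vs z : ℝ) : ℂ) * phiSol Vs μ z = -1) ∧
      Tendsto φd atTop (nhds 0) ∧
      Tendsto (phiSol Vs μ) atTop (nhds (-1)) ∧
      phiSol Vs μ 0 = PhiInf Vs μ := by
  have hVd : Differentiable ℝ Vs := hVs_smooth.differentiable (by simp)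
  have hVc : Continuous Vs := hVd.continuous
  have hV'c : Continuous (deriv Vs) := hVs_smooth.continuous_deriv (by simp)
  have hVnn : ∀ z : ℝ, 0 ≤ z → 0 ≤ Vs z := by
    have hm : MonotoneOn Vs (Set.Ici 0) := by
      apply monotoneOn_of_deriv_nonneg (convex_Ici 0) hVc.continuousOn hVd.differentiableOn
      intro x hx
      rw [interior_Ici] at hx
      exact (hVs'pos x (le_of_lt hx)).le
    intro z hz
    have := hm (Set.mem_Ici.2 le_rfl) (Set.mem_Ici.2 hz) hz
    rwa [hVs0] at this
  have hne : ∀ z : ℝ, 0 ≤ z → μ - (Vs z : ℂ) ≠ 0 := by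
    intro z hz h
    have h1 : μ = (Vs z : ℂ) := sub_eq_zero.1 h
    have := hVnn z hz
    rw [h1] at hμ
    simp at hμ
    linarith
  -- derivative facts
  have hVC : ∀ z, HasDerivAt (fun z : ℝ => μ - (Vs z : ℂ)) (-((deriv Vs z : ℝ) : ℂ)) z := by
    intro z
    exact ((hVd z).hasDerivAt.ofReal_comp).const_sub μ
  have hcV : Continuous (fun z : ℝ => μ - (Vs z : ℂ)) := by fun_prop
  -- asymptotics
  have hV1 : Tendsto (fun z : ℝ => Vs z - z) atTop (nhds As) := by
    have := (hdecay 0).add_const As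
    simpa using this
  have hdW : ∀ z, deriv (fun w => Vs w - w) z = deriv Vs z - 1 := by
    intro z
    exact ((hVd z).hasDerivAt.sub (hasDerivAt_id z)).deriv
  have hV'1 : Tendsto (fun z : ℝ => z * (deriv Vs z - 1)) atTop (nhds 0) := by
    have := hderiv_decay 1 le_rfl 1
    simpa [hdW] using this
  have hV'lim : Tendsto (deriv Vs) atTop (nhds 1) := by
    have := (hderiv_decay 1 le_rfl 0).add_const 1
    simpa [hdW] using this
  have hinv : Tendsto (fun z : ℝ => ((z⁻¹ : ℝ) : ℂ)) atTop (nhds 0) := by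
    have := (Complex.continuous_ofReal.tendsto 0).comp tendsto_inv_atTop_zero
    rw [Complex.ofReal_zero] at this
    exact this
  have hratio : Tendsto (fun z : ℝ => (μ - (Vs z : ℂ)) * ((z⁻¹ : ℝ) : ℂ)) atTop (nhds (-1)) := by
    have h1 : Tendsto (fun z : ℝ => ((Vs z - z : ℝ) : ℂ)) atTop (nhds (As : ℂ)) :=
      (Complex.continuous_ofReal.tendsto As).comp hV1
    have h2 := ((h1.const_sub μ).mul hinv).sub_const 1
    simp only [mul_zero, zero_sub] at h2
    refine h2.congr' ?_
    filter_upwards [eventually_gt_atTop 0] with z hz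
    have : (z : ℂ) ≠ 0 := by exact_mod_cast hz.ne'
    push_cast
    field_simp
    ring
  have hratio' : Tendsto (fun z : ℝ => (μ - (Vs z : ℂ))⁻¹ * (z : ℂ)) atTop (nhds (-1)) := by
    have := hratio.inv₀ (by simp)
    have h3 : (-1 : ℂ)⁻¹ = -1 := by norm_num
    rw [h3] at this
    refine this.congr' ?_
    filter_upwards with z
    push_cast
    rw [mul_inv, inv_inv]
  have hginf : Tendsto (fun z : ℝ => (μ - (Vs z : ℂ))⁻¹) atTop (nhds 0) := by
    have := hratio'.mul hinv
    rw [mul_zero] at this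
    refine this.congr' ?_
    filter_upwards [eventually_gt_atTop 0] with z hz
    have : (z : ℂ) ≠ 0 := by exact_mod_cast hz.ne'
    push_cast
    rw [mul_assoc, mul_inv_cancel₀ this, mul_one]
  -- integrability
  set f : ℝ → ℂ := fun y => ((μ - (Vs y : ℂ)) ^ 2)⁻¹ with hf
  have hfc : ∀ z, 0 ≤ z → ContinuousAt f z := by
    intro z hz
    exact (hcV.pow 2).continuousAt.inv₀ (pow_ne_zero 2 (hne z hz))
  have hfm : StronglyMeasurable f := by
    have : Measurable f := ((hcV.pow 2).measurable).inv
    exact this.stronglyMeasurable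
  have hfO : f =O[atTop] (fun y : ℝ => y ^ (-2 : ℝ)) := by
    have h1 : Tendsto (fun z : ℝ => f z * (z : ℂ) ^ 2) atTop (nhds ((-1) ^ 2)) := by
      refine (hratio'.pow 2).congr ?_
      intro z
      simp only [hf]
      rw [mul_pow, inv_pow]
    have h2 := h1.isBigO_one ℝ
    have h0 : (fun y : ℝ => ((y ^ (-2 : ℝ) : ℝ) : ℂ)) =O[atTop] (fun y : ℝ => y ^ (-2 : ℝ)) :=
      Asymptotics.isBigO_of_le _ (fun y => by rw [Complex.norm_real])
    have h3 := h2.mul h0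
    refine (h3.congr' ?_ ?_)
    · filter_upwards [eventually_gt_atTop 0] with z hz
      have : (z : ℂ) ≠ 0 := by exact_mod_cast hz.ne'
      rw [Real.rpow_neg hz.le, Real.rpow_two]
      push_cast
      field_simp
    · filter_upwards with z
      simp
  have hpow : IntegrableAtFilter (fun y : ℝ => y ^ (-2 : ℝ)) atTop volume :=
    ⟨Set.Ioi 1, Ioi_mem_atTop 1, integrableOn_Ioi_rpow_of_lt (by norm_num) one_pos⟩
  have hfi : IntegrableOn f (Set.Ioi 0) := by
    have h1 : ContinuousOn f (Set.Ici 0) := fun z hz => (hfc z hz).continuousWithinAt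
    exact ((h1.locallyIntegrableOn measurableSet_Ici).integrableOn_of_isBigO_atTop hfO
      hpow).mono_set Set.Ioi_subset_Ici_self
  have hV'Cc : Continuous (fun y : ℝ => ((deriv Vs y : ℝ) : ℂ)) := by fun_prop
  have hV'Clim : Tendsto (fun y : ℝ => ((deriv Vs y : ℝ) : ℂ)) atTop (nhds 1) := by
    have := (Complex.continuous_ofReal.tendsto 1).comp hV'lim
    rw [Complex.ofReal_one] at this
    exact this
  have hgi : IntegrableOn (fun y => ((deriv Vs y : ℝ) : ℂ) * f y) (Set.Ioi 0) := by
    have h1 : ContinuousOn (fun y => ((deriv Vs y : ℝ) : ℂ) * f y) (Set.Ici 0) :=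
      fun z hz => (hV'Cc.continuousAt.mul (hfc z hz)).continuousWithinAt
    have h2 := (hV'Clim.isBigO_one ℝ).mul hfO
    simp only [one_mul] at h2
    exact ((h1.locallyIntegrableOn measurableSet_Ici).integrableOn_of_isBigO_atTop h2
      hpow).mono_set Set.Ioi_subset_Ici_self
  -- the tail integral
  set J : ℝ → ℂ := fun z => ∫ y in Set.Ioi z, f y with hJ
  have hJeq : ∀ z, 0 ≤ z → J z = J 0 - ∫ y in (0 : ℝ)..z, f y := by
    intro z hz
    have := intervalIntegral.integral_Ioi_sub_Ioi hfi hz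
    simp only [hJ]
    rw [← this]
    ring
  have hJd : ∀ z, 0 ≤ z → HasDerivWithinAt J (-f z) (Set.Ici 0) z := by
    intro z hz
    have hii : IntervalIntegrable f volume 0 z := by
      rw [intervalIntegrable_iff_integrableOn_Ioc_of_le hz]
      exact hfi.mono_set Set.Ioc_subset_Ioi_self
    have h1 := intervalIntegral.integral_hasDerivAt_right hii
      hfm.stronglyMeasurableAtFilter (hfc z hz)
    have h2 := (h1.const_sub (J 0)).hasDerivWithinAt (s := Set.Ici 0)
    exact h2.congr (fun x hx => hJeq x hx) (hJeq z hz)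
  have hJlim : Tendsto J atTop (nhds 0) := by
    have h1 := (intervalIntegral_tendsto_integral_Ioi 0 hfi tendsto_id).const_sub (J 0)
    have h2 : J 0 - ∫ y in Set.Ioi (0 : ℝ), f y = 0 := sub_self _
    rw [h2] at h1
    refine h1.congr' ?_
    filter_upwards [eventually_ge_atTop 0] with z hz
    exact (hJeq z hz).symm
  have hfin : IntegrableOn (fun y => ‖f y‖) (Set.Ioi 0) := hfi.norm
  have hKlim : Tendsto (fun z : ℝ => ∫ y in Set.Ioi z, ‖f y‖) atTop (nhds 0) := by
    have h1 := (intervalIntegral_tendsto_integral_Ioi 0 hfin tendsto_id).const_sub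
      (∫ y in Set.Ioi (0 : ℝ), ‖f y‖)
    rw [sub_self] at h1
    refine h1.congr' ?_
    filter_upwards [eventually_ge_atTop 0] with z hz
    have := intervalIntegral.integral_Ioi_sub_Ioi hfin hz
    simp only [id]
    rw [← this]
    ring
  have hphi : ∀ z, phiSol Vs μ z = (μ - (Vs z : ℂ)) * J z := fun z => rfl
  have hexact : ∀ z, 0 ≤ z →
      ∫ y in Set.Ioi z, ((deriv Vs y : ℝ) : ℂ) * f y = - (μ - (Vs z : ℂ))⁻¹ := by
    intro z hz
    have h1 : ∀ x ∈ Set.Ici z, HasDerivAt (fun y : ℝ => (μ - (Vs y : ℂ))⁻¹)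
        (((deriv Vs x : ℝ) : ℂ) * f x) x := by
      intro x hx
      have h2 := (hVC x).fun_inv (hne x (hz.trans hx))
      have h4 : ((deriv Vs x : ℝ) : ℂ) * f x
          = - -((deriv Vs x : ℝ) : ℂ) / (μ - (Vs x : ℂ)) ^ 2 := by
        simp only [hf]
        rw [neg_neg, div_eq_mul_inv]
      rw [h4]
      exact h2
    have h3 := integral_Ioi_of_hasDerivAt_of_tendsto' h1
      (hgi.mono_set (Set.Ioi_subset_Ioi hz)) hginf
    rw [h3, zero_sub]
  have hrem : Tendsto (fun z : ℝ => (μ - (Vs z : ℂ)) *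
      ∫ y in Set.Ioi z, (f y - ((deriv Vs y : ℝ) : ℂ) * f y)) atTop (nhds 0) := by
    have hev : ∀ᶠ z : ℝ in atTop, ∀ y, z ≤ y → ‖y * (deriv Vs y - 1)‖ ≤ 1 := by
      have h1 : ∀ᶠ y : ℝ in atTop, ‖y * (deriv Vs y - 1)‖ ≤ 1 := by
        have h2 := hV'1.norm
        rw [norm_zero] at h2
        exact h2.eventually_le_const one_pos
      obtain ⟨a, ha⟩ := eventually_atTop.1 h1
      filter_upwards [eventually_ge_atTop a] with z hz y hy
      exact ha y (hz.trans hy)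
    have hb := hratio.norm.mul hKlim
    rw [mul_zero] at hb
    refine squeeze_zero_norm' ?_ hb
    filter_upwards [hev, eventually_gt_atTop 0] with z hz hz0
    have hK : ‖∫ y in Set.Ioi z, (f y - ((deriv Vs y : ℝ) : ℂ) * f y)‖
        ≤ ∫ y in Set.Ioi z, z⁻¹ * ‖f y‖ := by
      apply norm_integral_le_of_norm_le
      · exact (hfin.mono_set (Set.Ioi_subset_Ioi hz0.le)).const_mul _
      · refine (ae_restrict_iff' measurableSet_Ioi).2 (Eventually.of_forall ?_)
        intro y hy
        have hy' : z < y := hy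
        have h1 : f y - ((deriv Vs y : ℝ) : ℂ) * f y = -((deriv Vs y - 1 : ℝ) : ℂ) * f y := by
          push_cast
          ring
        rw [h1, norm_mul, norm_neg, Complex.norm_real]
        gcongr
        have h2 := hz y hy'.le
        rw [norm_mul, Real.norm_of_nonneg (hz0.trans hy').le] at h2
        rw [← one_div, le_div_iff₀ hz0, mul_comm]
        exact (mul_le_mul_of_nonneg_right hy'.le (norm_nonneg _)).trans h2
    rw [integral_const_mul] at hK
    rw [norm_mul, norm_mul, Complex.norm_real, Real.norm_of_nonneg (inv_pos.2 hz0).le, mul_assoc]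
    exact mul_le_mul_of_nonneg_left hK (norm_nonneg _)
  refine ⟨fun z => -((deriv Vs z : ℝ) : ℂ) * J z - (μ - (Vs z : ℂ))⁻¹, ?_, ?_, ?_, ?_, ?_, ?_⟩
  · intro z hz
    have h1 := (hVC z).hasDerivWithinAt (s := Set.Ici 0) |>.mul (hJd z hz)
    have := hne z hz
    have h4 : -((deriv Vs z : ℝ) : ℂ) * J z - (μ - (Vs z : ℂ))⁻¹
        = -((deriv Vs z : ℝ) : ℂ) * J z + (μ - (Vs z : ℂ)) * -f z := by
      simp only [hf]
      field_simp
      try ring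
    change HasDerivWithinAt (phiSol Vs μ)
      (-((deriv Vs z : ℝ) : ℂ) * J z - (μ - (Vs z : ℂ))⁻¹) (Set.Ici 0) z
    rw [h4]
    exact h1
  · intro z hz
    exact (hV'Cc.neg.continuousWithinAt.mul (hJd z hz).continuousWithinAt).sub
      (hcV.continuousAt.inv₀ (hne z hz)).continuousWithinAt
  · intro z hz
    have := hne z hz
    rw [hphi]
    field_simp
    ring
  · have := (hV'Clim.neg.mul hJlim).sub hginf
    simpa using this
  · have := hrem.add_const (-1)
    rw [zero_add] at this
    refine this.congr' ?_
    filter_upwards [eventually_ge_atTop 0] with z hz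
    have h1 := hne z hz
    rw [integral_sub (hfi.mono_set (Set.Ioi_subset_Ioi hz))
      (hgi.mono_set (Set.Ioi_subset_Ioi hz)), hexact z hz, hphi]
    simp only [hJ]
    field_simp
    ring
  · simp [phiSol, PhiInf, hVs0]
end

section
/- Fix μ ∈ ℂ ∖ [0,∞). (a) If φ : [0,∞) → ℂ is continuously differentiable, satisfies (μ − V_s(z)) φ'(z) + V_s'(z) φ(z) = −1 for all z ≥ 0 and φ'(z) → 0 as z → ∞, then φ(z) = (μ − V_s(z)) ∫_z^∞ (μ − V_s(y))^{−2} dy for all z ≥ 0 (uniqueness of the solution with Neumann decay at infinity). (b) Consequently, the infinite-frequency eigenvalue problem — find a continuously differentiable φ with (μ − V_s) φ' + V_s' φ = −1 on [0,∞), φ(0) = 0, and φ'(z) → 0 as z → ∞ — has a solution if and only if Φ_∞(μ) = 0. -/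
open MeasureTheory Filter

/-- (a) any C¹ solution of `(μ-V_s)φ' + V_s'φ = -1` on `[0,∞)` with `φ' → 0`
at infinity equals `φ_{μ,∞}`; (b) the infinite-frequency eigenvalue problem (additionally
`φ(0) = 0`) is solvable iff `Φ_∞(μ) = 0`. -/
theorem phiSol_unique_and_eigen_iff
    (Vs : ℝ → ℝ) (As : ℝ)
    (hVs_smooth : ContDiff ℝ (⊤ : ℕ∞) Vs)
    (hVs0 : Vs 0 = 0)
    (hVs'pos : ∀ z : ℝ, 0 ≤ z → 0 < deriv Vs z)
    (hdecay : ∀ p : ℕ, Tendsto (fun z : ℝ => z ^ p * (Vs z - z - As)) atTop (nhds 0))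
    (hderiv_decay : ∀ n : ℕ, 1 ≤ n → ∀ p : ℕ,
      Tendsto (fun z : ℝ => z ^ p * iteratedDeriv n (fun w => Vs w - w) z) atTop (nhds 0))
    (μ : ℂ) (hμ : μ.im ≠ 0 ∨ μ.re < 0) :
    (∀ φ φd : ℝ → ℂ,
      (∀ z : ℝ, 0 ≤ z → HasDerivWithinAt φ (φd z) (Set.Ici 0) z) →
      ContinuousOn φd (Set.Ici 0) →
      (∀ z : ℝ, 0 ≤ z → (μ - (Vs z : ℂ)) * φd z + ((deriv Vs z : ℝ) : ℂ) * φ z = -1) →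
      Tendsto φd atTop (nhds 0) →
      ∀ z : ℝ, 0 ≤ z → φ z = phiSol Vs μ z) ∧
    ((∃ φ φd : ℝ → ℂ,
      (∀ z : ℝ, 0 ≤ z → HasDerivWithinAt φ (φd z) (Set.Ici 0) z) ∧
      ContinuousOn φd (Set.Ici 0) ∧
      (∀ z : ℝ, 0 ≤ z → (μ - (Vs z : ℂ)) * φd z + ((deriv Vs z : ℝ) : ℂ) * φ z = -1) ∧
      φ 0 = 0 ∧ Tendsto φd atTop (nhds 0)) ↔ PhiInf Vs μ = 0) := by
  have hVd : Differentiable ℝ Vs := hVs_smooth.differentiable (by simp)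
  have hVc : Continuous Vs := hVd.continuous
  have hV'c : Continuous (deriv Vs) := hVs_smooth.continuous_deriv (by simp)
  have hVnn : ∀ z : ℝ, 0 ≤ z → 0 ≤ Vs z := by
    have hm : StrictMonoOn Vs (Set.Ici 0) := by
      apply strictMonoOn_of_deriv_pos (convex_Ici 0) hVc.continuousOn
      intro x hx
      rw [interior_Ici] at hx
      exact hVs'pos x (le_of_lt hx)
    intro z hz
    rw [← hVs0]
    exact hm.monotoneOn (Set.mem_Ici.2 le_rfl) (Set.mem_Ici.2 hz) hz
  have hne : ∀ z : ℝ, 0 ≤ z → μ - (Vs z : ℂ) ≠ 0 := by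
    intro z hz h
    have h1 : μ = (Vs z : ℂ) := sub_eq_zero.1 h
    rcases hμ with h2 | h2
    · rw [h1] at h2; simp at h2
    · rw [h1] at h2
      have := hVnn z hz
      simp at h2; linarith
  -- behaviour at infinity
  have hV0 : Tendsto (fun z : ℝ => Vs z - z - As) atTop (nhds 0) := by
    simpa using hdecay 0
  have hV'1 : Tendsto (deriv Vs) atTop (nhds 1) := by
    have h := hderiv_decay 1 le_rfl 0
    have h2 : (fun z : ℝ => z ^ 0 * iteratedDeriv 1 (fun w => Vs w - w) z)
        = fun z => deriv Vs z - 1 := by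
      funext z
      rw [iteratedDeriv_one, pow_zero, one_mul]
      have := ((hVd z).hasDerivAt.sub (hasDerivAt_id z)).deriv
      exact this
    rw [h2] at h
    simpa using h.add_const 1
  have hlow : ∀ᶠ z : ℝ in atTop, z / 2 ≤ ‖μ - (Vs z : ℂ)‖ := by
    have h1 : ∀ᶠ z : ℝ in atTop, -1 < Vs z - z - As :=
      hV0.eventually (lt_mem_nhds (by norm_num))
    filter_upwards [h1, eventually_ge_atTop (2 * (‖μ‖ + |As| + 1))] with z hz1 hz2
    have h3 : ‖(Vs z : ℂ)‖ - ‖μ‖ ≤ ‖μ - (Vs z : ℂ)‖ := by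
      rw [norm_sub_rev]; exact norm_sub_norm_le _ _
    have h4 : ‖(Vs z : ℂ)‖ = |Vs z| := by simp
    have h5 := le_abs_self (Vs z)
    have h6 := neg_abs_le As
    rw [h4] at h3
    linarith
  have hnorm : Tendsto (fun z : ℝ => ‖μ - (Vs z : ℂ)‖) atTop atTop :=
    tendsto_atTop_mono' _ hlow (tendsto_id.atTop_div_const (by norm_num))
  have hinv : Tendsto (fun z : ℝ => (μ - (Vs z : ℂ))⁻¹) atTop (nhds 0) := by
    rw [tendsto_zero_iff_norm_tendsto_zero]
    simp only [norm_inv]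
    exact hnorm.inv_tendsto_atTop
  have hV'C : Tendsto (fun z : ℝ => ((deriv Vs z : ℝ) : ℂ)) atTop (nhds 1) := by
    have := (Complex.continuous_ofReal.tendsto 1).comp hV'1
    rw [Complex.ofReal_one] at this
    exact this
  have hfc : ContinuousOn (fun y : ℝ => ((μ - (Vs y : ℂ)) ^ 2)⁻¹) (Set.Ici 0) := by
    apply ContinuousOn.inv₀
    · exact (by fun_prop : Continuous (fun y : ℝ => (μ - (Vs y : ℂ)) ^ 2)).continuousOn
    · intro z hz
      exact pow_ne_zero _ (hne z hz)
  have hint0 : IntegrableOn (fun y : ℝ => ((μ - (Vs y : ℂ)) ^ 2)⁻¹) (Set.Ioi 0) := by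
    rw [← integrableOn_Ici_iff_integrableOn_Ioi]
    refine (hfc.locallyIntegrableOn measurableSet_Ici).integrableOn_of_isBigO_atTop
      (g := fun z : ℝ => z ^ (-2 : ℝ)) ?_ ?_
    · refine Asymptotics.IsBigO.of_bound 4 ?_
      filter_upwards [hlow, eventually_gt_atTop 0] with z hz hz0
      rw [norm_inv, norm_pow, Real.norm_of_nonneg (Real.rpow_nonneg hz0.le _),
        Real.rpow_neg hz0.le]
      have h1 : z ^ (2 : ℝ) = z ^ 2 := by norm_cast
      rw [h1]
      have h2 : (z / 2) ^ 2 ≤ ‖μ - (Vs z : ℂ)‖ ^ 2 := by gcongr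
      calc (‖μ - (Vs z : ℂ)‖ ^ 2)⁻¹ ≤ ((z / 2) ^ 2)⁻¹ := by gcongr
        _ = 4 * (z ^ 2)⁻¹ := by field_simp; norm_num
    · exact ⟨Set.Ioi 1, Ioi_mem_atTop 1, integrableOn_Ioi_rpow_of_lt (by norm_num) one_pos⟩
  have hint : ∀ z : ℝ, 0 ≤ z →
      IntegrableOn (fun y : ℝ => ((μ - (Vs y : ℂ)) ^ 2)⁻¹) (Set.Ioi z) :=
    fun z hz => hint0.mono_set (Set.Ioi_subset_Ioi hz)
  have hVder : ∀ z : ℝ, HasDerivAt (fun z : ℝ => μ - (Vs z : ℂ)) (-((deriv Vs z : ℝ) : ℂ)) z := by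
    intro z
    exact ((hVd z).hasDerivAt.ofReal_comp).const_sub μ
  have partA : ∀ φ φd : ℝ → ℂ,
      (∀ z : ℝ, 0 ≤ z → HasDerivWithinAt φ (φd z) (Set.Ici 0) z) →
      ContinuousOn φd (Set.Ici 0) →
      (∀ z : ℝ, 0 ≤ z → (μ - (Vs z : ℂ)) * φd z + ((deriv Vs z : ℝ) : ℂ) * φ z = -1) →
      Tendsto φd atTop (nhds 0) →
      ∀ z : ℝ, 0 ≤ z → φ z = phiSol Vs μ z := by
    intro φ φd hφ _ hode hlim z hz
    have hg0 : Tendsto (fun z : ℝ => φ z / (μ - (Vs z : ℂ))) atTop (nhds 0) := by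
      have h1 : Tendsto (fun z : ℝ => (-(μ - (Vs z : ℂ))⁻¹ - φd z) / ((deriv Vs z : ℝ) : ℂ))
          atTop (nhds ((-0 - 0) / 1)) := (hinv.neg.sub hlim).div hV'C one_ne_zero
      simp only [neg_zero, sub_zero, zero_div] at h1
      refine h1.congr' ?_
      filter_upwards [eventually_ge_atTop 0] with x hx
      have h2 := hne x hx
      have h3 : ((deriv Vs x : ℝ) : ℂ) ≠ 0 := by exact_mod_cast (hVs'pos x hx).ne'
      have h4 := hode x hx
      rw [div_eq_div_iff h3 h2]
      have h5 : (-(μ - (Vs x : ℂ))⁻¹ - φd x) * (μ - (Vs x : ℂ))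
          = -((μ - (Vs x : ℂ))⁻¹ * (μ - (Vs x : ℂ))) - (μ - (Vs x : ℂ)) * φd x := by ring
      rw [h5, inv_mul_cancel₀ h2]
      linear_combination -h4
    have hgd : ∀ x ∈ Set.Ioi z, HasDerivAt (fun z : ℝ => φ z / (μ - (Vs z : ℂ)))
        (-((μ - (Vs x : ℂ)) ^ 2)⁻¹) x := by
      intro x hx
      have hx0 : 0 < x := lt_of_le_of_lt hz hx
      have h1 := ((hφ x hx0.le).hasDerivAt (Ici_mem_nhds hx0)).div (hVder x) (hne x hx0.le)
      have h4 := hode x hx0.le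
      have h5 : φd x * (μ - (Vs x : ℂ)) - φ x * -((deriv Vs x : ℝ) : ℂ) = -1 := by
        linear_combination h4
      rw [h5, neg_div, one_div] at h1
      exact h1
    have hgc : ContinuousWithinAt (fun z : ℝ => φ z / (μ - (Vs z : ℂ))) (Set.Ici z) z := by
      refine ContinuousWithinAt.div ?_ ?_ (hne z hz)
      · exact (hφ z hz).continuousWithinAt.mono (Set.Ici_subset_Ici.2 hz)
      · exact (hVder z).continuousAt.continuousWithinAt
    have key := integral_Ioi_of_hasDerivAt_of_tendsto hgc hgd (hint z hz).neg hg0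
    rw [integral_neg, zero_sub, neg_inj] at key
    unfold phiSol
    rw [key, mul_div_cancel₀ _ (hne z hz)]
  refine ⟨partA, ?_, ?_⟩
  · rintro ⟨φ, φd, h1, h2, h3, h4, h5⟩
    have h := partA φ φd h1 h2 h3 h5 0 le_rfl
    rw [h4] at h
    unfold phiSol at h
    unfold PhiInf
    rw [h, hVs0]
    simp
  · intro hPhi
    set f : ℝ → ℂ := fun y => ((μ - (Vs (max y 0) : ℂ)) ^ 2)⁻¹ with hf
    have hfcont : Continuous f := by
      apply Continuous.inv₀
      · fun_prop
      · intro z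
        exact pow_ne_zero _ (hne _ (le_max_right _ _))
    have hfeq : ∀ y : ℝ, 0 ≤ y → f y = ((μ - (Vs y : ℂ)) ^ 2)⁻¹ := by
      intro y hy
      simp only [hf, max_eq_left hy]
    have hfint : IntegrableOn f (Set.Ioi 0) :=
      hint0.congr_fun (fun y hy => (hfeq y (le_of_lt hy)).symm) measurableSet_Ioi
    set I : ℂ := ∫ y in Set.Ioi (0 : ℝ), f y with hI
    have hIeq : I = ∫ y in Set.Ioi (0 : ℝ), ((μ - (Vs y : ℂ)) ^ 2)⁻¹ :=
      setIntegral_congr_fun measurableSet_Ioi (fun y hy => hfeq y (le_of_lt hy))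
    set J : ℝ → ℂ := fun z => I - ∫ y in (0 : ℝ)..z, f y with hJ
    have hJd : ∀ z, HasDerivAt J (-(f z)) z := fun z =>
      (hfcont.integral_hasStrictDerivAt 0 z).hasDerivAt.const_sub I
    have hJc : Continuous J := continuous_iff_continuousAt.2 fun z => (hJd z).continuousAt
    have hJ0 : Tendsto J atTop (nhds 0) := by
      have h := (intervalIntegral_tendsto_integral_Ioi 0 hfint tendsto_id).const_sub I
      simpa [hJ, hI] using h
    refine ⟨fun z => (μ - (Vs z : ℂ)) * J z,
      fun z => -((deriv Vs z : ℝ) : ℂ) * J z + (μ - (Vs z : ℂ)) * (-(f z)), ?_, ?_, ?_, ?_, ?_⟩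
    · intro z _
      exact ((hVder z).mul (hJd z)).hasDerivWithinAt
    · apply Continuous.continuousOn
      fun_prop
    · intro z hz
      have h2 := hne z hz
      simp only [hfeq z hz]
      field_simp
      ring
    · have : J 0 = I := by simp [hJ]
      simp only [this, hVs0, hIeq]
      simpa [PhiInf] using hPhi
    · have h : Tendsto (fun z : ℝ => -((deriv Vs z : ℝ) : ℂ) * J z + -(μ - (Vs z : ℂ))⁻¹)
          atTop (nhds (-1 * 0 + -0)) := (hV'C.neg.mul hJ0).add hinv.neg
      simp only [mul_zero, neg_zero, add_zero] at h
      refine h.congr' ?_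
      filter_upwards [eventually_ge_atTop 0] with z hz
      have h2 := hne z hz
      rw [hfeq z hz]
      field_simp
end

section
/- For any 0 < ρ₀ < R, as b → 0⁺ the functions a ↦ Φ_∞(a + ib) converge uniformly on the interval [ρ₀, R] to the function a ↦ −1/V_s'(0) + a · PV∫₀^∞ g(u)/(a−u) du − iπ a g(a). (In particular the principal value exists for every a > 0.) -/
open MeasureTheory Filter

/-- `HasPV g a L` : the principal value `PV ∫₀^∞ g(u)/(a-u) du` exists and equals `L`. -/
def HasPV (g : ℝ → ℝ) (a L : ℝ) : Prop :=
  Filter.Tendsto (fun ε : ℝ => ∫ u in {u : ℝ | 0 < u ∧ ε < |u - a|}, g u / (a - u))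
    (nhdsWithin 0 (Set.Ioi 0)) (nhds L)


namespace PhiAux

lemma bdd_of_tendsto {f : ℝ → ℝ} (hf : ContinuousOn f (Set.Ici 0)) {l : ℝ}
    (hl : Tendsto f atTop (nhds l)) : ∃ C : ℝ, 0 < C ∧ ∀ x, 0 ≤ x → |f x| ≤ C := by
  have h1 : ∀ᶠ x in atTop, |f x| ≤ |l| + 1 := by
    have := hl.abs.eventually (gt_mem_nhds (lt_add_one |l|))
    filter_upwards [this] with x hx using hx.le
  obtain ⟨N, hN⟩ := eventually_atTop.1 h1
  obtain ⟨C, hC⟩ := (isCompact_Icc (a := (0:ℝ)) (b := N)).exists_bound_of_continuousOn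
    (hf.mono Set.Icc_subset_Ici_self)
  refine ⟨max C (|l| + 1), lt_max_of_lt_right (by positivity), fun x hx => ?_⟩
  rcases le_total x N with h | h
  · exact (hC x ⟨hx, h⟩).trans (le_max_left _ _)
  · exact (hN x h).trans (le_max_right _ _)

lemma integral_symm {f : ℝ → ℝ} (hf : Integrable f) :
    ∫ t, f t = ∫ t in Set.Ioi (0:ℝ), (f t + f (-t)) := by
  rw [integral_add hf.integrableOn hf.comp_neg.integrableOn, integral_comp_neg_Ioi,
    ← integral_add_compl (measurableSet_Ioi (a := (0:ℝ))) hf, Set.compl_Ioi, neg_zero]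

lemma integrable_poisson {b : ℝ} (hb : 0 < b) :
    Integrable (fun t : ℝ => b / (t ^ 2 + b ^ 2)) := by
  have h := (integrable_inv_one_add_sq.comp_div hb.ne').const_mul b⁻¹
  refine h.congr (Eventually.of_forall fun t => ?_)
  simp only
  field_simp
  ring

lemma integral_poisson {b : ℝ} (hb : 0 < b) :
    ∫ t : ℝ, b / (t ^ 2 + b ^ 2) = Real.pi := by
  have h := Measure.integral_comp_div (fun x : ℝ => (1 + x ^ 2)⁻¹) b
  rw [integral_univ_inv_one_add_sq, abs_of_pos hb, smul_eq_mul] at h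
  have : ∀ t : ℝ, b / (t ^ 2 + b ^ 2) = b⁻¹ * (1 + (t / b) ^ 2)⁻¹ := by
    intro t
    field_simp
    ring
  simp_rw [this]
  rw [integral_const_mul, h]
  field_simp

noncomputable def eb (b : ℝ) : ℝ := ∫ t : ℝ, min |t| 1 * (b / (t ^ 2 + b ^ 2))

lemma integrable_eb {b : ℝ} (hb : 0 < b) :
    Integrable (fun t : ℝ => min |t| 1 * (b / (t ^ 2 + b ^ 2))) := by
  refine (integrable_poisson hb).bdd_mul (c := 1) ?_ ?_
  · exact (by fun_prop : Continuous (fun t : ℝ => min |t| 1)).aestronglyMeasurable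
  · refine Eventually.of_forall fun t => ?_
    rw [Real.norm_eq_abs, abs_of_nonneg (by positivity)]
    exact min_le_right _ _

lemma tendsto_eb : Tendsto eb (nhdsWithin 0 (Set.Ioi 0)) (nhds 0) := by
  have h1 : ∀ b : ℝ, 0 < b → eb b = ∫ s : ℝ, min |b * s| 1 * (1 + s ^ 2)⁻¹ := by
    intro b hb
    have h := Measure.integral_comp_div (fun s : ℝ => min |b * s| 1 * (1 + s ^ 2)⁻¹) b
    rw [abs_of_pos hb, smul_eq_mul] at h
    have h2 : ∀ t : ℝ, min |t| 1 * (b / (t ^ 2 + b ^ 2))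
        = b⁻¹ * (min |b * (t / b)| 1 * (1 + (t / b) ^ 2)⁻¹) := by
      intro t
      rw [mul_div_cancel₀ t hb.ne']
      field_simp
      ring
    unfold eb
    simp_rw [h2]
    rw [integral_const_mul, h]
    field_simp
  have h3 : Tendsto (fun b : ℝ => ∫ s : ℝ, min |b * s| 1 * (1 + s ^ 2)⁻¹)
      (nhdsWithin 0 (Set.Ioi 0)) (nhds (∫ s : ℝ, (0:ℝ))) := by
    refine tendsto_integral_filter_of_dominated_convergence (fun s : ℝ => (1 + s ^ 2)⁻¹) ?_ ?_
      integrable_inv_one_add_sq ?_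
    · refine Eventually.of_forall fun b => ?_
      refine Continuous.aestronglyMeasurable ?_
      have : ∀ s : ℝ, 1 + s ^ 2 ≠ 0 := fun s => by positivity
      exact Continuous.mul (by fun_prop) (Continuous.inv₀ (by fun_prop) this)
    · refine Eventually.of_forall fun b => Eventually.of_forall fun s => ?_
      rw [Real.norm_eq_abs, abs_of_nonneg (by positivity)]
      exact mul_le_of_le_one_left (by positivity) (min_le_right _ _)
    · refine Eventually.of_forall fun s => ?_
      have hc : Continuous (fun b : ℝ => min |b * s| 1 * (1 + s ^ 2)⁻¹) := by fun_prop
      have := hc.tendsto 0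
      simp only [zero_mul, abs_zero] at this
      rw [min_eq_left zero_le_one, zero_mul] at this
      exact this.mono_left nhdsWithin_le_nhds
  rw [integral_zero] at h3
  refine h3.congr' ?_
  filter_upwards [self_mem_nhdsWithin] with b hb using (h1 b hb).symm

noncomputable def PV (G : ℝ → ℝ) (a : ℝ) : ℝ :=
  ∫ t in Set.Ioi (0:ℝ), (G (a - t) - G (a + t)) / t

lemma D_bound {G : ℝ → ℝ} {a C : ℝ} (hC : ∀ t, |G (a - t) - G a| ≤ C * min |t| 1)
    {t : ℝ} (ht : 0 < t) : |(G (a - t) - G (a + t)) / t| ≤ 2 * C := by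
  have h1 := hC t
  have h2 := hC (-t)
  rw [sub_neg_eq_add, abs_neg] at h2
  have h0 : 0 ≤ C := by
    have := hC 1
    simp at this
    exact (abs_nonneg _).trans this
  have h3 : C * min |t| 1 ≤ C * t :=
    mul_le_mul_of_nonneg_left ((min_le_left _ _).trans (abs_of_pos ht).le) h0
  rw [abs_div, abs_of_pos ht, div_le_iff₀ ht]
  have : |G (a - t) - G (a + t)| ≤ |G (a - t) - G a| + |G (a + t) - G a| := by
    have := abs_sub (G (a - t) - G a) (G (a + t) - G a)
    simpa using this
  linarith

lemma integrable_shift {G : ℝ → ℝ} (hG : Integrable G) (a : ℝ) :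
    Integrable (fun t => G (a - t)) := hG.comp_sub_left a

lemma D_integrable {G : ℝ → ℝ} (hG : Integrable G) {a C : ℝ}
    (hC : ∀ t, |G (a - t) - G a| ≤ C * min |t| 1) :
    IntegrableOn (fun t => (G (a - t) - G (a + t)) / t) (Set.Ioi (0:ℝ)) := by
  have hi : Integrable (fun t => G (a - t) - G (a + t)) :=
    (hG.comp_sub_left a).sub (hG.comp_add_left a)
  have hm : AEStronglyMeasurable (fun t => (G (a - t) - G (a + t)) / t) volume :=
    hi.aestronglyMeasurable.div₀ (measurable_id.aestronglyMeasurable)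
  have : Set.Ioi (0:ℝ) = Set.Ioc 0 1 ∪ Set.Ioi 1 := by
    rw [Set.Ioc_union_Ioi_eq_Ioi zero_le_one]
  rw [this]
  refine IntegrableOn.union ?_ ?_
  · refine Integrable.mono' (g := fun _ => 2 * C) continuous_const.integrableOn_Ioc hm.restrict ?_
    filter_upwards [ae_restrict_mem measurableSet_Ioc] with t ht
    exact D_bound hC ht.1
  · refine Integrable.mono' hi.norm.integrableOn hm.restrict ?_
    filter_upwards [ae_restrict_mem measurableSet_Ioi] with t ht
    rw [norm_div]
    have : (1:ℝ) < t := ht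
    refine div_le_self (norm_nonneg _) ?_
    rw [Real.norm_eq_abs, abs_of_pos (by linarith)]
    exact this.le

lemma tendsto_PV {G : ℝ → ℝ} (hG : Integrable G) {a C : ℝ}
    (hC : ∀ t, |G (a - t) - G a| ≤ C * min |t| 1) :
    Tendsto (fun ε : ℝ => ∫ u in {u : ℝ | ε < |u - a|}, G u / (a - u))
      (nhdsWithin 0 (Set.Ioi 0)) (nhds (PV G a)) := by
  have hD := D_integrable hG hC
  have key : ∀ ε : ℝ, 0 < ε → ∫ u in {u : ℝ | ε < |u - a|}, G u / (a - u)
      = ∫ t in Set.Ioi (0:ℝ), if ε < t then (G (a - t) - G (a + t)) / t else 0 := by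
    intro ε hε
    have hms : MeasurableSet {u : ℝ | ε < |u - a|} :=
      measurableSet_lt measurable_const (by fun_prop)
    rw [← integral_indicator hms]
    rw [← integral_sub_left_eq_self _ volume a]
    have hfi : Integrable (fun t => Set.indicator {u : ℝ | ε < |u - a|}
        (fun u => G u / (a - u)) (a - t)) := by
      refine Integrable.comp_sub_left (f := Set.indicator {u : ℝ | ε < |u - a|}
        (fun u => G u / (a - u))) ?_ a
      rw [integrable_indicator_iff hms]
      refine Integrable.mono' (hG.norm.const_mul ε⁻¹).integrableOn ?_ ?_
      · exact (hG.aestronglyMeasurable.div₀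
          (by fun_prop : Measurable fun u : ℝ => a - u).aestronglyMeasurable).restrict
      · filter_upwards [ae_restrict_mem hms] with u hu
        have hu' : ε < |u - a| := hu
        rw [norm_div, div_eq_inv_mul, Real.norm_eq_abs (a - u), abs_sub_comm]
        gcongr
    rw [integral_symm hfi]
    refine setIntegral_congr_fun measurableSet_Ioi fun t ht => ?_
    have ht' : (0:ℝ) < t := ht
    simp only [Set.indicator, Set.mem_ofPred_eq]
    rw [show a - t - a = -t by ring, show a - -t - a = t by ring, abs_neg, abs_of_pos ht']
    split_ifs
    · rw [show a - (a - t) = t by ring, show a - (a - -t) = -t by ring, sub_neg_eq_add, div_neg]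
      ring
    · simp
  have h3 : Tendsto (fun ε : ℝ => ∫ t in Set.Ioi (0:ℝ),
      if ε < t then (G (a - t) - G (a + t)) / t else 0)
      (nhdsWithin 0 (Set.Ioi 0)) (nhds (PV G a)) := by
    refine tendsto_integral_filter_of_dominated_convergence
      (fun t => |(G (a - t) - G (a + t)) / t|) ?_ ?_ hD.abs ?_
    · refine Eventually.of_forall fun ε => ?_
      exact (hD.aestronglyMeasurable.indicator (measurableSet_Ioi (a := ε)))
    · refine Eventually.of_forall fun ε => Eventually.of_forall fun t => ?_
      split_ifs
      · exact le_rfl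
      · simp
    · filter_upwards [ae_restrict_mem measurableSet_Ioi] with t ht
      refine tendsto_const_nhds.congr' ?_
      have : ∀ᶠ ε in nhdsWithin (0:ℝ) (Set.Ioi 0), ε < t :=
        nhdsWithin_le_nhds (gt_mem_nhds ht)
      filter_upwards [this] with ε hε
      rw [if_pos hε]
  refine h3.congr' ?_
  filter_upwards [self_mem_nhdsWithin] with ε hε using (key ε hε).symm

noncomputable def J (G : ℝ → ℝ) (a b : ℝ) : ℂ :=
  ∫ u : ℝ, (G u : ℂ) / ((a : ℂ) + b * Complex.I - u)

lemma J_est {G : ℝ → ℝ} (hG : Integrable G) {a C b : ℝ} (hb : 0 < b)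
    (hC : ∀ t, |G (a - t) - G a| ≤ C * min |t| 1) :
    ‖J G a b - ((PV G a : ℂ) - Real.pi * G a * Complex.I)‖
      ≤ 2 * C * (b * Real.pi) + C * eb b := by
  have hD := D_integrable hG hC
  have hsh := hG.comp_sub_left a
  have hpos : ∀ t : ℝ, 0 < t ^ 2 + b ^ 2 := fun t => by positivity
  have hAi : Integrable (fun t => t / (t ^ 2 + b ^ 2) * G (a - t)) := by
    refine hsh.bdd_mul (c := b⁻¹) ?_ ?_
    · exact (Continuous.div (by fun_prop) (by fun_prop)
        (fun t => (hpos t).ne')).aestronglyMeasurable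
    · refine Eventually.of_forall fun t => ?_
      rw [norm_div, Real.norm_eq_abs, Real.norm_eq_abs, abs_of_pos (hpos t),
        div_le_iff₀ (hpos t), inv_mul_eq_div, le_div_iff₀ hb]
      nlinarith [sq_abs t, sq_nonneg (|t| - b)]
  have hBi : Integrable (fun t => b / (t ^ 2 + b ^ 2) * G (a - t)) := by
    refine hsh.bdd_mul (c := b⁻¹) ?_ ?_
    · exact (Continuous.div (by fun_prop) (by fun_prop)
        (fun t => (hpos t).ne')).aestronglyMeasurable
    · refine Eventually.of_forall fun t => ?_
      rw [norm_div, Real.norm_eq_abs, Real.norm_eq_abs, abs_of_pos (hpos t), abs_of_pos hb,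
        div_le_iff₀ (hpos t), inv_mul_eq_div, le_div_iff₀ hb]
      nlinarith
  have hJ : J G a b = ((∫ t, t / (t ^ 2 + b ^ 2) * G (a - t) : ℝ) : ℂ)
      - ((∫ t, b / (t ^ 2 + b ^ 2) * G (a - t) : ℝ) : ℂ) * Complex.I := by
    unfold J
    rw [← integral_sub_left_eq_self _ volume a, ← integral_complex_ofReal, ← integral_complex_ofReal,
      ← integral_mul_const, ← integral_sub hAi.ofReal (hBi.ofReal.mul_const _)]
    refine integral_congr_ae (Eventually.of_forall fun t => ?_)
    have hne : (t:ℂ) ^ 2 + (b:ℂ) ^ 2 ≠ 0 := by exact_mod_cast (hpos t).ne'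
    have hfac : ((t:ℂ) + b * Complex.I) * (t - b * Complex.I) = (t:ℂ) ^ 2 + (b:ℂ) ^ 2 := by
      ring_nf
      simp
    have hne2 : (t:ℂ) + b * Complex.I ≠ 0 := fun h => hne (by rw [← hfac, h, zero_mul])
    push_cast
    rw [show (a:ℂ) + b * Complex.I - (a - t) = t + b * Complex.I by ring]
    rw [← hfac] at hne ⊢
    have hne3 : (t:ℂ) - b * Complex.I ≠ 0 := right_ne_zero_of_mul hne
    field_simp
  have hA : |(∫ t, t / (t ^ 2 + b ^ 2) * G (a - t)) - PV G a| ≤ 2 * C * (b * Real.pi) := by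
    have hA1 := integral_symm hAi
    have hsi : IntegrableOn (fun t => t / (t ^ 2 + b ^ 2) * G (a - t)
      + -t / ((-t) ^ 2 + b ^ 2) * G (a - -t)) (Set.Ioi 0) :=
      (hAi.add hAi.comp_neg).integrableOn
    rw [hA1, PV, ← integral_sub hsi hD]
    rw [← integral_poisson hb, ← integral_const_mul, ← integral_const_mul]
    have h0 : 0 ≤ 2 * C := (abs_nonneg _).trans (D_bound hC one_pos)
    have hint : Integrable (fun t : ℝ => 2 * C * (b * (b / (t ^ 2 + b ^ 2)))) :=
      ((integrable_poisson hb).const_mul _).const_mul _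
    rw [← Real.norm_eq_abs]
    refine (norm_integral_le_of_norm_le hint.integrableOn (g := fun t : ℝ =>
      2 * C * (b * (b / (t ^ 2 + b ^ 2)))) ?_).trans ?_
    · filter_upwards [ae_restrict_mem measurableSet_Ioi] with t ht
      have ht' : (0:ℝ) < t := ht
      have e : t / (t ^ 2 + b ^ 2) * G (a - t) + -t / ((-t) ^ 2 + b ^ 2) * G (a - -t)
          - (G (a - t) - G (a + t)) / t
          = -((G (a - t) - G (a + t)) / t * (b * (b / (t ^ 2 + b ^ 2)))) := by
        rw [neg_sq, sub_neg_eq_add]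
        have := (hpos t).ne'
        field_simp
        ring
      rw [e, norm_neg, norm_mul, Real.norm_eq_abs, Real.norm_eq_abs,
        abs_of_nonneg (a := b * (b / (t ^ 2 + b ^ 2))) (by positivity)]
      exact mul_le_mul_of_nonneg_right (D_bound hC ht') (by positivity)
    · exact setIntegral_le_integral hint (Eventually.of_forall fun t => by
        simp only [Pi.zero_apply]; positivity)
  have hB : |(∫ t, b / (t ^ 2 + b ^ 2) * G (a - t)) - Real.pi * G a| ≤ C * eb b := by
    rw [← integral_poisson hb, ← integral_mul_const,
      ← integral_sub hBi ((integrable_poisson hb).mul_const _), eb, ← integral_const_mul]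
    rw [← Real.norm_eq_abs]
    refine norm_integral_le_of_norm_le ((integrable_eb hb).const_mul C) ?_
    refine Eventually.of_forall fun t => ?_
    rw [← mul_sub, norm_mul, Real.norm_eq_abs, Real.norm_eq_abs,
      abs_of_nonneg (a := (b / (t ^ 2 + b ^ 2))) (by positivity), ← mul_assoc, mul_comm]
    exact mul_le_mul_of_nonneg_right (hC t) (by positivity)
  rw [hJ]
  have e : ∀ x y p q : ℝ, ((x:ℂ) - y * Complex.I) - ((p:ℂ) - q * Complex.I)
      = ((x - p : ℝ) : ℂ) - ((y - q : ℝ) : ℂ) * Complex.I := by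
    intros; push_cast; ring
  rw [← Complex.ofReal_mul, e]
  refine (norm_sub_le _ _).trans ?_
  rw [norm_mul, Complex.norm_I, mul_one, Complex.norm_real, Complex.norm_real]
  exact add_le_add hA hB

lemma J_one {G : ℝ → ℝ} (hG : Integrable G) (a : ℝ) : ‖J G a 1‖ ≤ ∫ u, |G u| := by
  refine norm_integral_le_of_norm_le hG.abs (Eventually.of_forall fun u => ?_)
  rw [norm_div, Complex.norm_real]
  refine div_le_self (norm_nonneg _) ?_
  have := Complex.abs_im_le_norm ((a : ℂ) + (1:ℝ) * Complex.I - u)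
  simpa using this

/-- uniform convergence -/
lemma unif {G : ℝ → ℝ} (hG : Integrable G) {ρ R C : ℝ} (hρ : 0 < ρ) 
    (hC : ∀ a, ρ ≤ a → ∀ t, |G (a - t) - G a| ≤ C * min |t| 1) (k : ℂ) :
    TendstoUniformlyOn (fun b a : ℝ => k + ((a : ℂ) + b * Complex.I) * J G a b)
      (fun a : ℝ => k + (a : ℂ) * ((PV G a : ℂ) - Real.pi * G a * Complex.I))
      (nhdsWithin 0 (Set.Ioi 0)) (Set.Icc ρ R) := by
  set E : ℝ → ℝ := fun b => 2 * C * (b * Real.pi) + C * eb b with hE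
  have hEt : Tendsto E (nhdsWithin 0 (Set.Ioi 0)) (nhds 0) := by
    have h1 : Tendsto (fun b : ℝ => 2 * C * (b * Real.pi)) (nhdsWithin 0 (Set.Ioi 0)) (nhds 0) := by
      have : Continuous (fun b : ℝ => 2 * C * (b * Real.pi)) := by fun_prop
      simpa using (this.tendsto 0).mono_left nhdsWithin_le_nhds
    simpa using h1.add (tendsto_eb.const_mul C)
  set L : ℝ := (∫ u, |G u|) + E 1 with hL
  have hid : Tendsto (fun b : ℝ => b) (nhdsWithin 0 (Set.Ioi 0)) (nhds 0) :=
    tendsto_id.mono_left nhdsWithin_le_nhds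
  have hfin : Tendsto (fun b : ℝ => (R + b) * E b + b * L) (nhdsWithin 0 (Set.Ioi 0)) (nhds 0) := by
    simpa using ((tendsto_const_nhds (x := R)).add hid).mul hEt |>.add (hid.mul_const L)
  rw [Metric.tendstoUniformlyOn_iff]
  intro ε hε
  filter_upwards [hfin.eventually (gt_mem_nhds hε), self_mem_nhdsWithin] with b hb hb0 a ha
  have hb0' : 0 < b := hb0
  refine lt_of_le_of_lt ?_ hb
  set l : ℂ := (PV G a : ℂ) - Real.pi * G a * Complex.I
  have h1 : ‖J G a b - l‖ ≤ E b := J_est hG hb0' (hC a ha.1)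
  have h2 : ‖J G a 1 - l‖ ≤ E 1 := J_est hG one_pos (hC a ha.1)
  have h3 := J_one hG a
  have h4 : ‖l‖ ≤ L := by
    have : l = J G a 1 - (J G a 1 - l) := by ring
    rw [this]
    exact (norm_sub_le _ _).trans (add_le_add h3 h2)
  rw [dist_comm, dist_eq_norm]
  have e : k + ((a : ℂ) + b * Complex.I) * J G a b - (k + a * l)
      = ((a : ℂ) + b * Complex.I) * (J G a b - l) + b * Complex.I * l := by ring
  rw [e]
  refine (norm_add_le _ _).trans ?_
  have h5 : ‖(b:ℂ) * Complex.I‖ = b := by simp [abs_of_pos hb0']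
  have h6 : ‖(a:ℂ) + (b:ℂ) * Complex.I‖ ≤ R + b := by
    refine (norm_add_le _ _).trans ?_
    rw [h5, Complex.norm_real, Real.norm_eq_abs, abs_of_pos (hρ.trans_le ha.1)]
    linarith [ha.2]
  rw [norm_mul, norm_mul, h5]
  have : 0 ≤ R + b := (norm_nonneg _).trans h6
  gcongr

end PhiAux

/-- as `b → 0⁺` uniform convergence -/
theorem PhiInf_uniform_boundary_limit
    (Vs : ℝ → ℝ) (As : ℝ)
    (hVs_smooth : ContDiff ℝ (⊤ : ℕ∞) Vs)
    (hVs0 : Vs 0 = 0)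
    (hVs'pos : ∀ z : ℝ, 0 ≤ z → 0 < deriv Vs z)
    (hdecay : ∀ p : ℕ, Tendsto (fun z : ℝ => z ^ p * (Vs z - z - As)) atTop (nhds 0))
    (hderiv_decay : ∀ n : ℕ, 1 ≤ n → ∀ p : ℕ,
      Tendsto (fun z : ℝ => z ^ p * iteratedDeriv n (fun w => Vs w - w) z) atTop (nhds 0))
    (g : ℝ → ℝ)
    (hg : ∀ z : ℝ, 0 ≤ z → g (Vs z) = deriv (deriv Vs) z / (deriv Vs z) ^ 3)
    :
    ∃ P : ℝ → ℝ, (∀ a : ℝ, 0 < a → HasPV g a (P a)) ∧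
      ∀ ρ₀ R : ℝ, 0 < ρ₀ → ρ₀ < R →
        TendstoUniformlyOn
          (fun (b : ℝ) (a : ℝ) => PhiInf Vs ((a : ℂ) + (b : ℂ) * Complex.I))
          (fun a : ℝ => ((-1 / deriv Vs 0 + a * P a : ℝ) : ℂ)
            - (Real.pi : ℂ) * (a : ℂ) * (g a : ℂ) * Complex.I)
          (nhdsWithin 0 (Set.Ioi 0)) (Set.Icc ρ₀ R) := by
  -- derivatives
  have hs0 : ContDiff ℝ 3 Vs := hVs_smooth.of_le (WithTop.coe_le_coe.2 (le_top : ((3:ℕ∞)) ≤ ⊤))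
  obtain ⟨V1, hV1⟩ : ∃ V1, V1 = deriv Vs := ⟨_, rfl⟩
  obtain ⟨V2, hV2⟩ : ∃ V2, V2 = deriv V1 := ⟨_, rfl⟩
  obtain ⟨V3, hV3⟩ : ∃ V3, V3 = deriv V2 := ⟨_, rfl⟩
  have hs1 : ContDiff ℝ 2 V1 := by
    rw [hV1]; exact (contDiff_succ_iff_deriv (n := 2)).1 (by norm_num; exact hs0) |>.2.2
  have hs2 : ContDiff ℝ 1 V2 := by
    rw [hV2]; exact (contDiff_succ_iff_deriv (n := 1)).1 (by norm_num; exact hs1) |>.2.2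
  have hs3 : ContDiff ℝ 0 V3 := by
    rw [hV3]; exact (contDiff_succ_iff_deriv (n := 0)).1 (by norm_num; exact hs2) |>.2.2
  have c0 := hs0.continuous
  have c1 := hs1.continuous
  have c2 := hs2.continuous
  have c3 := hs3.continuous
  have d0 : ∀ z, HasDerivAt Vs (V1 z) z := fun z => by
    rw [hV1]; exact (hs0.differentiable (by norm_num) z).hasDerivAt
  have d1 : ∀ z, HasDerivAt V1 (V2 z) z := fun z => by
    rw [hV2]; exact (hs1.differentiable (by norm_num) z).hasDerivAt
  have d2 : ∀ z, HasDerivAt V2 (V3 z) z := fun z => by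
    rw [hV3]; exact (hs2.differentiable (by norm_num) z).hasDerivAt
  have i1 : iteratedDeriv 1 (fun w => Vs w - w) = fun z => V1 z - 1 := by
    rw [iteratedDeriv_one]; ext z; exact ((d0 z).sub (hasDerivAt_id z)).deriv
  have i2 : iteratedDeriv 2 (fun w => Vs w - w) = V2 := by
    rw [iteratedDeriv_succ, i1]; ext z; exact ((d1 z).sub_const 1).deriv
  have i3 : iteratedDeriv 3 (fun w => Vs w - w) = V3 := by
    rw [iteratedDeriv_succ, i2, hV3]
  rw [← hV1] at hVs'pos hg ⊢
  rw [← hV2] at hg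
  have t1 : Tendsto V1 atTop (nhds 1) := by
    have := hderiv_decay 1 le_rfl 0
    simp only [i1, pow_zero, one_mul] at this
    simpa using this.add_const 1
  have t2 : Tendsto V2 atTop (nhds 0) := by
    simpa only [i2, pow_zero, one_mul] using hderiv_decay 2 (by norm_num) 0
  have t22 : Tendsto (fun z => z ^ 2 * V2 z) atTop (nhds 0) := by
    simpa only [i2] using hderiv_decay 2 (by norm_num) 2
  have t3 : Tendsto V3 atTop (nhds 0) := by
    simpa only [i3, pow_zero, one_mul] using hderiv_decay 3 (by norm_num) 0
  have hne : ∀ z ∈ Set.Ici (0:ℝ), V1 z ≠ 0 := fun z hz => (hVs'pos z hz).ne'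
  -- lower bound on V1
  obtain ⟨c, hc, hcV⟩ : ∃ c : ℝ, 0 < c ∧ ∀ z, 0 ≤ z → c ≤ V1 z := by
    obtain ⟨K, hK, h⟩ := PhiAux.bdd_of_tendsto (f := fun z => (V1 z)⁻¹)
      (c1.continuousOn.inv₀ hne) (t1.inv₀ one_ne_zero)
    refine ⟨K⁻¹, inv_pos.2 hK, fun z hz => ?_⟩
    have h1 := h z hz
    have h2 := hVs'pos z hz
    rw [abs_of_pos (inv_pos.2 h2)] at h1
    exact inv_le_of_inv_le₀ h2 h1
  have hexp : ∀ x y, 0 ≤ x → x ≤ y → c * (y - x) ≤ Vs y - Vs x := by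
    intro x y hx hxy
    refine Convex.mul_sub_le_image_sub_of_le_deriv (convex_Ici (0:ℝ)) c0.continuousOn
      (fun z _ => (d0 z).differentiableAt.differentiableWithinAt) ?_ x hx y (hx.trans hxy) hxy
    intro z hz
    rw [interior_Ici] at hz
    rw [(d0 z).deriv]
    exact hcV z (le_of_lt hz)
  have hlow : ∀ y, 0 ≤ y → c * y ≤ Vs y := fun y hy => by
    simpa [hVs0] using hexp 0 y le_rfl hy
  have hmono : StrictMonoOn Vs (Set.Ici 0) := by
    intro x hx y hy hxy
    have := hexp x y hx hxy.le
    have : 0 < c * (y - x) := mul_pos hc (sub_pos.2 hxy)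
    linarith
  have hsurj : ∀ u, 0 ≤ u → ∃ z, 0 ≤ z ∧ Vs z = u := by
    intro u hu
    have hz : 0 ≤ u / c := by positivity
    have h1 := hlow (u / c) hz
    rw [mul_div_cancel₀ u hc.ne'] at h1
    obtain ⟨z, hz, h⟩ := intermediate_value_Icc hz c0.continuousOn
      (show u ∈ Set.Icc (Vs 0) (Vs (u / c)) from ⟨by rw [hVs0]; exact hu, h1⟩)
    exact ⟨z, hz.1, h⟩
  have himg : Vs '' Set.Ioi 0 = Set.Ioi 0 := by
    ext u
    constructor
    · rintro ⟨z, hz, rfl⟩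
      have hz' : (0:ℝ) < z := hz
      exact (mul_pos hc hz').trans_le (hlow z hz'.le)
    · intro hu
      have hu' : (0:ℝ) < u := hu
      obtain ⟨z, hz, h⟩ := hsurj u hu'.le
      refine ⟨z, lt_of_le_of_ne hz ?_, h⟩
      rintro rfl
      rw [hVs0] at h
      exact hu'.ne h
  have hinj : Set.InjOn Vs (Set.Ioi 0) := hmono.injOn.mono Set.Ioi_subset_Ici_self
  -- bounds on g
  obtain ⟨M, hM, hgM⟩ : ∃ M : ℝ, 0 < M ∧ ∀ u, 0 ≤ u → |g u| ≤ M := by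
    obtain ⟨M, hM, h⟩ := PhiAux.bdd_of_tendsto (f := fun z => V2 z / V1 z ^ 3)
      (c2.continuousOn.div (c1.pow 3).continuousOn (fun z hz => pow_ne_zero 3 (hne z hz)))
      (t2.div (t1.pow 3) (by norm_num))
    refine ⟨M, hM, fun u hu => ?_⟩
    obtain ⟨z, hz, rfl⟩ := hsurj u hu
    rw [hg z hz]
    exact h z hz
  obtain ⟨K, hK, hgK⟩ : ∃ K : ℝ, 0 < K ∧ ∀ u v, 0 ≤ u → 0 ≤ v → |g u - g v| ≤ K * |u - v| := by
    obtain ⟨K, hK, h⟩ := PhiAux.bdd_of_tendsto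
      (f := fun z => (V3 z * V1 z ^ 3 - V2 z * (3 * V1 z ^ 2 * V2 z)) / (V1 z ^ 3) ^ 2)
      (l := (0 * 1 ^ 3 - 0 * (3 * 1 ^ 2 * 0)) / (1 ^ 3) ^ 2)
      (ContinuousOn.div (by fun_prop) (by fun_prop)
        (fun z hz => pow_ne_zero 2 (pow_ne_zero 3 (hne z hz))))
      (((t3.mul (t1.pow 3)).sub (t2.mul (((t1.pow 2).const_mul 3).mul t2))).div
        ((t1.pow 3).pow 2) (by norm_num))
    have hq : ∀ z ∈ Set.Ici (0:ℝ), HasDerivWithinAt (fun z => V2 z / V1 z ^ 3)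
        ((V3 z * V1 z ^ 3 - V2 z * (3 * V1 z ^ 2 * V2 z)) / (V1 z ^ 3) ^ 2) (Set.Ici 0) z := by
      intro z hz
      have := (d2 z).div ((d1 z).pow 3) (pow_ne_zero 3 (hne z hz))
      refine (this.hasDerivWithinAt (s := Set.Ici 0)).congr_deriv ?_
      simp
    refine ⟨K / c, by positivity, fun u v hu hv => ?_⟩
    obtain ⟨x, hx, rfl⟩ := hsurj u hu
    obtain ⟨y, hy, rfl⟩ := hsurj v hv
    rw [hg x hx, hg y hy]
    have h1 := (convex_Ici (0:ℝ)).norm_image_sub_le_of_norm_hasDerivWithin_le hq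
      (fun z hz => h z hz) hy hx
    rw [Real.norm_eq_abs, Real.norm_eq_abs] at h1
    refine h1.trans ?_
    have h2 : c * |x - y| ≤ |Vs x - Vs y| := by
      rcases le_total x y with hxy | hxy
      · rw [abs_sub_comm x y, abs_sub_comm (Vs x), abs_of_nonneg (sub_nonneg.2 hxy)]
        exact (hexp x y hx hxy).trans (le_abs_self _)
      · rw [abs_of_nonneg (sub_nonneg.2 hxy)]
        exact (hexp y x hy hxy).trans (le_abs_self _)
    rw [div_mul_eq_mul_div, le_div_iff₀ hc]
    calc K * |x - y| * c = K * (c * |x - y|) := by ring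
      _ ≤ _ := mul_le_mul_of_nonneg_left h2 hK.le
  -- integrability of V2 / V1^2
  have hI2 : IntegrableOn (fun z => V2 z / V1 z ^ 2) (Set.Ioi 0) := by
    have hco : ContinuousOn (fun z => V2 z / V1 z ^ 2) (Set.Ici 0) :=
      c2.continuousOn.div (c1.pow 2).continuousOn (fun z hz => pow_ne_zero 2 (hne z hz))
    obtain ⟨B, hB, h⟩ := PhiAux.bdd_of_tendsto
      (f := fun z => (V2 z + z ^ 2 * V2 z) / V1 z ^ 2)
      (ContinuousOn.div (by fun_prop) (by fun_prop) (fun z hz => pow_ne_zero 2 (hne z hz)))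
      ((t2.add t22).div (t1.pow 2) (by norm_num))
    refine Integrable.mono' (integrable_inv_one_add_sq.const_mul B).integrableOn
      ((hco.mono Set.Ioi_subset_Ici_self).aestronglyMeasurable measurableSet_Ioi) ?_
    filter_upwards [ae_restrict_mem measurableSet_Ioi] with z hz
    have h1 := h z (le_of_lt hz)
    rw [← div_eq_mul_inv, le_div_iff₀ (by positivity)]
    refine le_trans (le_of_eq ?_) h1
    rw [Real.norm_eq_abs, ← abs_of_nonneg (a := 1 + z ^ 2) (by positivity), ← abs_mul]
    congr 1
    ring
  have hjac : ∀ z ∈ Set.Ioi (0:ℝ), |V1 z| * g (Vs z) = V2 z / V1 z ^ 2 := by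
    intro z hz
    have hz' : (0:ℝ) ≤ z := le_of_lt hz
    have := hVs'pos z hz'
    rw [hg z hz', abs_of_pos this]
    field_simp
  have hgI : IntegrableOn g (Set.Ioi 0) := by
    rw [← himg, integrableOn_image_iff_integrableOn_abs_deriv_smul measurableSet_Ioi
      (fun z _ => (d0 z).hasDerivWithinAt) hinj]
    exact hI2.congr_fun (fun z hz => (hjac z hz).symm) measurableSet_Ioi
  set G : ℝ → ℝ := Set.indicator (Set.Ioi 0) g with hGdef
  have hG : Integrable G := (integrable_indicator_iff measurableSet_Ioi).2 hgI
  have hGp : ∀ u, 0 < u → G u = g u := fun u hu => Set.indicator_of_mem (by exact hu) g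
  have hGn : ∀ u, u ≤ 0 → G u = 0 := fun u hu =>
    Set.indicator_of_notMem (by simpa using hu) g
  have hGM : ∀ u, |G u| ≤ M := by
    intro u
    rcases lt_or_ge 0 u with h | h
    · rw [hGp u h]; exact hgM u h.le
    · rw [hGn u h, abs_zero]; exact hM.le
  have hGC : ∀ ρ : ℝ, 0 < ρ → ∃ C : ℝ, ∀ a, ρ ≤ a → ∀ t, |G (a - t) - G a| ≤ C * min |t| 1 := by
    intro ρ hρ
    refine ⟨max (2 * M) (max K (M / ρ)), fun a ha t => ?_⟩
    set C := max (2 * M) (max K (M / ρ)) with hCdef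
    have hC1 : 2 * M ≤ C := le_max_left _ _
    have hC2 : K ≤ C := (le_max_left _ _).trans (le_max_right _ _)
    have hC3 : M / ρ ≤ C := (le_max_right _ _).trans (le_max_right _ _)
    have ha0 : 0 < a := hρ.trans_le ha
    rw [mul_min_of_nonneg _ _ (hK.le.trans hC2), mul_one]
    refine le_min ?_ ?_
    · rcases lt_or_ge 0 (a - t) with h | h
      · rw [hGp _ h, hGp _ ha0]
        refine (hgK _ _ h.le ha0.le).trans ?_
        rw [show a - t - a = -t by ring, abs_neg]
        exact mul_le_mul_of_nonneg_right hC2 (abs_nonneg _)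
      · rw [hGn _ h, zero_sub, abs_neg]
        refine (hGM a).trans ?_
        have h1 : ρ ≤ |t| := by
          have := le_abs_self t
          linarith
        calc M = M / ρ * ρ := by field_simp
          _ ≤ C * |t| := mul_le_mul hC3 h1 hρ.le (hK.le.trans hC2)
    · have := abs_sub (G (a - t)) (G a)
      linarith [hGM (a - t), hGM a]
  -- the identity for PhiInf
  have hPhi : ∀ a b : ℝ, 0 < b → PhiInf Vs ((a : ℂ) + (b : ℂ) * Complex.I)
      = ((-1 / V1 0 : ℝ) : ℂ) + ((a : ℂ) + (b : ℂ) * Complex.I) * PhiAux.J G a b := by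
    intro a b hb
    set μ : ℂ := (a : ℂ) + (b : ℂ) * Complex.I with hμ
    have him : ∀ x : ℝ, (μ - x).im = b := fun x => by simp [hμ]
    have hre : ∀ x : ℝ, (μ - x).re = a - x := fun x => by simp [hμ]
    have hμne : ∀ x : ℝ, μ - x ≠ 0 := fun x h => by
      have := him x
      rw [h] at this
      exact hb.ne this
    have hbn : ∀ x : ℝ, b ≤ ‖μ - x‖ := fun x => by
      have := Complex.abs_im_le_norm (μ - x)
      rw [him] at this
      exact (le_abs_self b).trans this
    have hμ0 : μ ≠ 0 := by simpa using hμne 0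
    have hJ : PhiAux.J G a b
        = ∫ y in Set.Ioi (0:ℝ), ((V2 y / V1 y ^ 2 : ℝ) : ℂ) / (μ - Vs y) := by
      have e1 : PhiAux.J G a b = ∫ u in Set.Ioi (0:ℝ), (g u : ℂ) / (μ - u) := by
        unfold PhiAux.J
        rw [← integral_indicator measurableSet_Ioi]
        refine integral_congr_ae (Eventually.of_forall fun u => ?_)
        by_cases hu : u ∈ Set.Ioi (0:ℝ)
        · simp only [Set.indicator_of_mem hu, hGdef, hμ]
        · simp only [Set.indicator_of_notMem hu, hGdef, Complex.ofReal_zero, zero_div]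
      rw [e1]
      conv_lhs => rw [← himg]
      rw [integral_image_eq_integral_abs_deriv_smul measurableSet_Ioi
        (fun z _ => (d0 z).hasDerivWithinAt) hinj]
      refine setIntegral_congr_fun measurableSet_Ioi fun z hz => ?_
      rw [← hjac z hz, Complex.real_smul]
      push_cast
      ring
    have hcont : Continuous (fun y : ℝ => μ - (Vs y : ℂ)) := by fun_prop
    have hint1 : IntegrableOn (fun y : ℝ => ((μ - (Vs y : ℂ)) ^ 2)⁻¹) (Set.Ioi 0) := by
      set B : ℝ := 2 / c ^ 2 + (1 + 2 * a ^ 2 / c ^ 2) / b ^ 2 with hB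
      refine Integrable.mono' (integrable_inv_one_add_sq.const_mul B).integrableOn
        ((hcont.pow 2).inv₀ (fun y => pow_ne_zero 2 (hμne _))).aestronglyMeasurable ?_
      filter_upwards [ae_restrict_mem measurableSet_Ioi] with y hy
      have hy' : (0:ℝ) < y := hy
      rw [norm_inv, norm_pow, ← Complex.normSq_eq_norm_sq, Complex.normSq_apply, him, hre,
        ← div_eq_mul_inv, inv_eq_one_div, div_le_div_iff₀
          (add_pos_of_nonneg_of_pos (mul_self_nonneg _) (by positivity)) (by positivity), one_mul]
      have h1 := hlow y hy'.le
      have h2 : c ^ 2 * y ^ 2 ≤ 2 * ((a - Vs y) ^ 2 + a ^ 2) := by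
        have : (c * y) ^ 2 ≤ Vs y ^ 2 := pow_le_pow_left₀ (by positivity) h1 2
        nlinarith [sq_nonneg (Vs y - 2 * a)]
      have h3 : y ^ 2 ≤ 2 * ((a - Vs y) ^ 2 + a ^ 2) / c ^ 2 := by
        rw [le_div_iff₀ (by positivity)]; linarith
      have h4 : B * ((a - Vs y) * (a - Vs y) + b * b) = 1 + 2 * ((a - Vs y) ^ 2 + a ^ 2) / c ^ 2
          + (2 / c ^ 2 * b ^ 2 + (1 + 2 * a ^ 2 / c ^ 2) / b ^ 2 * (a - Vs y) ^ 2) := by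
        rw [hB]; field_simp; ring
      rw [h4]
      have : 0 ≤ (2 / c ^ 2 * b ^ 2 + (1 + 2 * a ^ 2 / c ^ 2) / b ^ 2 * (a - Vs y) ^ 2) := by
        positivity
      linarith
    have hint2 : IntegrableOn (fun y : ℝ => ((V2 y / V1 y ^ 2 : ℝ) : ℂ) / (μ - Vs y))
        (Set.Ioi 0) := by
      refine Integrable.mono' (hI2.norm.const_mul b⁻¹) ?_ ?_
      · exact (Complex.continuous_ofReal.comp_aestronglyMeasurable
          hI2.aestronglyMeasurable).div₀ hcont.aestronglyMeasurable
      · refine Eventually.of_forall fun y => ?_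
        rw [norm_div, Complex.norm_real, div_eq_inv_mul]
        have := hbn (Vs y)
        gcongr
    have hFTC := integral_Ioi_of_hasDerivAt_of_tendsto' (a := (0:ℝ)) (m := (0:ℂ))
      (f := fun y : ℝ => ((V1 y : ℂ) * (μ - Vs y))⁻¹)
      (f' := fun y : ℝ => ((μ - (Vs y : ℂ)) ^ 2)⁻¹ - ((V2 y / V1 y ^ 2 : ℝ) : ℂ) / (μ - Vs y))
      (by
        intro y hy
        have n1 : (V1 y : ℂ) ≠ 0 := by exact_mod_cast hne y hy
        have n2 := hμne (Vs y)
        have h := ((d1 y).ofReal_comp.mul ((d0 y).ofReal_comp.const_sub μ)).inv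
          (mul_ne_zero n1 n2)
        refine h.congr_deriv ?_
        simp only [Pi.mul_apply]
        push_cast
        field_simp
        ring)
      (hint1.sub hint2)
      (by
        have hVtop : Tendsto Vs atTop atTop := by
          refine tendsto_atTop_mono' _ ?_ (tendsto_id.const_mul_atTop hc)
          filter_upwards [eventually_ge_atTop 0] with y hy using hlow y hy
        have hz : Tendsto (fun y : ℝ => (c * (Vs y - a))⁻¹) atTop (nhds 0) :=
          tendsto_inv_atTop_zero.comp
            ((tendsto_atTop_add_const_right _ (-a) hVtop).const_mul_atTop hc)
        refine squeeze_zero_norm' ?_ hz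
        filter_upwards [eventually_ge_atTop 0, hVtop.eventually_gt_atTop a] with y hy hya
        rw [norm_inv, norm_mul, Complex.norm_real]
        have h1 : Vs y - a ≤ ‖μ - Vs y‖ := by
          have := Complex.abs_re_le_norm (μ - Vs y)
          rw [hre, abs_sub_comm] at this
          exact (le_abs_self _).trans this
        have h2 : c ≤ ‖V1 y‖ := (hcV y hy).trans (le_abs_self _)
        have h3 : 0 < Vs y - a := sub_pos.2 hya
        gcongr)
    rw [integral_sub hint1 hint2, ← hJ, hVs0, sub_eq_iff_eq_add] at hFTC
    rw [PhiInf, hFTC]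
    have n1 : (V1 0 : ℂ) ≠ 0 := by exact_mod_cast hne 0 Set.self_mem_Ici
    push_cast
    rw [sub_zero]
    field_simp
    ring
  refine ⟨PhiAux.PV G, fun a ha => ?_, fun ρ R hρ hR => ?_⟩
  · obtain ⟨C, hC⟩ := hGC a ha
    have h := PhiAux.tendsto_PV hG (hC a le_rfl)
    unfold HasPV
    refine h.congr fun ε => ?_
    have hms : MeasurableSet {u : ℝ | ε < |u - a|} :=
      measurableSet_lt measurable_const (by fun_prop)
    have hms2 : MeasurableSet {u : ℝ | 0 < u ∧ ε < |u - a|} :=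
      (measurableSet_lt measurable_const measurable_id).inter hms
    rw [← integral_indicator hms, ← integral_indicator hms2]
    congr 1
    ext u
    simp only [Set.indicator, Set.mem_ofPred_eq]
    rcases lt_or_ge 0 u with hu | hu
    · simp [hGp u hu, hu]
    · simp [hGn u hu, not_lt.2 hu]
  · obtain ⟨C, hC⟩ := hGC ρ hρ
    have h := PhiAux.unif (R := R) hG hρ hC ((-1 / V1 0 : ℝ) : ℂ)
    refine (h.congr ?_).congr_right ?_
    · filter_upwards [self_mem_nhdsWithin] with b hb a ha
      exact (hPhi a b hb).symm
    · intro a ha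
      simp only
      rw [hGp a (hρ.trans_le ha.1)]
      push_cast
      ring
end

section
/- Extend Φ_∞ to the positive real axis by Φ_∞(a) := −1/V_s'(0) + a · PV∫₀^∞ g(u)/(a−u) du − iπ a g(a) for a > 0. Then Φ_∞(a) → −1 as a → +∞, and Re Φ_∞(a) → −1/V_s'(0) < 0 as a → 0⁺. -/
open MeasureTheory Filter

lemma symm_zero (a ε : ℝ) :
    ∫ u in {u : ℝ | ε < |u - a| ∧ |u - a| ≤ a / 2}, 1 / (a - u) = 0 := by
  have hm : MeasurableSet {u : ℝ | ε < |u - a| ∧ |u - a| ≤ a / 2} := by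
    have h1 : MeasurableSet {u : ℝ | ε < |u - a|} := measurableSet_lt (by fun_prop) (by fun_prop)
    have h2 : MeasurableSet {u : ℝ | |u - a| ≤ a / 2} :=
      measurableSet_le (by fun_prop) (by fun_prop)
    exact h1.inter h2
  rw [← integral_indicator hm]
  set f : ℝ → ℝ := Set.indicator {u : ℝ | ε < |u - a| ∧ |u - a| ≤ a / 2} (fun u => 1 / (a - u))
    with hf
  have h1 : ∫ u, f (2 * a - u) = ∫ u, f u := integral_sub_left_eq_self f volume (2 * a)
  have h2 : ∀ u, f (2 * a - u) = - f u := by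
    intro u
    have e1 : |2 * a - u - a| = |u - a| := by
      rw [← abs_neg]; congr 1; ring
    simp only [hf, Set.indicator, Set.mem_ofPred_eq, e1]
    split_ifs
    · rw [← one_div_neg_eq_neg_one_div]; congr 1; ring
    · simp
  simp only [h2, integral_neg] at h1
  linarith

lemma meas_near (a ε : ℝ) : MeasurableSet {u : ℝ | ε < |u - a| ∧ |u - a| ≤ a / 2} := by
  have h1 : MeasurableSet {u : ℝ | ε < |u - a|} := measurableSet_lt (by fun_prop) (by fun_prop)
  have h2 : MeasurableSet {u : ℝ | |u - a| ≤ a / 2} :=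
    measurableSet_le (by fun_prop) (by fun_prop)
  exact h1.inter h2

lemma meas_near0 (a : ℝ) : MeasurableSet {u : ℝ | |u - a| ≤ a / 2} :=
  measurableSet_le (by fun_prop) (by fun_prop)

lemma meas_far (a ε : ℝ) : MeasurableSet {u : ℝ | 0 < u ∧ ε < |u - a|} := by
  have h1 : MeasurableSet {u : ℝ | 0 < u} := measurableSet_Ioi
  have h2 : MeasurableSet {u : ℝ | ε < |u - a|} := measurableSet_lt (by fun_prop) (by fun_prop)
  exact h1.inter h2

lemma near_eq (a : ℝ) : {u : ℝ | |u - a| ≤ a / 2} = Set.Icc (a / 2) (3 * a / 2) := by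
  ext u
  simp only [Set.mem_ofPred_eq, Set.mem_Icc, abs_le]
  constructor <;> rintro ⟨h1, h2⟩ <;> constructor <;> linarith

lemma far_int (g : ℝ → ℝ) (hint : IntegrableOn g (Set.Ioi 0)) (a ε : ℝ) (hε : 0 < ε) :
    IntegrableOn (fun u => g u / (a - u)) {u : ℝ | 0 < u ∧ ε < |u - a|} := by
  have h1 : IntegrableOn g {u : ℝ | 0 < u ∧ ε < |u - a|} := hint.mono_set (fun u hu => hu.1)
  simp only [div_eq_mul_inv]
  refine Integrable.mul_bdd (c := ε⁻¹) h1 ?_ ?_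
  · exact (Measurable.inv (by fun_prop)).aestronglyMeasurable
  · rw [ae_restrict_iff' (meas_far a ε)]
    refine Eventually.of_forall fun u hu => ?_
    rw [norm_inv, Real.norm_eq_abs, abs_sub_comm]
    exact inv_anti₀ hε hu.2.le

noncomputable def PP (g : ℝ → ℝ) (a : ℝ) : ℝ :=
  (∫ u in {u : ℝ | 0 < u ∧ a / 2 < |u - a|}, g u / (a - u)) +
    ∫ u in {u : ℝ | |u - a| ≤ a / 2}, (g u - g a) / (a - u)

lemma near_bound (g : ℝ → ℝ) (a K : ℝ) (hK : 0 ≤ K)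
    (hlip : ∀ u, |u - a| ≤ a / 2 → |g u - g a| ≤ K * |u - a|) (u : ℝ) (hu : |u - a| ≤ a / 2) :
    ‖(g u - g a) / (a - u)‖ ≤ K := by
  rw [norm_div, Real.norm_eq_abs, Real.norm_eq_abs, abs_sub_comm a u]
  exact div_le_of_le_mul₀ (abs_nonneg _) hK (hlip u hu)

lemma hasPV_PP (g : ℝ → ℝ) (hint : IntegrableOn g (Set.Ioi 0)) (a K : ℝ) (ha : 0 < a)
    (hK : 0 ≤ K)
    (hlip : ∀ u, |u - a| ≤ a / 2 → |g u - g a| ≤ K * |u - a|) :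
    HasPV g a (PP g a) := by
  have hsub : {u : ℝ | |u - a| ≤ a / 2} ⊆ Set.Ioi 0 := by
    rw [near_eq]; intro u hu; simp only [Set.mem_Icc] at hu
    simp only [Set.mem_Ioi]; linarith [hu.1]
  have hfin : volume {u : ℝ | |u - a| ≤ a / 2} < ⊤ := by
    rw [near_eq]; exact measure_Icc_lt_top
  have hmeas : AEStronglyMeasurable (fun u => (g u - g a) / (a - u))
      (volume.restrict {u : ℝ | |u - a| ≤ a / 2}) := by
    have h1 : AEStronglyMeasurable g (volume.restrict {u : ℝ | |u - a| ≤ a / 2}) :=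
      (hint.mono_set hsub).aestronglyMeasurable
    simp only [div_eq_mul_inv]
    exact (h1.sub aestronglyMeasurable_const).mul
      (Measurable.inv (by fun_prop)).aestronglyMeasurable
  have hnear : IntegrableOn (fun u => (g u - g a) / (a - u)) {u : ℝ | |u - a| ≤ a / 2} := by
    refine IntegrableOn.of_bound hfin hmeas K ?_
    rw [ae_restrict_iff' (meas_near0 a)]
    exact Eventually.of_forall fun u hu => near_bound g a K hK hlip u hu
  have key : ∀ ε, 0 < ε → ε < a / 2 →
      ∫ u in {u : ℝ | 0 < u ∧ ε < |u - a|}, g u / (a - u) =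
      (∫ u in {u : ℝ | 0 < u ∧ a / 2 < |u - a|}, g u / (a - u)) +
      ∫ u in {u : ℝ | ε < |u - a| ∧ |u - a| ≤ a / 2}, (g u - g a) / (a - u) := by
    intro ε hε hεa
    have hS : {u : ℝ | 0 < u ∧ ε < |u - a|} = {u : ℝ | 0 < u ∧ a / 2 < |u - a|} ∪
        {u : ℝ | ε < |u - a| ∧ |u - a| ≤ a / 2} := by
      ext u
      simp only [Set.mem_ofPred_eq, Set.mem_union]
      constructor
      · rintro ⟨h1, h2⟩
        rcases lt_or_ge (a / 2) |u - a| with h | h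
        · exact Or.inl ⟨h1, h⟩
        · exact Or.inr ⟨h2, h⟩
      · rintro (⟨h1, h2⟩ | ⟨h1, h2⟩)
        · exact ⟨h1, by linarith⟩
        · exact ⟨hsub h2, h1⟩
    have hnn : {u : ℝ | ε < |u - a| ∧ |u - a| ≤ a / 2} ⊆ {u : ℝ | 0 < u ∧ ε < |u - a|} :=
      fun u hu => ⟨hsub hu.2, hu.1⟩
    rw [hS, setIntegral_union _ (meas_near a ε) (far_int g hint a _ (by linarith))
      ((far_int g hint a ε hε).mono_set hnn)]
    · congr 1
      have i1 : IntegrableOn (fun u => (g u - g a) / (a - u))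
        {u : ℝ | ε < |u - a| ∧ |u - a| ≤ a / 2} := hnear.mono_set (fun u hu => hu.2)
      have i2 : IntegrableOn (fun u => 1 / (a - u))
        {u : ℝ | ε < |u - a| ∧ |u - a| ≤ a / 2} := by
        refine IntegrableOn.of_bound (lt_of_le_of_lt (measure_mono (fun u hu => hu.2)) hfin)
          (Measurable.aestronglyMeasurable (by fun_prop)) ε⁻¹ ?_
        rw [ae_restrict_iff' (meas_near a ε)]
        refine Eventually.of_forall fun u hu => ?_
        rw [norm_div, norm_one, one_div, Real.norm_eq_abs, abs_sub_comm]
        exact inv_anti₀ hε hu.1.le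
      have : ∀ u, g u / (a - u) = (g u - g a) / (a - u) + g a * (1 / (a - u)) := by
        intro u; ring
      simp only [this]
      rw [integral_add i1 (i2.const_mul _), integral_const_mul, symm_zero, mul_zero, add_zero]
    · rw [Set.disjoint_left]
      intro u h1 h2
      exact absurd h1.2 (not_lt.mpr h2.2)
  have hlim : Tendsto (fun ε => ∫ u in {u : ℝ | ε < |u - a| ∧ |u - a| ≤ a / 2},
      (g u - g a) / (a - u)) (nhdsWithin 0 (Set.Ioi 0))
      (nhds (∫ u in {u : ℝ | |u - a| ≤ a / 2}, (g u - g a) / (a - u))) := by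
    have e : ∀ ε, ∫ u in {u : ℝ | ε < |u - a| ∧ |u - a| ≤ a / 2}, (g u - g a) / (a - u) =
        ∫ u in {u : ℝ | |u - a| ≤ a / 2},
          Set.indicator {u : ℝ | ε < |u - a|} (fun u => (g u - g a) / (a - u)) u := by
      intro ε
      rw [setIntegral_indicator (measurableSet_lt (by fun_prop) (by fun_prop))]
      congr 2
      ext u; simp [and_comm]
    simp only [e]
    refine tendsto_integral_filter_of_dominated_convergence (fun _ => K) ?_ ?_ ?_ ?_
    · exact Eventually.of_forall fun ε =>
        hmeas.indicator (measurableSet_lt (by fun_prop) (by fun_prop))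
    · refine Eventually.of_forall fun ε => ?_
      rw [ae_restrict_iff' (meas_near0 a)]
      exact Eventually.of_forall fun u hu =>
        (norm_indicator_le_norm_self _ _).trans (near_bound g a K hK hlip u hu)
    · exact integrableOn_const hfin.ne
    · refine Eventually.of_forall fun u => ?_
      by_cases h : u = a
      · subst h
        simp [Set.indicator]
      · have : 0 < |u - a| := abs_pos.mpr (sub_ne_zero.mpr h)
        apply tendsto_const_nhds.congr'
        have h2 : ∀ᶠ ε in nhdsWithin (0:ℝ) (Set.Ioi 0), ε < |u - a| :=
          nhdsWithin_le_nhds (Iio_mem_nhds this)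
        filter_upwards [h2] with ε hε
        rw [Set.indicator_of_mem]
        exact hε
  have hh := hlim.const_add (∫ u in {u : ℝ | 0 < u ∧ a / 2 < |u - a|}, g u / (a - u))
  refine hh.congr' ?_
  have h2 : ∀ᶠ ε in nhdsWithin (0:ℝ) (Set.Ioi 0), ε < a / 2 :=
    nhdsWithin_le_nhds (Iio_mem_nhds (by linarith))
  filter_upwards [h2, self_mem_nhdsWithin] with ε h1 h2
  exact (key ε h2 h1).symm

lemma far_lim (g : ℝ → ℝ) (hint : IntegrableOn g (Set.Ioi 0)) (l : Filter ℝ)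
    [l.IsCountablyGenerated] (c : ℝ)
    (hl : ∀ᶠ a in l, 0 < a)
    (hpt : ∀ u > 0, Tendsto (fun a => Set.indicator {u : ℝ | a / 2 < |u - a|}
      (fun u => a / (a - u)) u) l (nhds c)) :
    Tendsto (fun a => a * ∫ u in {u : ℝ | 0 < u ∧ a / 2 < |u - a|}, g u / (a - u)) l
      (nhds (∫ u in Set.Ioi 0, c * g u)) := by
  have e : ∀ a, a * ∫ u in {u : ℝ | 0 < u ∧ a / 2 < |u - a|}, g u / (a - u) =
      ∫ u in Set.Ioi 0, (Set.indicator {u : ℝ | a / 2 < |u - a|}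
      (fun u => a / (a - u)) u) * g u := by
    intro a
    have : ∀ u, (Set.indicator {u : ℝ | a / 2 < |u - a|} (fun u => a / (a - u)) u) * g u
      = Set.indicator {u : ℝ | a / 2 < |u - a|} (fun u => a * (g u / (a - u))) u := by
      intro u
      simp only [Set.indicator]
      split_ifs
      · ring
      · simp
    simp only [this]
    rw [setIntegral_indicator (measurableSet_lt (by fun_prop) (by fun_prop)), integral_const_mul]
    rfl
  simp only [e]
  refine tendsto_integral_filter_of_dominated_convergence (fun u => 2 * |g u|) ?_ ?_ ?_ ?_
  · refine Eventually.of_forall fun a => ?_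
    refine AEStronglyMeasurable.mul ?_ hint.aestronglyMeasurable
    exact (Measurable.aestronglyMeasurable (by fun_prop)).indicator
      (measurableSet_lt (by fun_prop) (by fun_prop))
  · filter_upwards [hl] with a ha
    refine Eventually.of_forall fun u => ?_
    rw [norm_mul, Real.norm_eq_abs (g u)]
    gcongr
    simp only [Set.indicator, Set.mem_ofPred_eq]
    split_ifs with h
    · rw [norm_div, Real.norm_eq_abs, Real.norm_eq_abs, abs_sub_comm, abs_of_pos ha]
      rw [div_le_iff₀ (by linarith)]
      linarith
    · simp
  · exact (hint.abs).const_mul 2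
  · rw [ae_restrict_iff' measurableSet_Ioi]
    exact Eventually.of_forall fun u hu => (hpt u hu).mul_const _

lemma near_le (g : ℝ → ℝ) (a K : ℝ) (ha : 0 < a) (hK : 0 ≤ K)
    (hlip : ∀ u, |u - a| ≤ a / 2 → |g u - g a| ≤ K * |u - a|) :
    ‖a * ∫ u in {u : ℝ | |u - a| ≤ a / 2}, (g u - g a) / (a - u)‖ ≤ a * (K * a) := by
  rw [norm_mul, Real.norm_eq_abs, abs_of_pos ha]
  gcongr
  have hfin : volume {u : ℝ | |u - a| ≤ a / 2} < ⊤ := by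
    rw [near_eq]; exact measure_Icc_lt_top
  have := norm_setIntegral_le_of_norm_le_const hfin
    (fun u hu => near_bound g a K hK hlip u hu)
  refine this.trans (le_of_eq ?_)
  rw [near_eq, Real.volume_real_Icc_of_le (by linarith)]
  ring

lemma core_lim (g : ℝ → ℝ) (hint : IntegrableOn g (Set.Ioi 0)) (l : Filter ℝ)
    [l.IsCountablyGenerated] (c : ℝ) (K : ℝ → ℝ)
    (hl : ∀ᶠ a in l, 0 < a)
    (hpt : ∀ u > 0, Tendsto (fun a => Set.indicator {u : ℝ | a / 2 < |u - a|}
      (fun u => a / (a - u)) u) l (nhds c))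
    (hK : ∀ a, 0 < a → 0 ≤ K a)
    (hlip : ∀ a, 0 < a → ∀ u, |u - a| ≤ a / 2 → |g u - g a| ≤ K a * |u - a|)
    (hKl : Tendsto (fun a => a * (K a * a)) l (nhds 0)) :
    Tendsto (fun a => a * PP g a) l (nhds (c * ∫ u in Set.Ioi 0, g u)) := by
  have h1 := far_lim g hint l c hl hpt
  have h2 : Tendsto (fun a => a * ∫ u in {u : ℝ | |u - a| ≤ a / 2}, (g u - g a) / (a - u)) l
      (nhds 0) := by
    refine squeeze_zero_norm' ?_ hKl
    filter_upwards [hl] with a ha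
    exact near_le g a (K a) ha (hK a ha) (hlip a ha)
  have h3 := h1.add h2
  rw [integral_const_mul, add_zero] at h3
  refine h3.congr fun a => ?_
  rw [PP, mul_add]

lemma pt_top (u : ℝ) (_ : u > 0) : Tendsto (fun a => Set.indicator {u : ℝ | a / 2 < |u - a|}
      (fun u => a / (a - u)) u) atTop (nhds 1) := by
  have h : Tendsto (fun a : ℝ => 1 + u / (a - u)) atTop (nhds 1) := by
    have : Tendsto (fun a : ℝ => a - u) atTop atTop := tendsto_atTop_add_const_right _ _ tendsto_id
    simpa using (this.const_div_atTop u).const_add 1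
  refine h.congr' ?_
  filter_upwards [eventually_gt_atTop (2 * u)] with a ha
  rw [Set.indicator_of_mem]
  · have : a - u ≠ 0 := by intro h; linarith
    field_simp
    ring
  · simp only [Set.mem_ofPred_eq]
    rw [abs_sub_comm, lt_abs]; left; linarith

lemma pt_zero (u : ℝ) (hu : u > 0) : Tendsto (fun a => Set.indicator {u : ℝ | a / 2 < |u - a|}
      (fun u => a / (a - u)) u) (nhdsWithin 0 (Set.Ioi 0)) (nhds 0) := by
  have h : Tendsto (fun a : ℝ => a / (a - u)) (nhdsWithin 0 (Set.Ioi 0)) (nhds 0) := by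
    have : ContinuousAt (fun a : ℝ => a / (a - u)) 0 := by
      apply ContinuousAt.div (by fun_prop) (by fun_prop)
      simp only [zero_sub]; intro h; linarith
    have h := this.tendsto
    simp only [zero_div] at h
    exact h.mono_left nhdsWithin_le_nhds
  refine h.congr' ?_
  have h2 : ∀ᶠ a in nhdsWithin (0:ℝ) (Set.Ioi 0), a < u / 2 :=
    nhdsWithin_le_nhds (Iio_mem_nhds (by linarith))
  filter_upwards [h2] with a ha
  rw [Set.indicator_of_mem]
  simp only [Set.mem_ofPred_eq]
  rw [lt_abs]; left; linarith

lemma Klim_zero (C : ℝ) : Tendsto (fun a : ℝ => a * (C / (1 + a) ^ 3 * a))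
    (nhdsWithin 0 (Set.Ioi 0)) (nhds 0) := by
  have : ContinuousAt (fun a : ℝ => a * (C / (1 + a) ^ 3 * a)) 0 := by
    refine ContinuousAt.mul (by fun_prop) (ContinuousAt.mul (ContinuousAt.div (by fun_prop)
      (by fun_prop) (by simp)) (by fun_prop))
  have h := this.tendsto
  simp only [zero_mul] at h
  exact h.mono_left nhdsWithin_le_nhds

lemma Klim_top (C : ℝ) (hC : 0 ≤ C) : Tendsto (fun a : ℝ => a * (C / (1 + a) ^ 3 * a))
    atTop (nhds 0) := by
  have h : Tendsto (fun a : ℝ => C / a) atTop (nhds 0) := tendsto_id.const_div_atTop C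
  refine squeeze_zero' ?_ ?_ h
  · filter_upwards [eventually_gt_atTop 0] with a ha
    positivity
  · filter_upwards [eventually_gt_atTop 0] with a ha
    have : a * (C / (1 + a) ^ 3 * a) = (C * a ^ 2) / (1 + a) ^ 3 := by ring
    rw [this, div_le_div_iff₀ (by positivity) ha]
    have : a ^ 3 ≤ (1 + a) ^ 3 := by gcongr; linarith
    calc C * a ^ 2 * a = C * a ^ 3 := by ring
      _ ≤ _ := by gcongr

lemma bdd_of_lim (H : ℝ → ℝ) (l : ℝ) (hc : ContinuousOn H (Set.Ici 0))
    (hl : Tendsto H atTop (nhds l)) : ∃ C, 0 ≤ C ∧ ∀ z, 0 ≤ z → |H z| ≤ C := by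
  have h1 : ∀ᶠ z in atTop, |H z| < |l| + 1 :=
    hl.abs.eventually (Iio_mem_nhds (by linarith))
  obtain ⟨M, hM⟩ := eventually_atTop.mp h1
  obtain ⟨D, hD⟩ := (isCompact_Icc (a := (0:ℝ)) (b := M)).exists_bound_of_continuousOn
    (hc.mono Set.Icc_subset_Ici_self)
  refine ⟨max (|l| + 1) D, le_max_of_le_left (by positivity), fun z hz => ?_⟩
  rcases le_total z M with h | h
  · exact le_max_of_le_right (hD z ⟨hz, h⟩)
  · exact le_max_of_le_left (hM z h).le

/-- the boundary extension
`Φ_∞(a) = -1/V_s'(0) + a PV∫₀^∞ g(u)/(a-u) du - iπ a g(a)` satisfies `Φ_∞(a) → -1`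
as `a → +∞` and `Re Φ_∞(a) → -1/V_s'(0) < 0` as `a → 0⁺`. -/
theorem PhiInf_boundary_extension_limits
    (Vs : ℝ → ℝ) (As : ℝ)
    (hVs_smooth : ContDiff ℝ (⊤ : ℕ∞) Vs)
    (hVs0 : Vs 0 = 0)
    (hVs'pos : ∀ z : ℝ, 0 ≤ z → 0 < deriv Vs z)
    (hdecay : ∀ p : ℕ, Tendsto (fun z : ℝ => z ^ p * (Vs z - z - As)) atTop (nhds 0))
    (hderiv_decay : ∀ n : ℕ, 1 ≤ n → ∀ p : ℕ,
      Tendsto (fun z : ℝ => z ^ p * iteratedDeriv n (fun w => Vs w - w) z) atTop (nhds 0))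
    (g : ℝ → ℝ)
    (hg : ∀ z : ℝ, 0 ≤ z → g (Vs z) = deriv (deriv Vs) z / (deriv Vs z) ^ 3)
    :
    ∃ P : ℝ → ℝ, (∀ a : ℝ, 0 < a → HasPV g a (P a)) ∧
      Tendsto (fun a : ℝ => ((-1 / deriv Vs 0 + a * P a : ℝ) : ℂ)
          - (Real.pi : ℂ) * (a : ℂ) * (g a : ℂ) * Complex.I) atTop (nhds (-1)) ∧
      Tendsto (fun a : ℝ => -1 / deriv Vs 0 + a * P a)
        (nhdsWithin 0 (Set.Ioi 0)) (nhds (-1 / deriv Vs 0)) ∧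
      -1 / deriv Vs 0 < 0 := by
  -- smoothness
  have s1 : ContDiff ℝ (⊤ : ℕ∞) (deriv Vs) := (contDiff_infty_iff_deriv.mp hVs_smooth).2
  have s2 : ContDiff ℝ (⊤ : ℕ∞) (deriv (deriv Vs)) := (contDiff_infty_iff_deriv.mp s1).2
  have s3 : ContDiff ℝ (⊤ : ℕ∞) (deriv (deriv (deriv Vs))) := (contDiff_infty_iff_deriv.mp s2).2
  have D0 : ∀ z, HasDerivAt Vs (deriv Vs z) z := fun z =>
    ((contDiff_infty_iff_deriv.mp hVs_smooth).1 z).hasDerivAt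
  have D1 : ∀ z, HasDerivAt (deriv Vs) (deriv (deriv Vs) z) z := fun z =>
    ((contDiff_infty_iff_deriv.mp s1).1 z).hasDerivAt
  have D2 : ∀ z, HasDerivAt (deriv (deriv Vs)) (deriv (deriv (deriv Vs)) z) z := fun z =>
    ((contDiff_infty_iff_deriv.mp s2).1 z).hasDerivAt
  have E1 : deriv (fun w => Vs w - w) = fun z => deriv Vs z - 1 := by
    funext z; exact ((D0 z).sub (hasDerivAt_id z)).deriv
  have E2 : deriv (fun z => deriv Vs z - 1) = deriv (deriv Vs) := by
    funext z; exact ((D1 z).sub_const 1).deriv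
  have L1 : Tendsto (deriv Vs) atTop (nhds 1) := by
    have := hderiv_decay 1 le_rfl 0
    simp only [iteratedDeriv_one, E1, pow_zero, one_mul] at this
    simpa using this.add_const 1
  have L2 : ∀ p : ℕ, Tendsto (fun z => z ^ p * deriv (deriv Vs) z) atTop (nhds 0) := by
    intro p
    have := hderiv_decay 2 (by norm_num) p
    simpa only [iteratedDeriv_succ, iteratedDeriv_zero, E1, E2] using this
  have L3 : ∀ p : ℕ, Tendsto (fun z => z ^ p * deriv (deriv (deriv Vs)) z) atTop (nhds 0) := by
    intro p
    have := hderiv_decay 3 (by norm_num) p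
    simpa only [iteratedDeriv_succ, iteratedDeriv_zero, E1, E2] using this
  have LU : Tendsto (fun z => Vs z - z) atTop (nhds As) := by
    have := hdecay 0
    simp only [pow_zero, one_mul] at this
    simpa using this.add_const As
  have LV : Tendsto Vs atTop atTop := by
    have := LU.add_atTop tendsto_id
    simpa using this
  have LR : Tendsto (fun z => (1 + Vs z) / z) atTop (nhds 1) := by
    have h1 : Tendsto (fun z : ℝ => (1 + (Vs z - z)) / z) atTop (nhds 0) :=
      (LU.const_add 1).div_atTop tendsto_id
    have h2 := h1.add_const 1
    rw [zero_add] at h2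
    refine h2.congr' ?_
    filter_upwards [eventually_gt_atTop 0] with z hz
    field_simp
    ring
  have smono : StrictMonoOn Vs (Set.Ici 0) := by
    apply strictMonoOn_of_deriv_pos (convex_Ici 0) hVs_smooth.continuous.continuousOn
    intro z hz
    rw [interior_Ici] at hz
    exact hVs'pos z (le_of_lt hz)
  have hVpos : ∀ z, 0 < z → 0 < Vs z := by
    intro z hz
    have := smono (Set.self_mem_Ici) (Set.mem_Ici.mpr hz.le) hz
    rwa [hVs0] at this
  have surj : ∀ u, 0 < u → ∃ z, 0 < z ∧ Vs z = u := by
    intro u hu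
    obtain ⟨M, hM0, hM⟩ := ((eventually_gt_atTop 0).and (LV.eventually_gt_atTop u)).exists
    obtain ⟨z, hz, hzu⟩ := intermediate_value_Icc (le_of_lt hM0)
      hVs_smooth.continuous.continuousOn (show u ∈ Set.Icc (Vs 0) (Vs M) from
        ⟨by rw [hVs0]; exact hu.le, hM.le⟩)
    refine ⟨z, lt_of_le_of_ne hz.1 ?_, hzu⟩
    rintro rfl
    linarith
  have himg : Vs '' Set.Ioi 0 = Set.Ioi 0 := by
    ext u
    constructor
    · rintro ⟨z, hz, rfl⟩; exact hVpos z hz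
    · intro hu
      obtain ⟨z, hz, h⟩ := surj u hu
      exact ⟨z, hz, h⟩
  have c0 := hVs_smooth.continuous
  have c1 := s1.continuous
  have c2 := s2.continuous
  have c3 := s3.continuous
  -- bounds
  have DF : ∀ z, 0 ≤ z → HasDerivAt (fun z => deriv (deriv Vs) z / (deriv Vs z) ^ 3)
      ((deriv (deriv (deriv Vs)) z * deriv Vs z - 3 * (deriv (deriv Vs) z) ^ 2) /
        (deriv Vs z) ^ 4) z := by
    intro z hz
    have hne := (hVs'pos z hz).ne'
    refine ((D2 z).div ((D1 z).pow 3) (pow_ne_zero 3 hne)).congr_deriv ?_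
    simp only [Pi.pow_apply]
    field_simp
    push_cast
    ring
  obtain ⟨C3, hC3, B3⟩ : ∃ C, 0 ≤ C ∧ ∀ z, 0 ≤ z → |(1 + Vs z) ^ 3 *
      ((deriv (deriv (deriv Vs)) z * deriv Vs z - 3 * (deriv (deriv Vs) z) ^ 2) /
        (deriv Vs z) ^ 5)| ≤ C := by
    apply bdd_of_lim _ 0
    · apply ContinuousOn.mul (by fun_prop)
      apply ContinuousOn.div (by fun_prop) (by fun_prop)
      intro z hz
      exact pow_ne_zero _ (hVs'pos z hz).ne'
    · have h := (LR.pow 3).mul ((((L3 3).mul L1).sub (((L2 3).mul (L2 0)).const_mul 3)).div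
        (L1.pow 5) (by norm_num))
      simp only [zero_mul, mul_zero, sub_zero, zero_div] at h
      refine h.congr' ?_
      filter_upwards [eventually_gt_atTop 0] with z hz
      have hne := (hVs'pos z hz.le).ne'
      simp only [Pi.div_apply]
      field_simp
  obtain ⟨C2, hC2, B2⟩ : ∃ C, 0 ≤ C ∧ ∀ z, 0 ≤ z → |(1 + Vs z) ^ 2 *
      (deriv (deriv Vs) z / (deriv Vs z) ^ 3)| ≤ C := by
    apply bdd_of_lim _ 0
    · apply ContinuousOn.mul (by fun_prop)
      apply ContinuousOn.div (by fun_prop) (by fun_prop)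
      intro z hz
      exact pow_ne_zero _ (hVs'pos z hz).ne'
    · have h := (LR.pow 2).mul ((L2 2).div (L1.pow 3) (by norm_num))
      simp only [mul_zero, zero_div] at h
      refine h.congr' ?_
      filter_upwards [eventually_gt_atTop 0] with z hz
      have hne := (hVs'pos z hz.le).ne'
      simp only [Pi.div_apply]
      field_simp
  obtain ⟨C1, hC1, B1⟩ : ∃ C, 0 ≤ C ∧ ∀ z, 0 ≤ z → |(1 + z ^ 2) *
      (deriv (deriv Vs) z / (deriv Vs z) ^ 2)| ≤ C := by
    apply bdd_of_lim _ 0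
    · apply ContinuousOn.mul (by fun_prop)
      apply ContinuousOn.div (by fun_prop) (by fun_prop)
      intro z hz
      exact pow_ne_zero _ (hVs'pos z hz).ne'
    · have h := ((L2 0).add (L2 2)).div (L1.pow 2) (by norm_num)
      simp only [add_zero, zero_div] at h
      refine h.congr fun z => ?_
      simp only [Pi.div_apply]
      ring
  -- integrability and the integral of g
  have hJ : IntegrableOn (fun z => deriv (deriv Vs) z / (deriv Vs z) ^ 2) (Set.Ioi 0) := by
    refine Integrable.mono' ((integrable_inv_one_add_sq.const_mul C1).integrableOn) ?_ ?_
    · apply ContinuousOn.aestronglyMeasurable _ measurableSet_Ioi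
      apply ContinuousOn.div (by fun_prop) (by fun_prop)
      intro z hz
      exact pow_ne_zero _ (hVs'pos z (le_of_lt hz)).ne'
    · rw [ae_restrict_iff' measurableSet_Ioi]
      refine Eventually.of_forall fun z hz => ?_
      have := B1 z (le_of_lt hz)
      have hp : (0:ℝ) < 1 + z ^ 2 := by positivity
      rw [abs_mul, abs_of_pos hp] at this
      rw [Real.norm_eq_abs, ← div_eq_mul_inv, le_div_iff₀ hp]
      linarith
  have hcong : ∀ z ∈ Set.Ioi (0:ℝ), |deriv Vs z| • g (Vs z) =
      deriv (deriv Vs) z / (deriv Vs z) ^ 2 := by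
    intro z hz
    have hp := hVs'pos z (le_of_lt hz)
    rw [hg z (le_of_lt hz), abs_of_pos hp, smul_eq_mul]
    field_simp
  have hinj : Set.InjOn Vs (Set.Ioi 0) := smono.injOn.mono Set.Ioi_subset_Ici_self
  have hint : IntegrableOn g (Set.Ioi 0) := by
    rw [← himg, integrableOn_image_iff_integrableOn_abs_deriv_smul measurableSet_Ioi
      (fun z _ => (D0 z).hasDerivWithinAt) hinj]
    exact hJ.congr_fun (fun z hz => (hcong z hz).symm) measurableSet_Ioi
  have hval : ∫ u in Set.Ioi 0, g u = 1 / deriv Vs 0 - 1 := by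
    have h1 := integral_image_eq_integral_abs_deriv_smul measurableSet_Ioi
      (fun z _ => (D0 z).hasDerivWithinAt) hinj g
    rw [himg, setIntegral_congr_fun measurableSet_Ioi hcong] at h1
    rw [h1]
    have hd : ∀ z ∈ Set.Ici (0:ℝ), HasDerivAt (fun z => - (deriv Vs z)⁻¹)
        (deriv (deriv Vs) z / (deriv Vs z) ^ 2) z := by
      intro z hz
      refine ((D1 z).inv (hVs'pos z hz).ne').neg.congr_deriv ?_
      ring
    rw [integral_Ioi_of_hasDerivAt_of_tendsto' hd hJ ((L1.inv₀ one_ne_zero).neg)]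
    simp only [inv_one, one_div]
    ring
  -- Lipschitz
  have lipV : ∀ x y, 0 < x → x < y → |g (Vs y) - g (Vs x)| ≤
      C3 / (1 + Vs x) ^ 3 * |Vs y - Vs x| := by
    intro x y hx hxy
    have hF : ∀ z ∈ Set.Icc x y, HasDerivAt (fun z => deriv (deriv Vs) z / (deriv Vs z) ^ 3)
      ((deriv (deriv (deriv Vs)) z * deriv Vs z - 3 * (deriv (deriv Vs) z) ^ 2) /
        (deriv Vs z) ^ 4) z := fun z hz => DF z (hx.le.trans hz.1)
    obtain ⟨c, hc, h⟩ := exists_ratio_hasDerivAt_eq_ratio_slope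
      (fun z => deriv (deriv Vs) z / (deriv Vs z) ^ 3)
      (fun z => (deriv (deriv (deriv Vs)) z * deriv Vs z - 3 * (deriv (deriv Vs) z) ^ 2) /
        (deriv Vs z) ^ 4) hxy (fun z hz => (hF z hz).continuousAt.continuousWithinAt)
      (fun z hz => hF z ⟨hz.1.le, hz.2.le⟩) Vs (deriv Vs) c0.continuousOn (fun z _ => D0 z)
    have hc0 : 0 < c := hx.trans hc.1
    have hp := hVs'pos c hc0.le
    rw [← hg y (by linarith), ← hg x hx.le] at h
    have e : g (Vs y) - g (Vs x) = ((deriv (deriv (deriv Vs)) c * deriv Vs c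
        - 3 * (deriv (deriv Vs) c) ^ 2) / (deriv Vs c) ^ 5) * (Vs y - Vs x) := by
      apply mul_right_cancel₀ hp.ne'
      rw [← h]
      field_simp
    have hVc : Vs x ≤ Vs c := (smono (Set.mem_Ici.mpr hx.le) (Set.mem_Ici.mpr hc0.le) hc.1).le
    have hVx := hVpos x hx
    have hVc' := hVpos c hc0
    have hb := B3 c hc0.le
    rw [e, abs_mul]
    gcongr
    rw [abs_mul, abs_of_pos (by positivity)] at hb
    rw [le_div_iff₀ (by positivity)]
    refine le_trans ?_ hb
    rw [mul_comm]
    gcongr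
  have lip : ∀ a, 0 < a → ∀ u, |u - a| ≤ a / 2 →
      |g u - g a| ≤ (8 * C3) / (1 + a) ^ 3 * |u - a| := by
    intro a ha u hu
    have hu' : a / 2 ≤ u := by have := (abs_le.mp hu).1; linarith
    obtain ⟨x, hx, rfl⟩ := surj a ha
    obtain ⟨y, hy, rfl⟩ := surj u (by linarith)
    have aux : ∀ t, Vs x / 2 ≤ t → C3 / (1 + t) ^ 3 ≤ (8 * C3) / (1 + Vs x) ^ 3 := by
      intro t ht
      have : (8 * C3) / (1 + Vs x) ^ 3 = C3 / ((1 + Vs x) / 2) ^ 3 := by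
        field_simp; ring
      rw [this]
      gcongr
      linarith
    rcases lt_trichotomy x y with h | h | h
    · exact (lipV x y hx h).trans (mul_le_mul_of_nonneg_right (aux _ (by linarith)) (abs_nonneg _))
    · subst h; simp
    · rw [abs_sub_comm (g _), abs_sub_comm (Vs y)]
      exact (lipV y x hy h).trans (mul_le_mul_of_nonneg_right (aux _ hu') (abs_nonneg _))
  have gb : ∀ a, 0 < a → |g a| ≤ C2 / (1 + a) ^ 2 := by
    intro a ha
    obtain ⟨x, hx, rfl⟩ := surj a ha
    have := B2 x hx.le
    rw [← hg x hx.le, abs_mul, abs_of_pos (by positivity)] at this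
    rw [le_div_iff₀ (by positivity)]
    linarith
  have hag : Tendsto (fun a => a * g a) atTop (nhds 0) := by
    have h : Tendsto (fun a : ℝ => C2 / a) atTop (nhds 0) := tendsto_id.const_div_atTop C2
    refine squeeze_zero_norm' ?_ h
    filter_upwards [eventually_gt_atTop 0] with a ha
    rw [norm_mul, Real.norm_eq_abs, Real.norm_eq_abs, abs_of_pos ha]
    calc a * |g a| ≤ a * (C2 / (1 + a) ^ 2) := by gcongr; exact gb a ha
      _ ≤ a * (C2 / a ^ 2) := by gcongr; linarith
      _ = C2 / a := by field_simp
  have hK : ∀ a : ℝ, 0 < a → 0 ≤ (8 * C3) / (1 + a) ^ 3 := fun a ha => by positivity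
  refine ⟨PP g, fun a ha => hasPV_PP g hint a _ ha (hK a ha) (lip a ha), ?_, ?_, ?_⟩
  · have h1 := core_lim g hint atTop 1 (fun a => (8 * C3) / (1 + a) ^ 3) (eventually_gt_atTop 0)
      pt_top hK lip (Klim_top _ (by positivity))
    rw [one_mul, hval] at h1
    have h2 := h1.const_add (-1 / deriv Vs 0)
    have e : -1 / deriv Vs 0 + (1 / deriv Vs 0 - 1) = -1 := by ring
    rw [e] at h2
    have h3 := (Complex.continuous_ofReal.tendsto _).comp h2
    have h4 := (((Complex.continuous_ofReal.tendsto _).comp hag).const_mul (Real.pi : ℂ)).mul_const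
      Complex.I
    have h5 := h3.sub h4
    simp only [Complex.ofReal_zero, mul_zero, zero_mul, sub_zero, Complex.ofReal_neg,
      Complex.ofReal_one] at h5
    refine h5.congr fun a => ?_
    simp only [Function.comp_apply, Complex.ofReal_mul]
    ring
  · have h1 := core_lim g hint (nhdsWithin 0 (Set.Ioi 0)) 0 (fun a => (8 * C3) / (1 + a) ^ 3)
      self_mem_nhdsWithin pt_zero hK lip (Klim_zero _)
    rw [zero_mul] at h1
    simpa using h1.const_add (-1 / deriv Vs 0)
  · exact div_neg_of_neg_of_pos (by norm_num) (hVs'pos 0 le_rfl)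
end

section
/- Assume g is strictly monotone in a neighborhood of each of its positive zeroes. Then the sets S_± := {a > 0 : g(a) = 0, −1/V_s'(0) + a · PV∫₀^∞ g(u)/(a−u) du > 0, and ±g is strictly increasing on a neighborhood of a} are finite; that is, n₊ and n₋ are finite. -/
open MeasureTheory Filter

/-- The set whose cardinality is `n₊`: positive zeroes `a` of `g` with
`-1/V_s'(0) + a · PV∫₀^∞ g(u)/(a-u) du > 0` near which `g` is strictly increasing. -/
def Splus (Vs g : ℝ → ℝ) : Set ℝ :=
  {a : ℝ | 0 < a ∧ g a = 0 ∧
    (∃ L : ℝ, HasPV g a L ∧ 0 < -1 / deriv Vs 0 + a * L) ∧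
    ∃ ε > (0 : ℝ), StrictMonoOn g (Set.Ioo (a - ε) (a + ε))}

/-- The set whose cardinality is `n₋`: same but with `g` strictly decreasing near `a`. -/
def Sminus (Vs g : ℝ → ℝ) : Set ℝ :=
  {a : ℝ | 0 < a ∧ g a = 0 ∧
    (∃ L : ℝ, HasPV g a L ∧ 0 < -1 / deriv Vs 0 + a * L) ∧
    ∃ ε > (0 : ℝ), StrictAntiOn g (Set.Ioo (a - ε) (a + ε))}

lemma aux_PV (f : ℝ → ℝ) (a K : ℝ) (ha : 0 < a) (hfa : f a = 0)
    (hK : ∀ u, 0 < u → ∀ v, 0 < v → |f u - f v| ≤ K * |u - v|)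
    (hint : IntegrableOn f (Set.Ioi 0)) :
    IntegrableOn (fun u => f u / (a - u)) (Set.Ioi 0) ∧
    |∫ u in Set.Ioi 0, f u / (a - u)| ≤ 2 * K + ∫ u in Set.Ioi 0, |f u| := by
  have hK0 : 0 ≤ K := by
    have := hK (a + 1) (by linarith) a ha
    simp at this
    exact (abs_nonneg _).trans this
  have hI1 : IntegrableOn (Set.indicator (Set.Ioo (a-1) (a+1)) (fun _ => K)) (Set.Ioi (0:ℝ)) := by
    have : Integrable (Set.indicator (Set.Ioo (a-1) (a+1)) (fun _ => K)) := by
      rw [integrable_indicator_iff measurableSet_Ioo]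
      exact integrableOn_const (by simp) (by simp)
    exact this.integrableOn
  have hI2 : IntegrableOn (fun u => |f u|) (Set.Ioi (0:ℝ)) := hint.abs
  have hb : ∀ u ∈ Set.Ioi (0:ℝ), ‖f u / (a - u)‖ ≤
      Set.indicator (Set.Ioo (a-1) (a+1)) (fun _ => K) u + |f u| := by
    intro u hu
    have hu : 0 < u := hu
    rw [Real.norm_eq_abs, abs_div]
    by_cases h : u ∈ Set.Ioo (a-1) (a+1)
    · rw [Set.indicator_of_mem h]
      have h1 := hK u hu a ha
      rw [hfa, sub_zero, abs_sub_comm] at h1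
      have : |f u| / |a - u| ≤ K := div_le_of_le_mul₀ (abs_nonneg _) hK0 h1
      linarith [abs_nonneg (f u)]
    · rw [Set.indicator_of_notMem h, zero_add]
      apply div_le_self (abs_nonneg _)
      by_contra! h2
      rw [abs_lt] at h2
      exact h ⟨by linarith, by linarith⟩
  have hsum := hI1.add hI2
  have hb' : ∀ᵐ u ∂(volume.restrict (Set.Ioi (0:ℝ))), ‖f u / (a - u)‖ ≤
      (Set.indicator (Set.Ioo (a-1) (a+1)) (fun _ => K) + fun u => |f u|) u :=
    (ae_restrict_mem measurableSet_Ioi).mono hb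
  refine ⟨hsum.mono' ?_ hb', ?_⟩
  · exact (hint.aestronglyMeasurable.aemeasurable.div
      (by fun_prop : Measurable fun u : ℝ => a - u).aemeasurable).aestronglyMeasurable
  · have h1 := norm_integral_le_of_norm_le hsum hb'
    rw [Real.norm_eq_abs] at h1
    refine h1.trans ?_
    have h2 : ∫ u in Set.Ioi (0:ℝ), (Set.indicator (Set.Ioo (a-1) (a+1)) (fun _ => K) + fun u => |f u|) u
      = (∫ u in Set.Ioi (0:ℝ), Set.indicator (Set.Ioo (a-1) (a+1)) (fun _ => K) u) + ∫ u in Set.Ioi (0:ℝ), |f u| :=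
      integral_add hI1 hI2
    rw [h2]
    have h3 : (∫ u in Set.Ioi (0:ℝ), Set.indicator (Set.Ioo (a-1) (a+1)) (fun _ => K) u) ≤ 2 * K := by
      calc _ ≤ ∫ u, Set.indicator (Set.Ioo (a-1) (a+1)) (fun _ => K) u := by
            apply setIntegral_le_integral
            · rw [integrable_indicator_iff measurableSet_Ioo]
              exact integrableOn_const (by simp) (by simp)
            · exact Eventually.of_forall fun u => Set.indicator_nonneg (fun _ _ => hK0) u
        _ = 2 * K := by
            rw [integral_indicator measurableSet_Ioo]
            simp [Measure.real]
            left
            norm_num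
    linarith

lemma aux_HasPV (f : ℝ → ℝ) (a L : ℝ) 
    (hint : IntegrableOn (fun u => f u / (a - u)) (Set.Ioi 0)) (h : HasPV f a L) :
    L = ∫ u in Set.Ioi 0, f u / (a - u) := by
  refine tendsto_nhds_unique h ?_
  have hm : ∀ ε : ℝ, MeasurableSet {u : ℝ | ε < |u - a|} := fun ε =>
    measurableSet_lt (by fun_prop) (by fun_prop)
  have e : ∀ ε : ℝ, ∫ u in {u : ℝ | 0 < u ∧ ε < |u - a|}, f u / (a - u) =
      ∫ u in Set.Ioi 0, Set.indicator {u : ℝ | ε < |u - a|} (fun u => f u / (a - u)) u := by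
    intro ε
    rw [setIntegral_indicator (hm ε)]
    rfl
  simp_rw [e]
  apply tendsto_integral_filter_of_dominated_convergence (fun u => ‖f u / (a - u)‖)
  · exact Eventually.of_forall fun ε => (hint.aestronglyMeasurable.indicator (hm ε))
  · exact Eventually.of_forall fun ε => Eventually.of_forall fun u =>
      norm_indicator_le_norm_self _ _
  · exact hint.norm
  · refine Eventually.of_forall fun u => ?_
    by_cases hu : u = a
    · subst hu
      have : ∀ ε : ℝ, Set.indicator {v : ℝ | ε < |v - u|} (fun v => f v / (u - v)) u = f u / (u - u) := by
        intro ε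
        rw [Set.indicator_apply]; simp
      simp_rw [this]
      exact tendsto_const_nhds
    · have hp : 0 < |u - a| := abs_pos.mpr (sub_ne_zero.mpr hu)
      apply tendsto_const_nhds.congr'
      have : ∀ᶠ ε : ℝ in nhdsWithin 0 (Set.Ioi 0), ε < |u - a| :=
        nhdsWithin_le_nhds (eventually_lt_nhds hp)
      filter_upwards [this] with ε hε
      rw [Set.indicator_of_mem]
      exact hε

lemma aux_key (g : ℝ → ℝ) (K0 K2 : ℝ)
    (h0 : ∀ u, 0 < u → ∀ v, 0 < v → |g u - g v| ≤ K0 * |u - v|)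
    (h2 : ∀ u, 0 < u → ∀ v, 0 < v → |u^2 * g u - v^2 * g v| ≤ K2 * |u - v|)
    (i0 : IntegrableOn g (Set.Ioi 0)) 
    (i1 : IntegrableOn (fun u => u * g u) (Set.Ioi 0)) 
    (i2 : IntegrableOn (fun u => u^2 * g u) (Set.Ioi 0)) :
    ∃ C : ℝ, ∀ a L, 0 < a → g a = 0 → HasPV g a L → 
      |L| ≤ C ∧ |a * (a * L - ∫ u in Set.Ioi 0, g u)| ≤ C := by
  refine ⟨max (2 * K0 + ∫ u in Set.Ioi 0, |g u|) (|∫ u in Set.Ioi 0, u * g u| + (2 * K2 + ∫ u in Set.Ioi 0, |u^2 * g u|)), fun a L ha hga hL => ?_⟩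
  obtain ⟨j0, b0⟩ := aux_PV g a K0 ha hga h0 i0
  obtain ⟨j2, b2⟩ := aux_PV (fun u => u^2 * g u) a K2 ha (by simp [hga]) h2 i2
  have hLe := aux_HasPV g a L j0 hL
  refine ⟨?_, ?_⟩
  · rw [hLe]; exact b0.trans (le_max_left _ _)
  · have e : a * (a * L - ∫ u in Set.Ioi 0, g u) = (∫ u in Set.Ioi 0, u * g u) +
        ∫ u in Set.Ioi 0, u^2 * g u / (a - u) := by
      rw [hLe, ← integral_add i1 j2, ← integral_const_mul, ← integral_sub (j0.const_mul a) i0,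
        ← integral_const_mul]
      apply integral_congr_ae
      refine Eventually.of_forall fun u => ?_
      by_cases hu : u = a
      · subst hu; simp [hga]
      · have : a - u ≠ 0 := sub_ne_zero.mpr (Ne.symm hu)
        simp only
        field_simp
        ring
    rw [e]
    refine (abs_add_le _ _).trans (le_trans ?_ (le_max_right _ _))
    gcongr

lemma aux_bdd (f : ℝ → ℝ) (l : ℝ) (hc : ContinuousOn f (Set.Ici 0)) (ht : Tendsto f atTop (nhds l)) :
    ∃ C, 0 < C ∧ ∀ z, 0 ≤ z → |f z| ≤ C := by
  have h1 : ∀ᶠ z in atTop, |f z| < |l| + 1 :=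
    ht.abs.eventually (eventually_lt_nhds (by linarith))
  obtain ⟨N, hN⟩ := eventually_atTop.mp h1
  obtain ⟨C, hC⟩ := isCompact_Icc.exists_bound_of_continuousOn
    (hc.mono (Set.Icc_subset_Ici_self : Set.Icc 0 N ⊆ _))
  refine ⟨max C (|l| + 1), lt_max_of_lt_right (by positivity), fun z hz => ?_⟩
  by_cases h : z ≤ N
  · exact (hC z ⟨hz, h⟩).trans (le_max_left _ _)
  · exact (hN z (by linarith)).le.trans (le_max_right _ _)

lemma aux_fin (g : ℝ → ℝ) (δ C : ℝ) (hδ : 0 < δ) (hc : ContinuousOn g (Set.Ioi 0))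
    (hmono : ∀ a : ℝ, 0 < a → g a = 0 → ∃ ε > (0 : ℝ),
      StrictMonoOn g (Set.Ioo (a - ε) (a + ε)) ∨ StrictAntiOn g (Set.Ioo (a - ε) (a + ε))) :
    {a | a ∈ Set.Icc δ C ∧ g a = 0}.Finite := by
  have hcl : IsCompact {a | a ∈ Set.Icc δ C ∧ g a = 0} := by
    have : IsClosed (Set.Icc δ C ∩ g ⁻¹' {0}) :=
      (hc.mono (fun x hx => lt_of_lt_of_le hδ hx.1)).preimage_isClosed_of_isClosed isClosed_Icc isClosed_singleton
    exact isCompact_Icc.of_isClosed_subset this (fun x hx => hx.1)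
  apply hcl.finite
  rw [isDiscrete_iff_forall_mem_exists_isOpen]
  rintro a ⟨ha, hga⟩
  obtain ⟨ε, hε, h⟩ := hmono a (lt_of_lt_of_le hδ ha.1) hga
  refine ⟨Set.Ioo (a - ε) (a + ε), isOpen_Ioo, ?_⟩
  have hinj : Set.InjOn g (Set.Ioo (a - ε) (a + ε)) := h.elim (·.injOn) (·.injOn)
  have haa : a ∈ Set.Ioo (a - ε) (a + ε) := ⟨by linarith, by linarith⟩
  ext x
  simp only [Set.mem_inter_iff, Set.mem_singleton_iff]
  constructor
  · rintro ⟨h1, h2, h3⟩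
    exact hinj h1 haa (h3.trans hga.symm)
  · rintro rfl
    exact ⟨haa, ha, hga⟩

lemma aux_Lip (V : ℝ → ℝ) (hd : Differentiable ℝ V) (M : ℝ) (hM : 0 < M)
    (hV : ∀ z, 0 ≤ z → M⁻¹ ≤ deriv V z)
    (hsurj : ∀ u, 0 < u → ∃ z, 0 ≤ z ∧ V z = u)
    (ψ ψ' k : ℝ → ℝ) (hψ : ∀ z, 0 ≤ z → HasDerivAt ψ (ψ' z) z)
    (hk : ∀ z, 0 ≤ z → k (V z) = ψ z)
    (C : ℝ) (hC : 0 < C) (hb : ∀ z, 0 ≤ z → |ψ' z| ≤ C) :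
    ∀ u, 0 < u → ∀ v, 0 < v → |k u - k v| ≤ (C * M) * |u - v| := by
  intro u hu v hv
  obtain ⟨x, hx, rfl⟩ := hsurj u hu
  obtain ⟨y, hy, rfl⟩ := hsurj v hv
  rw [hk x hx, hk y hy]
  have h1 := (convex_Ici (0:ℝ)).norm_image_sub_le_of_norm_hasDerivWithin_le (f := ψ) (f' := ψ')
    (fun z hz => (hψ z hz).hasDerivWithinAt) hb (Set.mem_Ici.mpr hy) (Set.mem_Ici.mpr hx)
  rw [Real.norm_eq_abs, Real.norm_eq_abs] at h1
  have h2 : ∀ x, 0 ≤ x → ∀ y, 0 ≤ y → x ≤ y → |x - y| ≤ M * |V x - V y| := by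
    intro x hx y hy hxy
    have := (convex_Ici (0:ℝ)).mul_sub_le_image_sub_of_le_deriv hd.continuous.continuousOn
      hd.differentiableOn (C := M⁻¹) (fun z hz => hV z (interior_subset hz)) x hx y hy hxy
    rw [abs_sub_comm, abs_of_nonneg (by linarith), abs_sub_comm]
    rw [inv_mul_le_iff₀ hM] at this
    exact this.trans (by gcongr; exact le_abs_self _)
  have h3 : |x - y| ≤ M * |V x - V y| := by
    rcases le_total x y with h | h
    · exact h2 x hx y hy h
    · rw [abs_sub_comm, abs_sub_comm (V x)]; exact h2 y hy x hx h
  calc _ ≤ C * |x - y| := h1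
    _ ≤ C * (M * |V x - V y|) := by gcongr
    _ = _ := by ring

lemma aux_main
    (Vs : ℝ → ℝ) (As : ℝ)
    (hVs_smooth : ContDiff ℝ (⊤ : ℕ∞) Vs)
    (hVs0 : Vs 0 = 0)
    (hVs'pos : ∀ z : ℝ, 0 ≤ z → 0 < deriv Vs z)
    (hdecay : ∀ p : ℕ, Tendsto (fun z : ℝ => z ^ p * (Vs z - z - As)) atTop (nhds 0))
    (hderiv_decay : ∀ n : ℕ, 1 ≤ n → ∀ p : ℕ,
      Tendsto (fun z : ℝ => z ^ p * iteratedDeriv n (fun w => Vs w - w) z) atTop (nhds 0))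
    (g : ℝ → ℝ)
    (hg : ∀ z : ℝ, 0 ≤ z → g (Vs z) = deriv (deriv Vs) z / (deriv Vs z) ^ 3) :
    ContinuousOn g (Set.Ioi 0) ∧
    ∃ C : ℝ, ∀ a L, 0 < a → g a = 0 → HasPV g a L → 
      |L| ≤ C ∧ |a * (a * L - (-1 + 1 / deriv Vs 0))| ≤ C := by
  -- smoothness
  have s1 : ContDiff ℝ (⊤ : ℕ∞) (deriv Vs) := (contDiff_infty_iff_deriv.mp hVs_smooth).2
  have s2 : ContDiff ℝ (⊤ : ℕ∞) (deriv (deriv Vs)) := (contDiff_infty_iff_deriv.mp s1).2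
  have s3 : ContDiff ℝ (⊤ : ℕ∞) (deriv (deriv (deriv Vs))) := (contDiff_infty_iff_deriv.mp s2).2
  have d0 : Differentiable ℝ Vs := (contDiff_infty_iff_deriv.mp hVs_smooth).1
  have d1 : Differentiable ℝ (deriv Vs) := (contDiff_infty_iff_deriv.mp s1).1
  have d2 : Differentiable ℝ (deriv (deriv Vs)) := (contDiff_infty_iff_deriv.mp s2).1
  have e1 : deriv (fun w => Vs w - w) = fun w => deriv Vs w - 1 := by
    funext w
    exact ((d0 w).hasDerivAt.sub (hasDerivAt_id w)).deriv
  have e2 : deriv (fun w => deriv Vs w - 1) = deriv (deriv Vs) := by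
    funext w; simp
  have t1 : Tendsto (deriv Vs) atTop (nhds 1) := by
    have h := hderiv_decay 1 le_rfl 0
    rw [iteratedDeriv_one, e1] at h
    simpa using h.add_const 1
  have t2 : ∀ p : ℕ, Tendsto (fun z => z ^ p * deriv (deriv Vs) z) atTop (nhds 0) := by
    intro p
    have h := hderiv_decay 2 (by norm_num) p
    rwa [iteratedDeriv_succ, iteratedDeriv_one, e1, e2] at h
  have t3 : ∀ p : ℕ, Tendsto (fun z => z ^ p * deriv (deriv (deriv Vs)) z) atTop (nhds 0) := by
    intro p
    have h := hderiv_decay 3 (by norm_num) p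
    rwa [iteratedDeriv_succ, iteratedDeriv_succ, iteratedDeriv_one, e1, e2] at h
  have tq : Tendsto (fun z => Vs z / z) atTop (nhds 1) := by
    have h := hdecay 0
    simp only [pow_zero, one_mul] at h
    have h' := ((h.add_const As).mul tendsto_inv_atTop_zero).const_add 1
    simp only [mul_zero, add_zero] at h'
    refine h'.congr' ?_
    filter_upwards [eventually_gt_atTop 0] with z hz
    field_simp
    ring
  have tV : Tendsto Vs atTop atTop := by
    have h := tq.pos_mul_atTop one_pos tendsto_id
    refine h.congr' ?_
    filter_upwards [eventually_gt_atTop 0] with z hz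
    simp only [id]
    field_simp
  have tVp : ∀ (D : ℝ → ℝ), (∀ p : ℕ, Tendsto (fun z => z ^ p * D z) atTop (nhds 0)) →
      ∀ p : ℕ, Tendsto (fun z => Vs z ^ p * D z) atTop (nhds 0) := by
    intro D hD p
    have h := (tq.pow p).mul (hD p)
    simp only [mul_zero] at h
    refine h.congr' ?_
    filter_upwards [eventually_gt_atTop 0] with z hz
    rw [div_pow]
    field_simp
  have T2 := tVp _ t2
  have T3 := tVp _ t3
  have ne1 : ∀ z, 0 ≤ z → deriv Vs z ≠ 0 := fun z hz => (hVs'pos z hz).ne'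
  -- lower bound on derivative
  obtain ⟨M, hM, hMb⟩ := aux_bdd (fun z => (deriv Vs z)⁻¹) 1⁻¹
    (s1.continuous.continuousOn.inv₀ (fun z hz => ne1 z hz)) (t1.inv₀ one_ne_zero)
  have hlow : ∀ z, 0 ≤ z → M⁻¹ ≤ deriv Vs z := by
    intro z hz
    have h := (le_abs_self _).trans (hMb z hz)
    exact inv_le_of_inv_le₀ (hVs'pos z hz) h
  have hsurj : ∀ u, 0 ≤ u → ∃ z, 0 ≤ z ∧ Vs z = u := by
    intro u hu
    obtain ⟨N, hN⟩ := eventually_atTop.mp (tV.eventually_ge_atTop u)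
    have h := intermediate_value_Icc (le_max_right N 0) d0.continuous.continuousOn
      (show u ∈ _ from ⟨by rw [hVs0]; exact hu, hN _ (le_max_left _ _)⟩)
    obtain ⟨z, hz, h⟩ := h
    exact ⟨z, hz.1, h⟩
  -- Lipschitz
  have hLip : ∀ p : ℕ, ∃ K, ∀ u, 0 < u → ∀ v, 0 < v →
      |u ^ p * g u - v ^ p * g v| ≤ K * |u - v| := by
    intro p
    set ψ' : ℝ → ℝ := fun z => p * (Vs z ^ (p - 1) * deriv (deriv Vs) z) / (deriv Vs z) ^ 2
      + Vs z ^ p * deriv (deriv (deriv Vs)) z / (deriv Vs z) ^ 3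
      - 3 * (Vs z ^ p * deriv (deriv Vs) z) * deriv (deriv Vs) z / (deriv Vs z) ^ 4 with hψ'
    have c0 : Continuous Vs := d0.continuous
    have c1 : Continuous (deriv Vs) := d1.continuous
    have c2 : Continuous (deriv (deriv Vs)) := d2.continuous
    have c3 : Continuous (deriv (deriv (deriv Vs))) := s3.continuous
    have hcont : ContinuousOn ψ' (Set.Ici 0) := by
      refine ((ContinuousOn.div (by fun_prop) (by fun_prop) ?_).add
        (ContinuousOn.div (by fun_prop) (by fun_prop) ?_)).sub
        (ContinuousOn.div (by fun_prop) (by fun_prop) ?_)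
      all_goals exact fun z hz => pow_ne_zero _ (ne1 z hz)
    have hlim : Tendsto ψ' atTop (nhds 0) := by
      have h20 : Tendsto (deriv (deriv Vs)) atTop (nhds 0) := by simpa using t2 0
      have := ((((T2 (p-1)).const_mul (p:ℝ)).div (t1.pow 2) (by norm_num)).add
        ((T3 p).div (t1.pow 3) (by norm_num))).sub
        ((((T2 p).const_mul 3).mul h20).div (t1.pow 4) (by norm_num))
      simpa using this
    obtain ⟨C, hC, hCb⟩ := aux_bdd ψ' 0 hcont hlim
    refine ⟨C * M, aux_Lip Vs d0 M hM hlow (fun u hu => hsurj u hu.le)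
      (fun z => Vs z ^ p * (deriv (deriv Vs) z / (deriv Vs z) ^ 3)) ψ'
      (fun u => u ^ p * g u) ?_ ?_ C hC hCb⟩
    · intro z hz
      have h := ((d0 z).hasDerivAt.pow p).mul
        ((d2 z).hasDerivAt.div ((d1 z).hasDerivAt.pow 3) (pow_ne_zero 3 (ne1 z hz)))
      refine h.congr_deriv ?_
      have := ne1 z hz
      simp only [hψ', Pi.pow_apply, Pi.div_apply]
      push_cast
      field_simp
      ring
    · intro z hz
      simp only [hg z hz]
  obtain ⟨K0, hK0⟩ := hLip 0
  obtain ⟨K2, hK2⟩ := hLip 2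
  simp only [pow_zero, one_mul] at hK0
  have hgc : ContinuousOn g (Set.Ioi 0) := by
    have : LipschitzOnWith (Real.toNNReal K0) g (Set.Ioi 0) := by
      apply LipschitzOnWith.of_dist_le_mul
      intro x hx y hy
      rw [Real.dist_eq, Real.dist_eq]
      refine (hK0 x hx y hy).trans ?_
      gcongr
      exact Real.le_coe_toNNReal K0
    exact this.continuousOn
  refine ⟨hgc, ?_⟩
  -- decay bound
  obtain ⟨B, hB, hBb⟩ : ∃ B, 0 < B ∧ ∀ z, 0 ≤ z →
      |(1 + Vs z ^ 2) ^ 2 * (deriv (deriv Vs) z / (deriv Vs z) ^ 3)| ≤ B := by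
    apply aux_bdd _ 0
    · have c0 : Continuous Vs := d0.continuous
      have c1 : Continuous (deriv Vs) := d1.continuous
      have c2 : Continuous (deriv (deriv Vs)) := d2.continuous
      exact ContinuousOn.mul (by fun_prop) (ContinuousOn.div (by fun_prop) (by fun_prop)
        (fun z hz => pow_ne_zero _ (ne1 z hz)))
    · have := (((T2 0).add ((T2 2).const_mul 2)).add (T2 4)).div (t1.pow 3) (by norm_num)
      simp only [mul_zero, add_zero, zero_div] at this
      refine this.congr fun z => ?_
      simp only [Pi.div_apply, Pi.pow_apply]
      ring
  have hgB : ∀ u, 0 < u → (1 + u^2)^2 * |g u| ≤ B := by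
    intro u hu
    obtain ⟨z, hz, rfl⟩ := hsurj u hu.le
    have h := hBb z hz
    rwa [← hg z hz, abs_mul, abs_of_pos (by positivity)] at h
  have hint : ∀ p : ℕ, p ≤ 2 → IntegrableOn (fun u => u ^ p * g u) (Set.Ioi 0) := by
    intro p hp
    have hI : IntegrableOn (fun u : ℝ => B * (1 + u^2)⁻¹) (Set.Ioi 0) :=
      (integrable_inv_one_add_sq.const_mul B).integrableOn
    refine hI.mono' ?_ ?_
    · exact (ContinuousOn.mul (by fun_prop) hgc).aestronglyMeasurable measurableSet_Ioi
    · refine (ae_restrict_mem measurableSet_Ioi).mono fun u hu => ?_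
      have hu : 0 < u := hu
      rw [Real.norm_eq_abs, abs_mul, abs_of_pos (by positivity), ← div_eq_mul_inv,
        le_div_iff₀ (by positivity)]
      refine le_trans ?_ (hgB u hu)
      have : u ^ p ≤ 1 + u ^ 2 := by
        interval_cases p
        · nlinarith
        · nlinarith [sq_nonneg (u - 1)]
        · linarith
      calc u ^ p * |g u| * (1 + u^2) ≤ (1 + u^2) * |g u| * (1 + u^2) := by gcongr
        _ = _ := by ring
  have i0 : IntegrableOn g (Set.Ioi 0) := by simpa using hint 0 (by norm_num)
  have i1 : IntegrableOn (fun u => u * g u) (Set.Ioi 0) := by simpa using hint 1 (by norm_num)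
  have i2 := hint 2 le_rfl
  obtain ⟨C, hC⟩ := aux_key g K0 K2 hK0 hK2 i0 i1 i2
  -- the integral of g
  have hval : ∫ u in Set.Ioi 0, g u = -1 + 1 / deriv Vs 0 := by
    have hpos : ∀ z, 0 < z → 0 < Vs z := by
      intro z hz
      have := (convex_Ici (0:ℝ)).mul_sub_le_image_sub_of_le_deriv d0.continuous.continuousOn
        d0.differentiableOn (C := M⁻¹) (fun z hz => hlow z (interior_subset hz)) 0 
        (Set.mem_Ici.mpr le_rfl) z hz.le hz.le
      rw [hVs0, sub_zero, sub_zero] at this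
      exact lt_of_lt_of_le (by positivity) this
    have him : Vs '' Set.Ici 0 ⊆ Set.Ici 0 := by
      rintro _ ⟨z, hz, rfl⟩
      rcases (show 0 ≤ z from hz).eq_or_lt with h | h
      · rw [← h, hVs0]; simp
      · exact (hpos z h).le
    have him' : Vs '' Set.Ioi 0 ⊆ Set.Ioi 0 := by
      rintro _ ⟨z, hz, rfl⟩
      exact hpos z hz
    have hI : IntegrableOn (fun x => (g ∘ Vs) x * deriv Vs x) (Set.Ici 0) := by
      obtain ⟨B1, hB1, hb1⟩ := aux_bdd 
        (fun z => (1 + z^2) * deriv (deriv Vs) z / (deriv Vs z)^2) 0 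
        (by
          have c1 : Continuous (deriv Vs) := d1.continuous
          have c2 : Continuous (deriv (deriv Vs)) := d2.continuous
          exact ContinuousOn.div (by fun_prop) (by fun_prop)
            (fun z hz => pow_ne_zero _ (ne1 z hz)))
        (by
          have := ((t2 0).add (t2 2)).div (t1.pow 2) (by norm_num)
          simp only [add_zero, zero_div] at this
          refine this.congr fun z => ?_
          simp only [Pi.div_apply, Pi.pow_apply]
          ring)
      have hI : IntegrableOn (fun u : ℝ => B1 * (1 + u^2)⁻¹) (Set.Ici 0) :=
        (integrable_inv_one_add_sq.const_mul B1).integrableOn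
      have heq : ∀ z ∈ Set.Ici (0:ℝ), deriv (deriv Vs) z / (deriv Vs z)^2 = (g ∘ Vs) z * deriv Vs z := by
        intro z hz
        have := ne1 z hz
        simp only [Function.comp, hg z hz]
        field_simp
      refine IntegrableOn.congr_fun ?_ heq measurableSet_Ici
      refine hI.mono' ?_ ?_
      · exact (ContinuousOn.div d2.continuous.continuousOn (d1.continuous.pow 2).continuousOn
            (fun z hz => pow_ne_zero _ (ne1 z hz))).aestronglyMeasurable measurableSet_Ici
      · refine (ae_restrict_mem measurableSet_Ici).mono fun z hz => ?_
        have := hb1 z hz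
        rw [mul_div_assoc, abs_mul, abs_of_pos (by positivity)] at this
        rw [Real.norm_eq_abs, ← div_eq_mul_inv, le_div_iff₀ (by positivity)]
        linarith
    have h1 := integral_comp_mul_deriv_Ioi (f := Vs) (f' := deriv Vs) (g := g) (a := 0)
      d0.continuous.continuousOn tV (fun x _ => (d0 x).hasDerivAt.hasDerivWithinAt)
      (hgc.mono him') ((i0.congr_set_ae Ioi_ae_eq_Ici.symm).mono_set him) hI
    rw [hVs0] at h1
    rw [← h1]
    have h2 := integral_Ioi_of_hasDerivAt_of_tendsto' (f := fun z => - (deriv Vs z)⁻¹)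
      (f' := fun x => (g ∘ Vs) x * deriv Vs x) (a := 0) (m := -1⁻¹) ?_
      (hI.mono_set Set.Ioi_subset_Ici_self) (t1.inv₀ one_ne_zero).neg
    · rw [h2]; simp
    · intro z hz
      refine ((d1 z).hasDerivAt.inv (ne1 z hz)).neg.congr_deriv ?_
      have := ne1 z hz
      simp only [Function.comp, hg z hz]
      field_simp
  rw [hval] at hC
  exact ⟨C, hC⟩

/-- if `g` is strictly monotone near each of its positive zeroes, then the
sets defining `n₊` and `n₋` are finite. -/
theorem Splus_Sminus_finite
    (Vs : ℝ → ℝ) (As : ℝ)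
    (hVs_smooth : ContDiff ℝ (⊤ : ℕ∞) Vs)
    (hVs0 : Vs 0 = 0)
    (hVs'pos : ∀ z : ℝ, 0 ≤ z → 0 < deriv Vs z)
    (hdecay : ∀ p : ℕ, Tendsto (fun z : ℝ => z ^ p * (Vs z - z - As)) atTop (nhds 0))
    (hderiv_decay : ∀ n : ℕ, 1 ≤ n → ∀ p : ℕ,
      Tendsto (fun z : ℝ => z ^ p * iteratedDeriv n (fun w => Vs w - w) z) atTop (nhds 0))
    (g : ℝ → ℝ)
    (hg : ∀ z : ℝ, 0 ≤ z → g (Vs z) = deriv (deriv Vs) z / (deriv Vs z) ^ 3)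
    (hmono : ∀ a : ℝ, 0 < a → g a = 0 → ∃ ε > (0 : ℝ),
      StrictMonoOn g (Set.Ioo (a - ε) (a + ε)) ∨ StrictAntiOn g (Set.Ioo (a - ε) (a + ε)))
    :
    (Splus Vs g).Finite ∧ (Sminus Vs g).Finite := by
  obtain ⟨hgc, C, hC⟩ := aux_main Vs As hVs_smooth hVs0 hVs'pos hdecay hderiv_decay g hg
  have hd : 0 < deriv Vs 0 := hVs'pos 0 le_rfl
  have key : ∀ a L, 0 < a → g a = 0 → HasPV g a L → 0 < -1 / deriv Vs 0 + a * L →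
      a ∈ Set.Icc (1 / (deriv Vs 0 * (|C| + 1))) C := by
    intro a L ha hga hL hpos
    obtain ⟨h1, h2⟩ := hC a L ha hga hL
    have h3 := (le_abs_self _).trans h1
    have h4 := (le_abs_self _).trans h2
    rw [neg_div] at hpos
    constructor
    · have h5 : a * L ≤ a * (|C| + 1) := by
        gcongr
        linarith [le_abs_self C]
      have h6 : 1 / deriv Vs 0 ≤ a * (|C| + 1) := by linarith
      rw [← div_div, div_le_iff₀ (by positivity)]
      exact h6
    · have : a * 1 ≤ a * (a * L - (-1 + 1 / deriv Vs 0)) := by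
        gcongr
        linarith
      linarith
  have hfin := aux_fin g (1 / (deriv Vs 0 * (|C| + 1))) C (by positivity) hgc hmono
  constructor
  · refine hfin.subset ?_
    rintro a ⟨ha, hga, ⟨L, hL, hp⟩, -⟩
    exact ⟨key a L ha hga hL hp, hga⟩
  · refine hfin.subset ?_
    rintro a ⟨ha, hga, ⟨L, hL, hp⟩, -⟩
    exact ⟨key a L ha hga hL hp, hga⟩
end
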